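/- In G(𝒜): suppose x = g f₁^m g⁻¹ and y = h f₂^n h⁻¹ for some g, h ∈ G(𝒜) and integers m, n with p₁ ∤ m and p₂ ∤ n, and suppose v(x,y) = e and v(y,x) = e. Then there exists z ∈ G(𝒜) such that x = z f₁ z⁻¹ and y = z f₂ z⁻¹. -/

import Mathlib

/-!
Common setup: an `L`-structure `𝒜` for a language whose symbols are enumerated
(`m`-th symbol, `m ≥ 1`, each a function or relation symbol of arity ≥ 1), and the
presented group `G(𝒜)` of Harrison-Trainor and Ho.
-/

/-- A first-order language with symbols enumerated by `ℕ` (the `m`-th symbol, for `m ≥ 1`,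
is a function symbol if `isFunc m`, and a relation symbol otherwise, of arity `arity m ≥ 1`),
together with an interpretation on a domain `A`: `funcInterp m` interprets the `m`-th symbol
when it is a function symbol, and `relInterp m` when it is a relation symbol. -/
structure IndexedStructure where
  A : Type
  arity : ℕ → ℕ
  arity_pos : ∀ m, 1 ≤ m → 1 ≤ arity m
  isFunc : ℕ → Prop
  funcInterp : ∀ m, (Fin (arity m) → A) → A
  relInterp : ∀ m, (Fin (arity m) → A) → Prop

/-- The generating set of `G(𝒜)`: one generator for each element of the domain `A`,
plus five further generators `b`, `c`, `d`, `f₁`, `f₂`. -/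
inductive GenSym (A : Type) : Type
  | elt : A → GenSym A
  | b : GenSym A
  | c : GenSym A
  | d : GenSym A
  | f1 : GenSym A
  | f2 : GenSym A

/-- `chainProd lo x y = x y^{(lo+1)²} x y^{(lo+2)²} ⋯ x y^{(lo+1000)²}`.
So `u_A = chainProd 0`, `u_b = chainProd 1000`, `u_c = chainProd 2000`,
`u_d = chainProd 3000`, and `v = chainProd 4000`. -/
def chainProd {G : Type*} [Group G] (lo : ℕ) (x y : G) : G :=
  ((List.range 1000).map fun k => x * y ^ ((lo + k + 1) ^ 2)).prod

/-- `wProd m xs y = x₁⋯xₙ y^{100m+1} x₁⋯xₙ y^{100m+2} ⋯ x₁⋯xₙ y^{100m+100}`,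
i.e. the word `w_m(x₁,…,xₙ,y)`. -/
def wProd {G : Type*} [Group G] (m : ℕ) {n : ℕ} (xs : Fin n → G) (y : G) : G :=
  ((List.range 100).map fun k => (List.ofFn xs).prod * y ^ (100 * m + k + 1)).prod

/-- The set of relators of the presentation of `G(𝒜)`. -/
def grpRels (S : IndexedStructure) (p₁ p₂ : ℕ) : Set (FreeGroup (GenSym S.A)) :=
  {FreeGroup.of GenSym.f1 ^ p₁, FreeGroup.of GenSym.f2 ^ p₂,
    chainProd 4000 (FreeGroup.of GenSym.f1) (FreeGroup.of GenSym.f2),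
    chainProd 4000 (FreeGroup.of GenSym.f2) (FreeGroup.of GenSym.f1),
    chainProd 1000 (FreeGroup.of GenSym.b) (FreeGroup.of GenSym.f1),
    chainProd 1000 (FreeGroup.of GenSym.b) (FreeGroup.of GenSym.f2),
    chainProd 2000 (FreeGroup.of GenSym.c) (FreeGroup.of GenSym.f1),
    chainProd 2000 (FreeGroup.of GenSym.c) (FreeGroup.of GenSym.f2),
    chainProd 3000 (FreeGroup.of GenSym.d) (FreeGroup.of GenSym.f1),
    chainProd 3000 (FreeGroup.of GenSym.d) (FreeGroup.of GenSym.f2)}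
  ∪ {r | ∃ a : S.A,
      r = chainProd 0 (FreeGroup.of (GenSym.elt a)) (FreeGroup.of GenSym.c) ∨
      r = chainProd 0 (FreeGroup.of (GenSym.elt a)) (FreeGroup.of GenSym.d)}
  ∪ {r | ∃ m, 1 ≤ m ∧ S.isFunc m ∧ ∃ as : Fin (S.arity m) → S.A,
      r = wProd m (fun i => FreeGroup.of (GenSym.elt (as i))) (FreeGroup.of GenSym.b) *
        (FreeGroup.of (GenSym.elt (S.funcInterp m as)))⁻¹}
  ∪ {r | ∃ m, 1 ≤ m ∧ ¬ S.isFunc m ∧ ∃ as : Fin (S.arity m) → S.A,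
      S.relInterp m as ∧
      r = wProd m (fun i => FreeGroup.of (GenSym.elt (as i))) (FreeGroup.of GenSym.b)}

/-- The group `G(𝒜)`, presented on the generators `GenSym A` with relators `grpRels`. -/
abbrev GA (S : IndexedStructure) (p₁ p₂ : ℕ) : Type :=
  PresentedGroup (grpRels S p₁ p₂)

/-- The image in `G(𝒜)` of a generator. -/
def gen (S : IndexedStructure) (p₁ p₂ : ℕ) (g : GenSym S.A) : GA S p₁ p₂ :=
  PresentedGroup.of g

/-- An integer-valued left-invariant tree-like metric on a group. -/
structure TreeDist (G : Type*) [Group G] where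
  d : G → G → ℕ
  self : ∀ x, d x x = 0
  comm : ∀ x y, d x y = d y x
  tri : ∀ x y z, d x z ≤ d x y + d y z
  eqz : ∀ x y, d x y = 0 → x = y
  inv : ∀ g x y, d (g * x) (g * y) = d x y
  median : ∀ x y z, ∃ m, d x m + d m y = d x y ∧ d y m + d m z = d y z ∧ d x m + d m z = d x z
  glue : ∀ x p q y, d x p + d p q = d x q → d p q + d q y = d p y → p ≠ q →
    d x y = d x p + d p q + d q y
  lin : ∀ x y z m, d x z + d z y = d x y → d x m + d m y = d x y →
    d x z + d z m = d x m ∨ d x m + d m z = d x z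

section FreeTree
variable {α : Type*} [DecidableEq α]

theorem toWord_eq_append_of_norm {u v : FreeGroup α}
    (h : (u * v).norm = u.norm + v.norm) : (u * v).toWord = u.toWord ++ v.toWord := by
  have := FreeGroup.toWord_mul_sublist u v
  exact this.eq_of_length (by simpa [FreeGroup.norm] using h)

theorem mk_toWord_of_isReduced {l : List (α × Bool)} (h : FreeGroup.IsReduced l) :
    (FreeGroup.mk l).toWord = l := by
  rw [FreeGroup.toWord_mk, h.reduce_eq]

theorem toWord_mul_of_isReduced {u v : FreeGroup α}
    (h : FreeGroup.IsReduced (u.toWord ++ v.toWord)) : (u * v).toWord = u.toWord ++ v.toWord := by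
  rw [FreeGroup.toWord_mul, h.reduce_eq]

theorem norm_inv_mul_of_initial {u v : FreeGroup α} (h : u.toWord <+: v.toWord) :
    u.norm + (u⁻¹ * v).norm = v.norm := by
  obtain ⟨t, ht⟩ := h
  have hr : FreeGroup.IsReduced t :=
    (FreeGroup.isReduced_toWord (x := v)).infix ⟨u.toWord, [], by simp [ht]⟩
  have : u⁻¹ * v = FreeGroup.mk t := by
    rw [inv_mul_eq_iff_eq_mul, ← FreeGroup.mk_toWord (x := v), ← ht, ← FreeGroup.mul_mk,
      FreeGroup.mk_toWord]
  rw [this, FreeGroup.norm, FreeGroup.norm, FreeGroup.norm, mk_toWord_of_isReduced hr, ← ht,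
    List.length_append]

theorem free_btw_iff {x p y : FreeGroup α} :
    (x⁻¹ * p).norm + (p⁻¹ * y).norm = (x⁻¹ * y).norm ↔
      (x⁻¹ * y).toWord = (x⁻¹ * p).toWord ++ (p⁻¹ * y).toWord := by
  have e : x⁻¹ * y = (x⁻¹ * p) * (p⁻¹ * y) := by group
  constructor
  · intro h
    conv_lhs => rw [e]
    apply toWord_eq_append_of_norm
    rw [← e, h]
  · intro h
    simp [FreeGroup.norm, h]

theorem exists_common_initial {β : Type*} : ∀ a b : List β, ∃ c s t, a = c ++ s ∧ b = c ++ t ∧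
    (∀ x ∈ s.head?, ∀ y ∈ t.head?, x ≠ y)
  | [], b => ⟨[], [], b, by simp⟩
  | a, [] => ⟨[], a, [], by simp⟩
  | x :: a, y :: b => by
    by_cases h : x = y
    · obtain ⟨c, s, t, h1, h2, h3⟩ := exists_common_initial a b
      exact ⟨x :: c, s, t, by simp [h1], by simp [h2, h], h3⟩
    · exact ⟨[], x :: a, y :: b, by simp, by simp, by simpa using h⟩

theorem isReduced_invRev {s : List (α × Bool)} (h : FreeGroup.IsReduced s) :
    FreeGroup.IsReduced (FreeGroup.invRev s) := by
  rw [FreeGroup.isReduced_iff_reduce_eq] at *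
  rw [FreeGroup.reduce_invRev, h]

theorem isReduced_invRev_append {s t : List (α × Bool)} (hs : FreeGroup.IsReduced s)
    (ht : FreeGroup.IsReduced t) (h : ∀ x ∈ s.head?, ∀ y ∈ t.head?, x ≠ y) :
    FreeGroup.IsReduced (FreeGroup.invRev s ++ t) := by
  unfold FreeGroup.IsReduced
  rw [List.isChain_append]
  refine ⟨isReduced_invRev hs, ht, ?_⟩
  intro x hx y hy hxy
  rcases s with _ | ⟨a, s⟩
  · simp [FreeGroup.invRev] at hx
  · simp [FreeGroup.invRev] at hx
    subst hx
    have := h a (by simp) y hy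
    simp at hxy ⊢
    by_contra hc
    apply this
    refine Prod.ext hxy ?_
    cases ha : a.2 <;> cases hb : y.2 <;> simp_all

theorem free_median (u v : FreeGroup α) : ∃ m : FreeGroup α,
    m.norm + (m⁻¹ * u).norm = u.norm ∧ m.norm + (m⁻¹ * v).norm = v.norm ∧
    (u⁻¹ * m).norm + (m⁻¹ * v).norm = (u⁻¹ * v).norm := by
  obtain ⟨c, s, t, h1, h2, h3⟩ := exists_common_initial u.toWord v.toWord
  have hu := FreeGroup.isReduced_toWord (x := u)
  have hv := FreeGroup.isReduced_toWord (x := v)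
  have hc : FreeGroup.IsReduced c := hu.infix ⟨[], s, by simp [h1]⟩
  have hs : FreeGroup.IsReduced s := hu.infix ⟨c, [], by simp [h1]⟩
  have ht : FreeGroup.IsReduced t := hv.infix ⟨c, [], by simp [h2]⟩
  have eu : u = FreeGroup.mk c * FreeGroup.mk s := by
    rw [FreeGroup.mul_mk, ← h1, FreeGroup.mk_toWord]
  have ev : v = FreeGroup.mk c * FreeGroup.mk t := by
    rw [FreeGroup.mul_mk, ← h2, FreeGroup.mk_toWord]
  refine ⟨FreeGroup.mk c, ?_, ?_, ?_⟩
  · apply norm_inv_mul_of_initial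
    rw [mk_toWord_of_isReduced hc, h1]; simp
  · apply norm_inv_mul_of_initial
    rw [mk_toWord_of_isReduced hc, h2]; simp
  · rw [eu, ev]
    have e1 : (FreeGroup.mk c * FreeGroup.mk s)⁻¹ * FreeGroup.mk c
      = FreeGroup.mk (FreeGroup.invRev s) := by
      rw [← FreeGroup.inv_mk]; group
    have e2 : (FreeGroup.mk c)⁻¹ * (FreeGroup.mk c * FreeGroup.mk t) = FreeGroup.mk t := by group
    have e3 : (FreeGroup.mk c * FreeGroup.mk s)⁻¹ * (FreeGroup.mk c * FreeGroup.mk t)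
      = FreeGroup.mk (FreeGroup.invRev s ++ t) := by
      rw [← FreeGroup.mul_mk, ← FreeGroup.inv_mk]; group
    rw [e1, e2, e3]
    simp only [FreeGroup.norm]
    rw [mk_toWord_of_isReduced (isReduced_invRev hs), mk_toWord_of_isReduced ht,
      mk_toWord_of_isReduced (isReduced_invRev_append hs ht h3), List.length_append]

/-- The word metric on a free group is tree-like. -/
def freeTree (α : Type*) [DecidableEq α] : TreeDist (FreeGroup α) where
  d x y := (x⁻¹ * y).norm
  self x := by simp
  comm x y := by
    rw [← FreeGroup.norm_inv_eq]; congr 1; group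
  tri x y z := by
    have : x⁻¹ * z = (x⁻¹ * y) * (y⁻¹ * z) := by group
    rw [this]; exact FreeGroup.norm_mul_le _ _
  eqz x y h := by
    rw [FreeGroup.norm_eq_zero, inv_mul_eq_one] at h; exact h
  inv g x y := by congr 1; group
  median x y z := by
    obtain ⟨m, h1, h2, h3⟩ := free_median (x⁻¹ * y) (x⁻¹ * z)
    refine ⟨x * m, ?_, ?_, ?_⟩
    · convert h1 using 3 <;> group
    · rw [show (x⁻¹ * y)⁻¹ * (x⁻¹ * z) = y⁻¹ * z by group] at h3
      convert h3 using 3 <;> group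
    · convert h2 using 3 <;> group
  glue x p q y h1 h2 hne := by
    rw [free_btw_iff] at h1 h2
    have hx := FreeGroup.isReduced_toWord (x := x⁻¹ * q)
    have hy := FreeGroup.isReduced_toWord (x := p⁻¹ * y)
    rw [h1] at hx
    rw [h2] at hy
    have := hx.append_overlap hy (by
      rw [Ne, FreeGroup.toWord_eq_nil_iff, inv_mul_eq_one]; exact hne)
    rw [← h1] at this
    have h3 := toWord_mul_of_isReduced this
    rw [show x⁻¹ * q * (q⁻¹ * y) = x⁻¹ * y by group, h1] at h3
    simp only [FreeGroup.norm, h3, List.length_append]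
  lin x y z m h1 h2 := by
    rw [free_btw_iff] at h1 h2
    have p1 : (x⁻¹ * z).toWord <+: (x⁻¹ * y).toWord := by rw [h1]; simp
    have p2 : (x⁻¹ * m).toWord <+: (x⁻¹ * y).toWord := by rw [h2]; simp
    rcases List.prefix_or_prefix_of_prefix p1 p2 with h | h
    · left
      have := norm_inv_mul_of_initial h
      rw [show (x⁻¹ * z)⁻¹ * (x⁻¹ * m) = z⁻¹ * m by group] at this
      exact this
    · right
      have := norm_inv_mul_of_initial h
      rw [show (x⁻¹ * m)⁻¹ * (x⁻¹ * z) = m⁻¹ * z by group] at this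
      exact this

end FreeTree

namespace TreeDist
variable {G : Type*} [Group G] (T : TreeDist G)

/-- `m` lies on the geodesic from `x` to `y`. -/
def B (x m y : G) : Prop := T.d x m + T.d m y = T.d x y

variable {T}

theorem B.symm {x m y : G} (h : T.B x m y) : T.B y m x := by
  unfold B at *
  rw [T.comm y m, T.comm m x, T.comm y x]; omega

theorem B_right (x y : G) : T.B x y y := by unfold B; simp [T.self]

theorem B_left (x y : G) : T.B x x y := by unfold B; simp [T.self]

theorem med (x y z : G) : ∃ m, T.B x m y ∧ T.B y m z ∧ T.B x m z := T.median x y z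

theorem glue1 {x p q y : G} (h1 : T.B x p q) (h2 : T.B p q y) (h : p ≠ q) : T.B x p y := by
  unfold B at *
  have := T.glue x p q y h1 h2 h
  omega

theorem glue2 {x p q y : G} (h1 : T.B x p q) (h2 : T.B p q y) (h : p ≠ q) : T.B x q y := by
  unfold B at *
  have := T.glue x p q y h1 h2 h
  omega

theorem B.subl {x t m y : G} (h : T.B x m y) (h1 : T.B x t m) : T.B x t y ∧ T.B t m y := by
  unfold B at *
  have := T.tri x t y
  have := T.tri t m y
  omega

theorem B.subr {x t m y : G} (h : T.B x m y) (h1 : T.B m t y) : T.B x t y ∧ T.B x m t := by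
  unfold B at *
  have := T.tri x t y
  have := T.tri x m t
  omega

theorem B.lin {x y z m : G} (h1 : T.B x z y) (h2 : T.B x m y) : T.B x z m ∨ T.B x m z :=
  T.lin x y z m h1 h2

theorem B.antisymm {x z m : G} (h1 : T.B x z m) (h2 : T.B x m z) : z = m := by
  unfold B at *
  have := T.comm z m
  exact T.eqz _ _ (by omega)

theorem B.eq_self {x m : G} (h : T.B x m x) : m = x := by
  unfold B at h
  rw [T.self] at h
  exact T.eqz _ _ (by omega)

theorem B.split {x y z : G} (h : T.B x z y) (w : G) : T.B x z w ∨ T.B w z y := by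
  obtain ⟨m, h1, h2, h3⟩ := T.med x y w
  rcases h.lin h1 with h4 | h4
  · left; exact (h3.subl h4).1
  · right
    have := (h.subl h4).2
    exact (h2.symm.subr this).1

theorem B_act {x m y : G} (g : G) : T.B (g * x) (g * m) (g * y) ↔ T.B x m y := by
  unfold B
  simp [T.inv]

theorem B_act' {x m y : G} (g : G) (h : T.B x m y) : T.B (g⁻¹ * x) (g⁻¹ * m) (g⁻¹ * y) :=
  (B_act g⁻¹).2 h

/-- Convex subsets. -/
def Conv (T : TreeDist G) (C : Set G) : Prop := ∀ x ∈ C, ∀ y ∈ C, ∀ z, T.B x z y → z ∈ C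

end TreeDist

open TreeDist

/-- An equivariant system of lines in a tree-like group satisfying a small cancellation
condition. -/
structure LineSys {G : Type*} [Group G] (T : TreeDist G) (I : Type*) where
  L : I → Set G
  ρ : I → G
  ℓ : I → ℕ
  act : G → I → I
  mem_act : ∀ g i x, x ∈ L (act g i) ↔ g⁻¹ * x ∈ L i
  ρ_act : ∀ g i, ρ (act g i) = g * ρ i * g⁻¹
  ℓ_act : ∀ g i, ℓ (act g i) = ℓ i
  conv : ∀ i, T.Conv (L i)
  ne : ∀ i, (L i).Nonempty
  shift : ∀ i x (e : ℤ), x ∈ L i → ρ i ^ e * x ∈ L i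
  trans : ∀ i x (e : ℤ), x ∈ L i → e ≠ 0 → ℓ i ≤ T.d x (ρ i ^ e * x)
  piece : ∀ i j, (Subgroup.zpowers (ρ i) = Subgroup.zpowers (ρ j) ∧ L i = L j) ∨
    ∀ x y, x ∈ L i → x ∈ L j → y ∈ L i → y ∈ L j → 12 * T.d x y ≤ ℓ i
  big : ∀ i, 4 ≤ ℓ i

namespace LineSys
variable {G : Type*} [Group G] {T : TreeDist G} {I : Type*} (S : LineSys T I)

/-- Two indices describe the same line. -/
def Same (i j : I) : Prop :=
  Subgroup.zpowers (S.ρ i) = Subgroup.zpowers (S.ρ j) ∧ S.L i = S.L j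

variable {S}

theorem Same.symm {i j : I} (h : S.Same i j) : S.Same j i := ⟨h.1.symm, h.2.symm⟩
theorem Same.trans {i j k : I} (h : S.Same i j) (h' : S.Same j k) : S.Same i k :=
  ⟨h.1.trans h'.1, h.2.trans h'.2⟩

theorem act_L_eq (g : G) {i j : I} (h : S.L i = S.L j) : S.L (S.act g i) = S.L (S.act g j) := by
  ext x; rw [S.mem_act, S.mem_act, h]

theorem zpowers_conj_eq {a b : G} (g : G) (h : Subgroup.zpowers a = Subgroup.zpowers b) :
    Subgroup.zpowers (g * a * g⁻¹) = Subgroup.zpowers (g * b * g⁻¹) := by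
  have key : ∀ c : G, Subgroup.zpowers (g * c * g⁻¹)
      = (Subgroup.zpowers c).map (MulAut.conj g).toMonoidHom := by
    intro c
    rw [MonoidHom.map_zpowers]; rfl
  rw [key, key, h]

theorem Same.act {i j : I} (h : S.Same i j) (g : G) : S.Same (S.act g i) (S.act g j) := by
  refine ⟨?_, act_L_eq g h.2⟩
  rw [S.ρ_act, S.ρ_act]
  exact zpowers_conj_eq g h.1

theorem act_inv_L (g : G) (i : I) : S.L (S.act g⁻¹ (S.act g i)) = S.L i := by
  ext x; rw [S.mem_act, S.mem_act]; simp

theorem same_act_inv (g : G) (i : I) : S.Same (S.act g⁻¹ (S.act g i)) i := by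
  refine ⟨?_, act_inv_L g i⟩
  rw [S.ρ_act, S.ρ_act]; congr 1; group

theorem same_act_self (i : I) (e : ℤ) : S.Same (S.act (S.ρ i ^ e) i) i := by
  constructor
  · rw [S.ρ_act]; congr 1; group
  · ext x
    rw [S.mem_act]
    constructor
    · intro h
      have := S.shift i _ e h
      simpa using this
    · intro h
      have := S.shift i _ (-e) h
      simpa using this

theorem same_of_act {i j : I} (g : G) (h : S.Same (S.act g i) (S.act g j)) : S.Same i j :=
  ((same_act_inv g i).symm.trans (h.act g⁻¹)).trans (same_act_inv g j)

theorem piece_of_not_same {i j : I} (h : ¬ S.Same i j) {x y : G} (h1 : x ∈ S.L i) (h2 : x ∈ S.L j)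
    (h3 : y ∈ S.L i) (h4 : y ∈ S.L j) : 12 * T.d x y ≤ S.ℓ i ∧ 12 * T.d x y ≤ S.ℓ j := by
  constructor
  · exact (S.piece i j).resolve_left h x y h1 h2 h3 h4
  · exact (S.piece j i).resolve_left (fun h' => h (Same.symm h')) x y h2 h1 h4 h3

theorem step_aux {C : Set G} (hC : T.Conv C) {i j : I} (hij : ¬ S.Same i j)
    {p q z s s2 y : G} (hq : q ∈ C) (hz : z ∈ C) (hpq : ∀ t, T.B p t q → t ∈ C → t = q)
    (hp : p ∈ S.L i) (hqi : q ∈ S.L i) (hzj : z ∈ S.L j) (hs2 : s2 ∈ S.L j)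
    (h1 : T.B q z y) (h2 : T.B z s2 y) (h3 : s2 = y ∨ S.ℓ j < 12 * T.d z s2)
    (h4 : T.B p s q) (h5 : T.B q s y) : 12 * T.d s q ≤ S.ℓ i := by
  have hsi : s ∈ S.L i := S.conv i p hp q hqi s h4
  rcases h1.lin h5 with h | h
  · have hzs : T.B p z q := (h4.symm.subl h).1.symm
    have hzq := hpq z hzs hz
    subst hzq
    rcases h2.lin h5 with h' | h'
    · rcases h3 with h3 | h3
      · subst h3
        have := h'.antisymm h5
        subst this
        exact (piece_of_not_same hij hsi hs2 hqi hzj).1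
      · have : s2 ∈ S.L i := S.conv i z hqi s hsi s2 h'
        have := (piece_of_not_same hij hqi hzj this hs2).2
        omega
    · have : s ∈ S.L j := S.conv j z hzj s2 hs2 s h'
      exact (piece_of_not_same hij hsi this hqi hzj).1
  · have : s ∈ C := hC q hq z hz s h
    have := hpq s h4 this
    subst this
    simp [T.self]

variable (S) in
/-- A geodesic `[1, w]` contains a large part of a line. -/
def Good (w : G) : Prop := ∃ i p s, p ∈ S.L i ∧ s ∈ S.L i ∧ T.B 1 p w ∧ T.B p s w ∧
  9 * S.ℓ i ≤ 12 * T.d p s + 24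

variable (S) in
/-- The windmill invariant. -/
structure Stage (Q : Set G) (H : Subgroup G) : Prop where
  one : (1 : G) ∈ Q
  conv : T.Conv Q
  inv : ∀ h ∈ H, ∀ x ∈ Q, h * x ∈ Q
  small : ∀ i, S.ρ i ∉ H → ∀ a b, a ∈ S.L i → a ∈ Q → b ∈ S.L i → b ∈ Q →
    12 * T.d a b ≤ 2 * S.ℓ i + 24
  good : ∀ w ∈ H, w ≠ 1 → S.Good w

variable (S) in
/-- Lines meeting `Q` which are not yet in the family of `H`. -/
def M (Q : Set G) (H : Subgroup G) : Set I := {i | S.ρ i ∉ H ∧ (S.L i ∩ Q).Nonempty}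

variable (S) in
/-- Chains of lines. -/
inductive Ch (Q : Set G) (H : Subgroup G) (P : I → G → Prop) : I → G → Prop
  | base (i : I) (e : ℤ) (y : G) : i ∈ S.M Q H → e ≠ 0 → P i y → Ch Q H P i (S.ρ i ^ e * y)
  | step (i j : I) (e : ℤ) (y : G) : i ∈ S.M Q H → e ≠ 0 → ¬ S.Same i j → Ch Q H P j y →
      Ch Q H P i (S.ρ i ^ e * y)

variable (S) in
/-- Terminal condition for chains ending in `Q` or on a further line. -/
def P2 (Q : Set G) (H : Subgroup G) (i : I) (y : G) : Prop :=
  y ∈ Q ∨ ∃ j ∈ S.M Q H, ¬ S.Same i j ∧ y ∈ S.L j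

variable (S) in
/-- The subgroup generated by `H` and the new lines. -/
def newH (Q : Set G) (H : Subgroup G) : Subgroup G :=
  H ⊔ Subgroup.closure (Set.image S.ρ (S.M Q H))

variable {Q : Set G} {H : Subgroup G}

theorem Ch.mem {P : I → G → Prop} {i : I} {y : G} (h : S.Ch Q H P i y) : i ∈ S.M Q H := by
  cases h <;> assumption

theorem Ch.mono {P P' : I → G → Prop} (hP : ∀ i y, P i y → P' i y) {i : I} {y : G}
    (h : S.Ch Q H P i y) : S.Ch Q H P' i y := by
  induction h with
  | base i e y h1 h2 h3 => exact Ch.base i e y h1 h2 (hP _ _ h3)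
  | step i j e y h1 h2 h3 _ ih => exact Ch.step i j e y h1 h2 h3 ih

theorem gap (st : S.Stage Q H) {i : I} (hi : i ∈ S.M Q H) {e : ℤ} (he : e ≠ 0) :
    ∃ p q, p ∈ Q ∧ p ∈ S.L i ∧ (S.ρ i ^ e)⁻¹ * q ∈ Q ∧ q ∈ S.L i ∧
      (∀ t, T.B p t q → t ∈ Q → t = p) ∧ (∀ t, T.B p t q → (S.ρ i ^ e)⁻¹ * t ∈ Q → t = q) ∧
      10 * S.ℓ i ≤ 12 * T.d p q + 24 := by
  obtain ⟨hρ, x, hxL, hxQ⟩ := hi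
  let Pn : ℕ → Prop := fun n => ∃ p q, p ∈ Q ∧ p ∈ S.L i ∧ (S.ρ i ^ e)⁻¹ * q ∈ Q ∧ q ∈ S.L i ∧
    T.d p q = n
  have hex : ∃ n, Pn n := ⟨_, x, S.ρ i ^ e * x, hxQ, hxL, by simpa using hxQ,
    S.shift i x e hxL, rfl⟩
  classical
  obtain ⟨p, q, h1, h2, h3, h4, h5⟩ := Nat.find_spec hex
  have hmin : ∀ p' q', p' ∈ Q → p' ∈ S.L i → (S.ρ i ^ e)⁻¹ * q' ∈ Q → q' ∈ S.L i →
      T.d p q ≤ T.d p' q' := fun p' q' a1 a2 a3 a4 => by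
    rw [h5]; exact Nat.find_min' hex ⟨p', q', a1, a2, a3, a4, rfl⟩
  refine ⟨p, q, h1, h2, h3, h4, ?_, ?_, ?_⟩
  · intro t ht htQ
    have := hmin t q htQ (S.conv i p h2 q h4 t ht) h3 h4
    unfold B at ht
    exact (T.eqz p t (by omega)).symm
  · intro t ht htQ
    have := hmin p t h1 h2 htQ (S.conv i p h2 q h4 t ht)
    unfold B at ht
    exact (T.eqz t q (by omega))
  · have hq' : (S.ρ i ^ e)⁻¹ * q ∈ S.L i := by
      have := S.shift i q (-e) h4
      simpa using this
    have a1 := st.small i hρ p _ h2 h1 hq' h3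
    have a2 := S.trans i _ e hq' he
    rw [mul_inv_cancel_left] at a2
    have a3 := T.tri ((S.ρ i ^ e)⁻¹ * q) p q
    have a4 := T.comm ((S.ρ i ^ e)⁻¹ * q) p
    omega

theorem conv_translate (hQ : T.Conv Q) (g : G) : T.Conv {t | g⁻¹ * t ∈ Q} := by
  intro x hx y hy z hz
  exact hQ _ hx _ hy _ (B_act' g hz)

theorem conv_line_act (i : I) (g : G) : T.Conv {t | g⁻¹ * t ∈ S.L i} :=
  conv_translate (S.conv i) g

theorem psi (st : S.Stage Q H) {i : I} {y : G} (h : S.Ch Q H (S.P2 Q H) i y) :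
    ∃ p s, p ∈ Q ∧ p ∈ S.L i ∧ s ∈ S.L i ∧ (∀ x ∈ Q, T.B x p s) ∧ T.B p s y ∧
      9 * S.ℓ i ≤ 12 * T.d p s + 24 := by
  have key : ∀ (i : I) (e : ℤ) (y' : G), i ∈ S.M Q H → e ≠ 0 →
      (y' ∈ Q ∨ ∃ j z s2, ¬ S.Same i j ∧ z ∈ Q ∧ z ∈ S.L j ∧ s2 ∈ S.L j ∧ 
        T.B ((S.ρ i ^ e)⁻¹ * ((S.ρ i ^ e) * y')) s2 z ∧ T.B z s2 y' ∧
        (s2 = y' ∨ ((∀ x ∈ Q, T.B x z s2) ∧ S.ℓ j < 12 * T.d z s2))) →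
      ∃ p s, p ∈ Q ∧ p ∈ S.L i ∧ s ∈ S.L i ∧ (∀ x ∈ Q, T.B x p s) ∧ T.B p s (S.ρ i ^ e * y') ∧
      9 * S.ℓ i ≤ 12 * T.d p s + 24 := by
    intro i e y' hi he hy
    obtain ⟨p, q, h1, h2, h3, h4, h5, h6, h7⟩ := gap st hi he
    set y := S.ρ i ^ e * y' with hyd
    obtain ⟨s, m1, m2, m3⟩ := T.med p q y
    have hsL : s ∈ S.L i := S.conv i p h2 q h4 s m1
    have hconvC := conv_translate st.conv (S.ρ i ^ e)
    refine ⟨p, s, h1, h2, hsL, ?_, m3, ?_⟩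
    · intro x hx
      obtain ⟨m, a1, a2, a3⟩ := T.med x p s
      have hm : m ∈ Q := st.conv x hx p h1 m a1
      have : m = p := h5 m (m1.subl a2).1 hm
      subst this; exact a3
    · have hsq : 12 * T.d s q ≤ S.ℓ i := by
        rcases hy with hy | ⟨j, z, s2, hij, b1, b2, b3, _, b4, b5⟩
        · have : s = q := by
            apply h6 s m1
            have hyC : (S.ρ i ^ e)⁻¹ * y ∈ Q := by rw [hyd]; simpa using hy
            exact hconvC q h3 y hyC s m2
          subst this; simp [T.self]
        · -- the line `j'` is the translate of `j`
          have hij' : ¬ S.Same i (S.act (S.ρ i ^ e) j) := fun hs =>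
            hij (same_of_act (S.ρ i ^ e) ((same_act_self i e).trans hs))
          have hB2 : T.B (S.ρ i ^ e * z) (S.ρ i ^ e * s2) y := (B_act _).2 b4
          have hq2 : ∃ z', z' ∈ Q ∧ z' ∈ S.L j ∧ T.B q (S.ρ i ^ e * z') y ∧ T.B z' s2 y' ∧
              (s2 = y' ∨ S.ℓ j < 12 * T.d z' s2) := by
            rcases b5 with b5 | ⟨b5, b6⟩
            · obtain ⟨m, c1, c2, c3⟩ := T.med ((S.ρ i ^ e)⁻¹ * q) z y'
              have hy' : y' ∈ S.L j := b5 ▸ b3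
              refine ⟨m, st.conv _ h3 _ b1 _ c1, S.conv j _ b2 _ hy' _ c2, ?_, ?_, Or.inl b5⟩
              · have := (B_act (T := T) (S.ρ i ^ e)).2 c3
                rwa [mul_inv_cancel_left] at this
              · rw [b5]; exact B_right _ _
            · refine ⟨z, b1, b2, ?_, b4, Or.inr b6⟩
              have hzs : z ≠ s2 := by
                rintro rfl
                simp [T.self] at b6
              have c := glue1 (b5 _ h3) b4 hzs
              have := (B_act (T := T) (S.ρ i ^ e)).2 c
              rwa [mul_inv_cancel_left] at this
          obtain ⟨z', d1, d2, d3, d4, d5⟩ := hq2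
          refine step_aux (z := S.ρ i ^ e * z') (s2 := S.ρ i ^ e * s2) hconvC hij' h3 ?_ h6 h2 h4 ?_ ?_ d3
            ((B_act _).2 d4) ?_ m1 m2
          · simpa using d1
          · rw [S.mem_act]; simpa using d2
          · rw [S.mem_act]; simpa using b3
          · rw [S.ℓ_act, T.inv, hyd]
            rcases d5 with d5 | d5
            · left; rw [d5]
            · right; exact d5
      unfold B at m1
      omega
  induction h with
  | base i e y h1 h2 h3 =>
    apply key i e y h1 h2
    rcases h3 with h3 | ⟨j, hj, hij, hy⟩
    · exact Or.inl h3
    · right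
      obtain ⟨_, z, hz1, hz2⟩ := hj
      refine ⟨j, z, y, hij, hz2, hz1, hy, ?_, B_right _ _, Or.inl rfl⟩
      rw [inv_mul_cancel_left]; exact B_left _ _
  | step i j e y h1 h2 h3 h4 ih =>
    obtain ⟨p, s, a1, a2, a3, a4, a5, a6⟩ := ih
    have := S.big j
    apply key i e y h1 h2
    right
    refine ⟨j, p, s, h3, a1, a2, a3, ?_, a5, Or.inr ⟨a4, by omega⟩⟩
    rw [inv_mul_cancel_left]; exact a5.symm
end LineSys

open TreeDist
open scoped Pointwise
namespace LineSys
variable {G : Type*} [Group G] {T : TreeDist G} {I : Type*} {S : LineSys T I}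
variable {Q : Set G} {H : Subgroup G}

theorem M_act (st : S.Stage Q H) {h : G} (hh : h ∈ H) {i : I} (hi : i ∈ S.M Q H) :
    S.act h i ∈ S.M Q H := by
  obtain ⟨h1, x, h2, h3⟩ := hi
  refine ⟨?_, h * x, ?_, st.inv h hh x h3⟩
  · rw [S.ρ_act]
    intro h4
    apply h1
    have := H.mul_mem (H.mul_mem (H.inv_mem hh) h4) hh
    simpa [mul_assoc] using this
  · rw [S.mem_act]; simpa using h2

theorem ch_smul (st : S.Stage Q H) {P : I → G → Prop} {h : G} (hh : h ∈ H)
    (hP : ∀ i y, P i y → P (S.act h i) (h * y)) {i : I} {y : G} (hc : S.Ch Q H P i y) :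
    S.Ch Q H P (S.act h i) (h * y) := by
  have aux : ∀ (i : I) (e : ℤ) (y : G), h * (S.ρ i ^ e * y) = S.ρ (S.act h i) ^ e * (h * y) := by
    intro i e y
    rw [S.ρ_act, conj_zpow]; group
  induction hc with
  | base i e y h1 h2 h3 =>
    rw [aux]
    exact Ch.base _ e _ (M_act st hh h1) h2 (hP _ _ h3)
  | step i j e y h1 h2 h3 _ ih =>
    rw [aux]
    exact Ch.step _ _ e _ (M_act st hh h1) h2 (fun h' => h3 (same_of_act h h')) ih

theorem state_pow {P : I → G → Prop} {B0 : G → Prop}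
    (hPB : ∀ i y, P i y → B0 y)
    (hB : ∀ i y, i ∈ S.M Q H → B0 y → P i y ∨ ∀ e : ℤ, B0 (S.ρ i ^ e * y))
    {i : I} (hi : i ∈ S.M Q H) (e : ℤ) {y : G} (hy : B0 y ∨ ∃ j, S.Ch Q H P j y) :
    B0 (S.ρ i ^ e * y) ∨ ∃ j, S.Ch Q H P j (S.ρ i ^ e * y) := by
  by_cases he : e = 0
  · subst he; simpa using hy
  rcases hy with hy | ⟨j, hj⟩
  · rcases hB i y hi hy with h | h
    · exact Or.inr ⟨i, Ch.base i e y hi he h⟩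
    · exact Or.inl (h e)
  · by_cases hs : S.Same i j
    · have hm : S.ρ i ^ e ∈ Subgroup.zpowers (S.ρ j) := by
        rw [← hs.1]; exact ⟨e, rfl⟩
      obtain ⟨e', he'⟩ := hm
      simp only at he'
      rw [← he']
      cases hj with
      | base _ f y' h1 h2 h3 =>
        rw [← mul_assoc, ← zpow_add]
        by_cases h0 : e' + f = 0
        · left; rw [h0]; simpa using hPB _ _ h3
        · right; exact ⟨_, Ch.base _ _ _ h1 h0 h3⟩
      | step _ k f y' h1 h2 h3 h4 =>
        rw [← mul_assoc, ← zpow_add]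
        by_cases h0 : e' + f = 0
        · right; rw [h0]; exact ⟨k, by simpa using h4⟩
        · right; exact ⟨_, Ch.step _ _ _ _ h1 h0 h3 h4⟩
    · exact Or.inr ⟨i, Ch.step i j e y hi he hs hj⟩

theorem state_newH (st : S.Stage Q H) {P : I → G → Prop} {B0 : G → Prop}
    (hPB : ∀ i y, P i y → B0 y)
    (hB : ∀ i y, i ∈ S.M Q H → B0 y → P i y ∨ ∀ e : ℤ, B0 (S.ρ i ^ e * y))
    (hB0 : ∀ h ∈ H, ∀ y, B0 y → B0 (h * y))
    (hP : ∀ h ∈ H, ∀ i y, P i y → P (S.act h i) (h * y))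
    {u : G} (hu : u ∈ S.newH Q H) {y : G} (hy : B0 y ∨ ∃ j, S.Ch Q H P j y) :
    B0 (u * y) ∨ ∃ j, S.Ch Q H P j (u * y) := by
  let X : Set G := {y | B0 y ∨ ∃ j, S.Ch Q H P j y}
  have hle : S.newH Q H ≤ MulAction.stabilizer G X := by
    have hH1 : ∀ h ∈ H, ∀ y ∈ X, h * y ∈ X := by
      intro h hh y hy
      rcases hy with hy | ⟨j, hj⟩
      · exact Or.inl (hB0 h hh y hy)
      · exact Or.inr ⟨_, ch_smul st hh (hP h hh) hj⟩
    refine sup_le ?_ ((Subgroup.closure_le _).2 ?_)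
    · intro h hh
      rw [MulAction.mem_stabilizer_set]
      intro b
      refine ⟨fun hb => ?_, fun hb => hH1 h hh b hb⟩
      have := hH1 h⁻¹ (H.inv_mem hh) _ hb
      simpa using this
    · rintro _ ⟨i, hi, rfl⟩
      rw [SetLike.mem_coe, MulAction.mem_stabilizer_set]
      intro b
      have h1 : ∀ (e : ℤ) (y), y ∈ X → S.ρ i ^ e * y ∈ X := fun e y hy =>
        state_pow hPB hB hi e hy
      refine ⟨fun hb => ?_, fun hb => ?_⟩
      · have := h1 (-1) _ hb
        simpa using this
      · have := h1 1 _ hb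
        simpa using this
  have := (MulAction.mem_stabilizer_set.1 (hle hu) y).2 hy
  exact this

/-- Every element of the new subgroup lies in `H` or is a chain. -/
theorem newH_cases (st : S.Stage Q H) {w : G} (hw : w ∈ S.newH Q H) :
    w ∈ H ∨ ∃ i, S.Ch Q H (S.P2 Q H) i w := by
  have := state_newH st (P := fun _ y => y ∈ H) (B0 := fun y => y ∈ H) (fun _ _ h => h)
    (fun _ _ _ h => Or.inl h) (fun h hh y hy => H.mul_mem hh hy)
    (fun h hh _ y hy => H.mul_mem hh hy) hw (y := 1) (Or.inl H.one_mem)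
  rw [mul_one] at this
  rcases this with h | ⟨i, h⟩
  · exact Or.inl h
  · refine Or.inr ⟨i, h.mono ?_⟩
    intro i y hy
    left
    have := st.inv y hy 1 st.one
    simpa using this

theorem newH_good (st : S.Stage Q H) {w : G} (hw : w ∈ S.newH Q H) (h1 : w ≠ 1) : S.Good w := by
  rcases newH_cases st hw with h | ⟨i, h⟩
  · exact st.good w h h1
  · obtain ⟨p, s, a1, a2, a3, a4, a5, a6⟩ := psi st h
    refine ⟨i, p, s, a2, a3, ?_, a5, a6⟩
    have := S.big i
    have hps : p ≠ s := by
      rintro rfl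
      rw [T.self] at a6
      omega
    exact glue1 (a4 1 st.one) a5 hps

variable (S) in
/-- Terminal points. -/
def B2 (Q : Set G) (H : Subgroup G) (y : G) : Prop := y ∈ Q ∨ ∃ j ∈ S.M Q H, y ∈ S.L j

variable (S) in
/-- The new convex set, before thickening. -/
def newQ (Q : Set G) (H : Subgroup G) : Set G :=
  {y | S.B2 Q H y ∨ ∃ i, S.Ch Q H (S.P2 Q H) i y}

theorem P2_B2 (i : I) (y : G) (h : S.P2 Q H i y) : S.B2 Q H y := by
  rcases h with h | ⟨j, h1, _, h2⟩
  · exact Or.inl h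
  · exact Or.inr ⟨j, h1, h2⟩

theorem newQ_inv (st : S.Stage Q H) {u : G} (hu : u ∈ S.newH Q H) {y : G} (hy : y ∈ S.newQ Q H) :
    u * y ∈ S.newQ Q H := by
  refine state_newH st P2_B2 ?_ ?_ ?_ hu hy
  · intro i y hi hy
    rcases hy with hy | ⟨j, hj, hy⟩
    · exact Or.inl (Or.inl hy)
    · by_cases hs : S.Same i j
      · right
        intro e
        refine Or.inr ⟨i, hi, S.shift i y e ?_⟩
        rw [hs.2]; exact hy
      · exact Or.inl (Or.inr ⟨j, hj, hs, hy⟩)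
  · intro h hh y hy
    rcases hy with hy | ⟨j, hj, hy⟩
    · exact Or.inl (st.inv h hh y hy)
    · refine Or.inr ⟨_, M_act st hh hj, ?_⟩
      rw [S.mem_act]; simpa using hy
  · intro h hh i y hy
    rcases hy with hy | ⟨j, hj, hij, hy⟩
    · exact Or.inl (st.inv h hh y hy)
    · refine Or.inr ⟨_, M_act st hh hj, fun h' => hij (same_of_act h h'), ?_⟩
      rw [S.mem_act]; simpa using hy

theorem rho_mem_newH {i : I} (hi : i ∈ S.M Q H) (e : ℤ) : S.ρ i ^ e ∈ S.newH Q H :=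
  Subgroup.zpow_mem _ 
    (Subgroup.mem_sup_right (Subgroup.subset_closure (Set.mem_image_of_mem _ hi))) e

/-- Every point of the new set is a translate of a terminal point. -/
theorem newQ_trans {y : G} (hy : y ∈ S.newQ Q H) :
    ∃ u ∈ S.newH Q H, S.B2 Q H (u⁻¹ * y) := by
  rcases hy with hy | ⟨i, hy⟩
  · exact ⟨1, Subgroup.one_mem _, by simpa using hy⟩
  · induction hy with
    | base i e y h1 h2 h3 =>
      exact ⟨S.ρ i ^ e, rho_mem_newH h1 e, by simpa using P2_B2 _ _ h3⟩
    | step i j e y h1 h2 h3 _ ih =>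
      obtain ⟨u, hu, h⟩ := ih
      refine ⟨S.ρ i ^ e * u, Subgroup.mul_mem _ (rho_mem_newH h1 e) hu, ?_⟩
      simpa [mul_assoc] using h

theorem L_sub_newQ {i : I} (hi : i ∈ S.M Q H) {y : G} (hy : y ∈ S.L i) : y ∈ S.newQ Q H :=
  Or.inl (Or.inr ⟨i, hi, hy⟩)

theorem newQ_conv (st : S.Stage Q H) : T.Conv (S.newQ Q H) := by
  -- segments starting in `Q`
  have h1 : ∀ y, S.B2 Q H y → ∀ x ∈ Q, ∀ t, T.B x t y → t ∈ S.newQ Q H := by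
    intro y hy x hx t ht
    rcases hy with hy | ⟨j, hj, hy⟩
    · exact Or.inl (Or.inl (st.conv x hx y hy t ht))
    · obtain ⟨_, z, hz1, hz2⟩ := id hj
      rcases ht.split z with h | h
      · exact Or.inl (Or.inl (st.conv x hx z hz2 t h))
      · exact L_sub_newQ hj (S.conv j z hz1 y hy t h)
  have step : ∀ (i : I) (e : ℤ) (y : G), i ∈ S.M Q H →
      (∀ x ∈ Q, ∀ t, T.B x t y → t ∈ S.newQ Q H) →
      ∀ x ∈ Q, ∀ t, T.B x t (S.ρ i ^ e * y) → t ∈ S.newQ Q H := by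
    intro i e y hi hy x hx t ht
    obtain ⟨_, z, hz1, hz2⟩ := id hi
    rcases ht.split z with h | h
    · exact Or.inl (Or.inl (st.conv x hx z hz2 t h))
    · rcases h.split (S.ρ i ^ e * z) with h' | h'
      · exact L_sub_newQ hi (S.conv i z hz1 _ (S.shift i z e hz1) t h')
      · have := B_act' (S.ρ i ^ e) h'
        simp only [inv_mul_cancel_left] at this
        have := newQ_inv st (rho_mem_newH hi e) (hy z hz2 _ this)
        simpa using this
  have h2 : ∀ y ∈ S.newQ Q H, ∀ x ∈ Q, ∀ t, T.B x t y → t ∈ S.newQ Q H := by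
    intro y hy
    rcases hy with hy | ⟨i, hy⟩
    · exact h1 y hy
    · induction hy with
      | base i e y a1 a2 a3 => exact step i e y a1 (h1 y (P2_B2 _ _ a3))
      | step i j e y a1 a2 a3 _ ih => exact step i e y a1 ih
  -- general segments
  intro x hx y hy t ht
  obtain ⟨u, hu, hb⟩ := newQ_trans hx
  have hy' := newQ_inv st (Subgroup.inv_mem _ hu) hy
  have ht' := B_act' u ht
  suffices h : u⁻¹ * t ∈ S.newQ Q H by
    have := newQ_inv st hu h
    simpa using this
  rcases hb with hb | ⟨j, hj, hb⟩
  · exact h2 _ hy' _ hb _ ht'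
  · obtain ⟨_, z, hz1, hz2⟩ := id hj
    rcases ht'.split z with h | h
    · exact L_sub_newQ hj (S.conv j _ hb z hz1 _ h)
    · exact h2 _ hy' z hz2 _ h
end LineSys

open TreeDist
namespace LineSys
variable {G : Type*} [Group G] {T : TreeDist G} {I : Type*} {S : LineSys T I}
variable {Q : Set G} {H : Subgroup G}

theorem rho_mem_of_meet {i : I} {x : G} (h1 : x ∈ S.L i) (h2 : x ∈ Q) : S.ρ i ∈ S.newH Q H := by
  by_cases h : S.ρ i ∈ H
  · exact Subgroup.mem_sup_left h
  · have := rho_mem_newH (S := S) (Q := Q) (H := H) (i := i) ⟨h, x, h1, h2⟩ 1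
    simpa using this

theorem not_same_of_rho {k i : I} (hk : S.ρ k ∉ S.newH Q H) (hi : i ∈ S.M Q H) : ¬ S.Same i k := by
  intro h
  apply hk
  have : S.ρ k ∈ Subgroup.zpowers (S.ρ i) := by rw [h.1]; exact Subgroup.mem_zpowers _
  obtain ⟨e, he⟩ := this
  simp only at he
  rw [← he]
  exact rho_mem_newH hi e

theorem act_not_mem {k : I} (hk : S.ρ k ∉ S.newH Q H) {u : G} (hu : u ∈ S.newH Q H) :
    S.ρ (S.act u k) ∉ S.newH Q H := by
  intro h
  rw [S.ρ_act] at h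
  apply hk
  have := Subgroup.mul_mem _ (Subgroup.mul_mem _ (Subgroup.inv_mem _ hu) h) hu
  simpa [mul_assoc] using this

theorem small_lines (st : S.Stage Q H) {k j0 j : I} (hk : S.ρ k ∉ S.newH Q H)
    (hj0 : j0 ∈ S.M Q H) (hj : j ∈ S.M Q H) {a b : G} (ha : a ∈ S.L k) (ha0 : a ∈ S.L j0)
    (hb : b ∈ S.L k) (hb0 : b ∈ S.L j) : 12 * T.d a b ≤ 2 * S.ℓ k := by
  obtain ⟨_, z0, hz1, hz2⟩ := id hj0
  obtain ⟨_, z1, hz3, hz4⟩ := id hj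
  obtain ⟨m0, a1, a2, a3⟩ := T.med a b z0
  obtain ⟨m1, b1, b2, b3⟩ := T.med b m0 z1
  have hm0k := S.conv k a ha b hb m0 a1
  have hm0j := S.conv j0 a ha0 z0 hz1 m0 a3
  have hm1k := S.conv k b hb m0 hm0k m1 b1
  have hm1j := S.conv j b hb0 z1 hz3 m1 b3
  have c1 := (piece_of_not_same (not_same_of_rho hk hj0) ha0 ha hm0j hm0k).2
  have c2 := (piece_of_not_same (not_same_of_rho hk hj) hb0 hb hm1j hm1k).2
  by_cases h : m0 = m1
  · subst h
    have := T.comm b m0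
    unfold B at a1
    omega
  · exfalso
    have e1 : T.B m1 m0 z0 := (a2.subl b1).2
    have e2 := glue1 e1.symm b2 h
    exact hk (rho_mem_of_meet hm0k (st.conv z0 hz2 z1 hz4 m0 e2))

theorem small_ch (st : S.Stage Q H) {j0 i : I} (hj0 : j0 ∈ S.M Q H) {b : G}
    (hc : S.Ch Q H (S.P2 Q H) i b) : ∀ k a, S.ρ k ∉ S.newH Q H → a ∈ S.L k → a ∈ S.L j0 →
    b ∈ S.L k → 12 * T.d a b ≤ 2 * S.ℓ k := by
  -- lines different from the first one
  have main : ∀ i b, S.Ch Q H (S.P2 Q H) i b → ¬ S.Same i j0 → ∀ k a, S.ρ k ∉ S.newH Q H →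
      a ∈ S.L k → a ∈ S.L j0 → b ∈ S.L k → 12 * T.d a b ≤ 2 * S.ℓ k := by
    intro i b hc hij k a hk ha ha0 hb
    exfalso
    obtain ⟨_, z0, hz1, hz2⟩ := id hj0
    obtain ⟨p, s, b1, b2, b3, b4, b5, b6⟩ := psi st hc
    obtain ⟨p', c1, c2, c3⟩ := T.med a p s
    obtain ⟨z, d1, d2, d3⟩ := T.med p z0 a
    have hp' : p' ∈ S.L i := S.conv i p b2 s b3 p' c2
    have e1 : 12 * T.d p' p ≤ S.ℓ i := by
      refine step_aux (C := Q) st.conv hij (p := s) (q := p) (z := z) (s := p') (s2 := a) (y := a)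
        b1 (st.conv p b1 z0 hz2 z d1) ?_ b3 b2 (S.conv j0 z0 hz1 a ha0 z d2) ha0 d3 (B_right _ _)
        (Or.inl rfl) c2.symm c1.symm
      intro t ht htQ
      exact ht.antisymm (b4 t htQ).symm
    have e2 := S.big i
    have e3 : T.d p p' = T.d p' p := T.comm _ _
    have e4 : S.ℓ i < 12 * T.d p' s := by
      unfold B at c2; omega
    have e5 : p' ≠ s := by
      rintro rfl
      simp [T.self] at e4
    have e6 : T.B p' s b := (b5.subl c2).2
    have e7 := glue1 c3 e6 e5
    have e8 := glue2 c3 e6 e5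
    have e9 := (piece_of_not_same (not_same_of_rho hk hc.mem) hp' (S.conv k a ha b hb _ e7) b3
      (S.conv k a ha b hb _ e8)).1
    omega
  have shiftit : ∀ i (e : ℤ) y, i ∈ S.M Q H → S.Same i j0 →
      (∀ k a, S.ρ k ∉ S.newH Q H → a ∈ S.L k → a ∈ S.L j0 → y ∈ S.L k →
        12 * T.d a y ≤ 2 * S.ℓ k) → ∀ k a, S.ρ k ∉ S.newH Q H → a ∈ S.L k → a ∈ S.L j0 →
      S.ρ i ^ e * y ∈ S.L k → 12 * T.d a (S.ρ i ^ e * y) ≤ 2 * S.ℓ k := by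
    intro i e y hi hij ih k a hk ha ha0 hb
    have h1 := ih (S.act (S.ρ i ^ e)⁻¹ k) ((S.ρ i ^ e)⁻¹ * a)
      (act_not_mem hk (Subgroup.inv_mem _ (rho_mem_newH hi e))) (by rw [S.mem_act]; simpa using ha)
      (by
        rw [← hij.2] at ha0 ⊢
        have := S.shift i a (-e) ha0
        simpa using this) (by rw [S.mem_act]; simpa using hb)
    rw [S.ℓ_act, ← T.inv (S.ρ i ^ e)] at h1
    simpa using h1
  induction hc with
  | base i e y h1 h2 h3 =>
    by_cases hij : S.Same i j0
    · apply shiftit i e y h1 hij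
      intro k a hk ha ha0 hb
      rcases P2_B2 _ _ h3 with h | ⟨j, hj, h⟩
      · exact absurd (rho_mem_of_meet hb h) hk
      · exact small_lines st hk hj0 hj ha ha0 hb h
    · exact main _ _ (Ch.base i e y h1 h2 h3) hij
  | step i j e y h1 h2 h3 h4 ih =>
    by_cases hij : S.Same i j0
    · exact shiftit i e y h1 hij ih
    · exact main _ _ (Ch.step i j e y h1 h2 h3 h4) hij

theorem newQ_small (st : S.Stage Q H) {k : I} (hk : S.ρ k ∉ S.newH Q H) {a b : G}
    (ha : a ∈ S.L k) (haQ : a ∈ S.newQ Q H) (hb : b ∈ S.L k) (hbQ : b ∈ S.newQ Q H) :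
    12 * T.d a b ≤ 2 * S.ℓ k := by
  obtain ⟨u, hu, h⟩ := newQ_trans haQ
  have hu' := Subgroup.inv_mem _ hu
  have hk' := act_not_mem hk hu'
  have ha' : u⁻¹ * a ∈ S.L (S.act u⁻¹ k) := by rw [S.mem_act]; simpa using ha
  have hb' : u⁻¹ * b ∈ S.L (S.act u⁻¹ k) := by rw [S.mem_act]; simpa using hb
  have hbQ' := newQ_inv st hu' hbQ
  rw [← T.inv u⁻¹, ← S.ℓ_act u⁻¹ k]
  rcases h with h | ⟨j0, hj0, h⟩
  · exact absurd (rho_mem_of_meet ha' h) hk'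
  · rcases hbQ' with (h2 | ⟨j, hj, h2⟩) | ⟨i, h2⟩
    · exact absurd (rho_mem_of_meet hb' h2) hk'
    · exact small_lines st hk' hj0 hj ha' h hb' h2
    · exact small_ch st hj0 h2 _ _ hk' ha' h hb'

variable (T) in
/-- The closed 1-neighbourhood. -/
def thick (Q : Set G) : Set G := {x | ∃ q ∈ Q, T.d q x ≤ 1}

theorem subset_thick (Q : Set G) : Q ⊆ thick T Q := fun x hx => ⟨x, hx, by simp [T.self]⟩

variable (S) in
/-- One step of the windmill construction. -/
theorem stage_step (st : S.Stage Q H) : S.Stage (thick T (S.newQ Q H)) (S.newH Q H) where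
  one := subset_thick _ (Or.inl (Or.inl st.one))
  conv := by
    rintro x ⟨qx, hx, dx⟩ y ⟨qy, hy, dy⟩ z hz
    rcases hz.split qx with h | h
    · refine ⟨qx, hx, ?_⟩
      have := T.comm x qx
      have := T.comm z qx
      unfold B at h; omega
    · rcases h.split qy with h' | h'
      · exact subset_thick _ (newQ_conv st qx hx qy hy z h')
      · refine ⟨qy, hy, ?_⟩
        unfold B at h'; omega
  inv := by
    rintro h hh x ⟨q, hq, d⟩
    exact ⟨h * q, newQ_inv st hh hq, by rwa [T.inv]⟩
  small := by
    rintro k hk a b ha ⟨qa, hqa, da⟩ hb ⟨qb, hqb, db⟩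
    obtain ⟨a0, a1, a2, a3⟩ := T.med qa a b
    obtain ⟨b0, b1, b2, b3⟩ := T.med qb b a0
    have ha0 := S.conv k a ha b hb a0 a2
    have hb0 := S.conv k b hb a0 ha0 b0 b2
    have e1 := T.tri a a0 b
    have e2 := T.tri a0 b0 b
    have e3 := T.comm a0 a
    have e4 : T.d a a0 ≤ 1 := by unfold B at a1; omega
    have e5 : T.d b0 b ≤ 1 := by unfold B at b1; omega
    by_cases h : a0 = b0
    · subst h
      rw [T.self] at e2
      omega
    · have f1 : T.B qa a0 b0 := (a3.subr b2.symm).2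
      have f2 := glue1 f1 b3.symm h
      have f3 := glue2 f1 b3.symm h
      have := newQ_small st hk ha0 (newQ_conv st _ hqa _ hqb _ f2) hb0
        (newQ_conv st _ hqa _ hqb _ f3)
      omega
  good := fun w hw h1 => newH_good st hw h1

variable (S) in
/-- The iterated windmill. -/
def wind : ℕ → Set G × Subgroup G
  | 0 => ({1}, ⊥)
  | n + 1 => (thick T (S.newQ (wind n).1 (wind n).2), S.newH (wind n).1 (wind n).2)

theorem wind_stage (n : ℕ) : S.Stage (S.wind n).1 (S.wind n).2 := by
  induction n with
  | zero =>
    refine ⟨rfl, ?_, ?_, ?_, ?_⟩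
    · rintro x rfl y rfl z hz
      exact hz.eq_self
    · rintro h hh x rfl
      have : h = 1 := hh
      simp [this, wind]
    · rintro i _ a b _ rfl _ rfl
      simp [T.self]
    · intro w hw h1
      exact absurd hw h1
  | succ n ih => exact stage_step S ih

/-- The abstract form of Greendlinger's lemma. -/
theorem greendlinger (hpath : ∀ x : G, x ≠ 1 → ∃ y, T.d 1 y < T.d 1 x ∧ T.d y x ≤ 1)
    {w : G} (hw : w ∈ Subgroup.closure (Set.range S.ρ)) (h1 : w ≠ 1) : S.Good w := by
  have hQ1 : ∀ n, (S.wind n).1 ⊆ (S.wind (n + 1)).1 := fun n x hx =>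
    subset_thick _ (Or.inl (Or.inl hx))
  have hQ : Monotone fun n => (S.wind n).1 := monotone_nat_of_le_succ hQ1
  have hH : Monotone fun n => (S.wind n).2 :=
    monotone_nat_of_le_succ fun n => (le_sup_left : _ ≤ S.newH (S.wind n).1 (S.wind n).2)
  have hball : ∀ n x, T.d 1 x ≤ n → x ∈ (S.wind n).1 := by
    intro n
    induction n with
    | zero =>
      intro x hx
      exact (T.eqz 1 x (by omega)).symm
    | succ n ih =>
      intro x hx
      by_cases hx1 : x = 1
      · rw [hx1]; exact (wind_stage (S := S) (n + 1)).one
      · obtain ⟨y, hy1, hy2⟩ := hpath x hx1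
        exact ⟨y, Or.inl (Or.inl (ih y (by omega))), hy2⟩
  have hle : Subgroup.closure (Set.range S.ρ) ≤ ⨆ n, (S.wind n).2 := by
    rw [Subgroup.closure_le]
    rintro _ ⟨i, rfl⟩
    obtain ⟨x, hx⟩ := S.ne i
    have : S.ρ i ∈ (S.wind (T.d 1 x + 1)).2 := rho_mem_of_meet hx (hball _ x le_rfl)
    exact Subgroup.mem_iSup_of_mem _ this
  obtain ⟨n, hn⟩ := (Subgroup.mem_iSup_of_directed hH.directed_le).1 (hle hw)
  exact (wind_stage n).good w hn h1
end LineSys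

open TreeDist

/-- A periodic, reduced, bi-infinite word. -/
structure PerSeq (α : Type*) where
  σ : ℤ → α × Bool
  ℓ : ℕ
  pos : 0 < ℓ
  per : ∀ i, σ (i + ℓ) = σ i
  red : ∀ i, (σ i).1 = (σ (i + 1)).1 → (σ i).2 = (σ (i + 1)).2

namespace PerSeq
variable {α : Type*} (A : PerSeq α)

/-- The finite segment of length `n` starting at `i`. -/
def seg (i : ℤ) (n : ℕ) : List (α × Bool) := (List.range n).map fun k : ℕ => A.σ (i + k)

@[simp] theorem seg_length (i : ℤ) (n : ℕ) : (A.seg i n).length = n := by simp [seg]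

theorem seg_zero (i : ℤ) : A.seg i 0 = [] := rfl

theorem seg_one (i : ℤ) : A.seg i 1 = [A.σ i] := by simp [seg, List.range_succ]

theorem seg_add (i : ℤ) (m n : ℕ) : A.seg i (m + n) = A.seg i m ++ A.seg (i + m) n := by
  simp only [seg, List.range_add, List.map_append, List.map_map]
  congr 1
  apply List.map_congr_left
  intro k _
  simp [add_assoc]

theorem seg_getElem (i : ℤ) (n k : ℕ) (h : k < (A.seg i n).length) :
    (A.seg i n)[k] = A.σ (i + k) := by
  simp [seg]

theorem seg_isReduced (i : ℤ) (n : ℕ) : FreeGroup.IsReduced (A.seg i n) := by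
  unfold FreeGroup.IsReduced
  rw [List.isChain_iff_getElem]
  intro k hk
  rw [seg_getElem, seg_getElem]
  have := A.red (i + k)
  push_cast
  rw [← add_assoc]
  exact this

theorem per_mul (i k : ℤ) : A.σ (i + k * A.ℓ) = A.σ i := by
  induction k using Int.induction_on with
  | zero => simp
  | succ n ih =>
    rw [← ih, ← A.per (i + n * A.ℓ)]; congr 1; ring
  | pred n ih =>
    rw [← ih, ← A.per (i + (-n - 1) * A.ℓ)]; congr 1; ring

theorem per_mod (i : ℤ) : A.σ (i % A.ℓ) = A.σ i := by
  rw [← A.per_mul (i % A.ℓ) (i / A.ℓ)]; congr 1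
  rw [mul_comm]; exact Int.emod_add_mul_ediv i A.ℓ

/-- The translation element. -/
def ρ : FreeGroup α := FreeGroup.mk (A.seg 0 A.ℓ)

/-- The points of the axis. -/
def π (i : ℤ) : FreeGroup α := A.ρ ^ (i / A.ℓ) * FreeGroup.mk (A.seg 0 (i % A.ℓ).toNat)

theorem π_add_ℓ (i : ℤ) : A.π (i + A.ℓ) = A.ρ * A.π i := by
  have h := A.pos
  unfold π
  rw [Int.add_emod_right, Int.add_ediv_of_dvd_right (dvd_refl _), Int.ediv_self (by omega),
    add_comm, zpow_add]; group

theorem π_add_mul (i e : ℤ) : A.π (i + e * A.ℓ) = A.ρ ^ e * A.π i := by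
  have := A.pos
  unfold π
  rw [Int.add_mul_emod_self_right, Int.add_mul_ediv_right _ _ (by omega), add_comm, zpow_add]; group

theorem π_zero : A.π 0 = 1 := by simp [π, seg_zero, FreeGroup.one_eq_mk]

theorem π_succ (i : ℤ) : A.π (i + 1) = A.π i * FreeGroup.mk [A.σ i] := by
  have hpos := A.pos
  have h1 : 0 ≤ i % A.ℓ := Int.emod_nonneg _ (by omega)
  have h2 : i % A.ℓ < A.ℓ := Int.emod_lt_of_pos _ (by omega)
  have h3 : A.seg 0 ((i % A.ℓ).toNat + 1) = A.seg 0 (i % A.ℓ).toNat ++ [A.σ i] := by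
    rw [seg_add, seg_one, zero_add, Int.toNat_of_nonneg h1, per_mod]
  have h4 := Int.emod_add_mul_ediv i A.ℓ
  by_cases h : i % A.ℓ + 1 = A.ℓ
  · have e1 : (i + 1) = (i / A.ℓ + 1) * A.ℓ := by
      rw [add_mul, mul_comm]; omega
    have e2 : (i + 1) % A.ℓ = 0 := by rw [e1]; simp
    have e3 : (i + 1) / A.ℓ = i / A.ℓ + 1 := by
      rw [e1]; exact Int.mul_ediv_cancel _ (by omega)
    have e4 : (i % A.ℓ).toNat + 1 = A.ℓ := by omega
    rw [e4] at h3
    unfold π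
    rw [e2, e3, mul_assoc, FreeGroup.mul_mk, ← h3, zpow_add, zpow_one]
    simp [seg_zero, ρ, ← FreeGroup.one_eq_mk]
  · have e2 : (i + 1) % A.ℓ = i % A.ℓ + 1 := by
      rw [Int.add_emod, Int.emod_eq_of_lt (a := 1) (by omega) (by omega)]
      exact Int.emod_eq_of_lt (by omega) (by omega)
    have e3 : (i + 1) / A.ℓ = i / A.ℓ := by
      have h5 := Int.emod_add_mul_ediv (i + 1) A.ℓ
      rw [e2] at h5
      have : (A.ℓ : ℤ) * ((i + 1) / A.ℓ) = A.ℓ * (i / A.ℓ) := by linarith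
      exact mul_left_cancel₀ (by omega) this
    unfold π
    rw [e2, e3, mul_assoc, FreeGroup.mul_mk, ← h3]
    congr 3
    omega

theorem π_add (i : ℤ) (n : ℕ) : A.π (i + n) = A.π i * FreeGroup.mk (A.seg i n) := by
  induction n with
  | zero => simp [seg_zero, ← FreeGroup.one_eq_mk]
  | succ n ih =>
    push_cast
    rw [← add_assoc, π_succ, ih, seg_add, seg_one, mul_assoc, FreeGroup.mul_mk]

variable [DecidableEq α]

theorem toWord_π (i : ℤ) (n : ℕ) : ((A.π i)⁻¹ * A.π (i + n)).toWord = A.seg i n := by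
  rw [π_add, inv_mul_cancel_left, mk_toWord_of_isReduced (A.seg_isReduced i n)]

theorem d_π (i j : ℤ) : (freeTree α).d (A.π i) (A.π j) = (j - i).natAbs := by
  have key : ∀ i j : ℤ, i ≤ j → (freeTree α).d (A.π i) (A.π j) = (j - i).natAbs := by
    intro i j h
    obtain ⟨n, rfl⟩ := Int.le.dest h
    change ((A.π i)⁻¹ * A.π (i + n)).norm = _
    rw [FreeGroup.norm, toWord_π]
    simp
  rcases le_total i j with h | h
  · exact key i j h
  · rw [(freeTree α).comm, key j i h]; omega

/-- The translated axis. -/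
def line (g : FreeGroup α) : Set (FreeGroup α) := {x | ∃ i, x = g * A.π i}

theorem line_conv (g : FreeGroup α) : (freeTree α).Conv (A.line g) := by
  have key : ∀ (i : ℤ) (n : ℕ) z, (freeTree α).B (g * A.π i) z (g * A.π (i + n)) →
      z ∈ A.line g := by
    intro i n z hz
    have hz' : (freeTree α).d _ _ + (freeTree α).d _ _ = (freeTree α).d _ _ := hz
    simp only [freeTree] at hz'
    rw [free_btw_iff] at hz'
    have e : (g * A.π i)⁻¹ * (g * A.π (i + n)) = (A.π i)⁻¹ * A.π (i + n) := by group
    rw [e, toWord_π] at hz'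
    set m := ((g * A.π i)⁻¹ * z).toWord.length with hm
    have hmn : m ≤ n := by
      have := congrArg List.length hz'
      rw [seg_length, List.length_append] at this
      omega
    obtain ⟨k, rfl⟩ := Nat.exists_eq_add_of_le hmn
    rw [seg_add] at hz'
    have := (List.append_inj hz' (by simp [hm])).1
    refine ⟨i + m, ?_⟩
    rw [π_add, this, FreeGroup.mk_toWord]; group
  rintro x ⟨i, rfl⟩ y ⟨j, rfl⟩ z hz
  rcases le_total i j with h | h
  · obtain ⟨n, rfl⟩ := Int.le.dest h
    exact key i n z hz
  · obtain ⟨n, rfl⟩ := Int.le.dest h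
    exact key j n z hz.symm

end PerSeq

/-- Small cancellation condition for a family of periodic words. -/
structure SmallCanc {α τ : Type*} (A : τ → PerSeq α) : Prop where
  align : ∀ t t' i i' n, (A t).seg i n = (A t').seg i' n → (A t).ℓ < 12 * n →
    (A t).ℓ = (A t').ℓ ∧ ∀ k : ℤ, (A t).σ (i + k) = (A t').σ (i' + k)
  opp : ∀ t t' i i' n, (A t).seg i n = FreeGroup.invRev ((A t').seg i' n) → 12 * n ≤ (A t).ℓ
  big : ∀ t, 4 ≤ (A t).ℓ

namespace PerSeq
variable {α : Type*} [DecidableEq α]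


theorem π_align {A A' : PerSeq α} {i i' : ℤ} (h : ∀ k : ℤ, A.σ (i + k) = A'.σ (i' + k))
    (k : ℤ) : (A.π i)⁻¹ * A.π (i + k) = (A'.π i')⁻¹ * A'.π (i' + k) := by
  have hs : ∀ (a : ℤ) (n : ℕ), A.seg (i + a) n = A'.seg (i' + a) n := by
    intro a n
    unfold seg
    apply List.map_congr_left
    intro b _
    rw [add_assoc, add_assoc, h]
  rcases le_total 0 k with hk | hk
  · obtain ⟨n, rfl⟩ := Int.eq_ofNat_of_zero_le hk
    rw [π_add, π_add]
    have := hs 0 n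
    simp only [add_zero] at this
    rw [this]; group
  · obtain ⟨n, hn⟩ := Int.eq_ofNat_of_zero_le (neg_nonneg.2 hk)
    have h1 := A.π_add (i + k) n
    have h2 := A'.π_add (i' + k) n
    rw [show i + k + n = i by omega] at h1
    rw [show i' + k + n = i' by omega] at h2
    rw [h1, h2, hs]; group

theorem piece_words {A A' : PerSeq α} {g g' : FreeGroup α} {i j i' j' : ℤ}
    (h1 : g * A.π i = g' * A'.π i') (h2 : g * A.π j = g' * A'.π j') (hij : i ≤ j) :
    ∃ n : ℕ, j = i + n ∧ (A.seg i n = A'.seg i' n ∧ j' = i' + n ∨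
      A.seg i n = FreeGroup.invRev (A'.seg j' n)) := by
  obtain ⟨n, rfl⟩ := Int.le.dest hij
  have hd : (j' - i').natAbs = n := by
    rw [← A'.d_π, ← (freeTree α).inv g', ← h1, ← h2, (freeTree α).inv, A.d_π]; omega
  have e : (A.π i)⁻¹ * A.π (i + n) = (A'.π i')⁻¹ * A'.π j' := by
    have : (g * A.π i)⁻¹ * (g * A.π (i + n)) = (g' * A'.π i')⁻¹ * (g' * A'.π j') := by rw [h1, h2]
    simpa [mul_assoc] using this
  refine ⟨n, rfl, ?_⟩
  rcases le_total i' j' with h | h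
  · left
    have hj : j' = i' + n := by omega
    refine ⟨?_, hj⟩
    rw [← A.toWord_π, ← A'.toWord_π, e, hj]
  · right
    have hj : i' = j' + n := by omega
    rw [← A.toWord_π, e, ← A'.toWord_π, ← FreeGroup.toWord_inv, hj]
    congr 1; group
end PerSeq

/-- The line system attached to a small cancellation family. -/
def lineSys {α τ : Type*} [DecidableEq α] (A : τ → PerSeq α) (hA : SmallCanc A) :
    LineSys (freeTree α) (FreeGroup α × τ) where
  L i := (A i.2).line i.1
  ρ i := i.1 * (A i.2).ρ * i.1⁻¹
  ℓ i := (A i.2).ℓ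
  act g i := (g * i.1, i.2)
  mem_act := by
    rintro g ⟨h, t⟩ x
    constructor
    · rintro ⟨i, rfl⟩
      exact ⟨i, by simp [mul_assoc]⟩
    · rintro ⟨i, hi⟩
      exact ⟨i, by rw [inv_mul_eq_iff_eq_mul] at hi; rw [hi]; simp [mul_assoc]⟩
  ρ_act := by rintro g ⟨h, t⟩; simp only; group
  ℓ_act := by rintro g ⟨h, t⟩; rfl
  conv i := (A i.2).line_conv i.1
  ne i := ⟨_, 0, rfl⟩
  shift := by
    rintro ⟨g, t⟩ x e ⟨i, rfl⟩
    refine ⟨i + e * (A t).ℓ, ?_⟩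
    rw [PerSeq.π_add_mul, conj_zpow]; group
  trans := by
    rintro ⟨g, t⟩ x e ⟨i, rfl⟩ he
    simp only
    rw [conj_zpow, show g * (A t).ρ ^ e * g⁻¹ * (g * (A t).π i)
      = g * (A t).π (i + e * (A t).ℓ) by rw [PerSeq.π_add_mul]; group, (freeTree α).inv,
      PerSeq.d_π, add_sub_cancel_left, Int.natAbs_mul]
    have : 1 ≤ e.natAbs := by omega
    simp only [Int.natAbs_natCast]
    nlinarith
  piece := by
    rintro ⟨g, t⟩ ⟨g', t'⟩
    by_contra hcon
    rw [not_or] at hcon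
    obtain ⟨hcon1, hcon2⟩ := hcon
    apply hcon1
    simp only at hcon2 ⊢
    push Not at hcon2
    obtain ⟨x, y, ⟨i, hi⟩, ⟨i', hi'⟩, ⟨j, hj⟩, ⟨j', hj'⟩, hlt⟩ := hcon2
    have main : ∃ a a' : ℤ, g * (A t).π a = g' * (A t').π a' ∧ (A t).ℓ = (A t').ℓ ∧
        ∀ k : ℤ, (A t).σ (a + k) = (A t').σ (a' + k) := by
      have hd : (freeTree α).d x y = (j - i).natAbs := by
        rw [hi, hj, (freeTree α).inv, PerSeq.d_π]
      rcases le_total i j with h | h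
      · obtain ⟨n, hn, ⟨h1, h2⟩ | h1⟩ := PerSeq.piece_words (hi.symm.trans hi')
          (hj.symm.trans hj') h
        · exact ⟨i, i', hi.symm.trans hi', hA.align t t' i i' n h1 (by omega)⟩
        · have := hA.opp t t' i j' n h1; omega
      · obtain ⟨n, hn, ⟨h1, h2⟩ | h1⟩ := PerSeq.piece_words (hj.symm.trans hj')
          (hi.symm.trans hi') h
        · exact ⟨j, j', hj.symm.trans hj', hA.align t t' j j' n h1 (by omega)⟩
        · have := hA.opp t t' j i' n h1; omega
    obtain ⟨a, a', h1, h2, h3⟩ := main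
    have h4 : ∀ k, g * (A t).π (a + k) = g' * (A t').π (a' + k) := by
      intro k
      have := PerSeq.π_align h3 k
      rw [inv_mul_eq_iff_eq_mul] at this
      rw [this, ← mul_assoc, ← mul_assoc, h1]; group
    constructor
    · have h5 := h4 (A t).ℓ
      rw [PerSeq.π_add_ℓ, h2, PerSeq.π_add_ℓ] at h5
      have : g * (A t).ρ * g⁻¹ = g' * (A t').ρ * g'⁻¹ := by
        have h6 : (g * (A t).ρ * g⁻¹) * (g * (A t).π a) = (g' * (A t').ρ * g'⁻¹) * (g' * (A t').π a')
        := by simpa [mul_assoc] using h5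
        rw [h1] at h6
        exact mul_right_cancel h6
      rw [this]
    · ext z
      constructor
      · rintro ⟨b, rfl⟩
        refine ⟨a' + (b - a), ?_⟩
        rw [← h4]; congr 2; ring
      · rintro ⟨b, rfl⟩
        refine ⟨a + (b - a'), ?_⟩
        rw [h4]; congr 2; ring
  big i := hA.big i.2

/-- Greendlinger's lemma for words. -/
theorem greendlinger_words {α τ : Type*} [DecidableEq α] {A : τ → PerSeq α} (hA : SmallCanc A)
    {w : FreeGroup α} (hw : w ∈ Subgroup.normalClosure (Set.range fun t => (A t).ρ)) (h1 : w ≠ 1) :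
    ∃ t i n, 9 * (A t).ℓ ≤ 12 * n + 24 ∧
      ((A t).seg i n <:+: w.toWord ∨ FreeGroup.invRev ((A t).seg i n) <:+: w.toWord) := by
  have hcl : Subgroup.normalClosure (Set.range fun t => (A t).ρ)
      ≤ Subgroup.closure (Set.range (lineSys A hA).ρ) := by
    rw [Subgroup.normalClosure, Subgroup.closure_le]
    intro x hx
    apply Subgroup.subset_closure
    rw [Group.mem_conjugatesOfSet_iff] at hx
    obtain ⟨_, ⟨t, rfl⟩, hx⟩ := hx
    rw [isConj_iff] at hx
    obtain ⟨c, rfl⟩ := hx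
    exact ⟨(c, t), rfl⟩
  have hpath : ∀ x : FreeGroup α, x ≠ 1 → ∃ y, (freeTree α).d 1 y < (freeTree α).d 1 x ∧
      (freeTree α).d y x ≤ 1 := by
    intro x hx
    have hne : x.toWord ≠ [] := by rwa [Ne, FreeGroup.toWord_eq_nil_iff]
    have hsplit := List.dropLast_append_getLast hne
    refine ⟨FreeGroup.mk x.toWord.dropLast, ?_, ?_⟩
    · simp only [freeTree, inv_one, one_mul]
      refine lt_of_le_of_lt FreeGroup.norm_mk_le ?_
      rw [FreeGroup.norm, List.length_dropLast]
      have := List.length_pos_of_ne_nil hne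
      omega
    · simp only [freeTree]
      have : (FreeGroup.mk x.toWord.dropLast)⁻¹ * x = FreeGroup.mk [x.toWord.getLast hne] := by
        rw [inv_mul_eq_iff_eq_mul, FreeGroup.mul_mk, hsplit, FreeGroup.mk_toWord]
      rw [this]
      exact FreeGroup.norm_mk_le
  obtain ⟨⟨g, t⟩, p, s, ⟨i, hp⟩, ⟨j, hs⟩, b1, b2, hlen⟩ :=
    LineSys.greendlinger hpath (hcl hw) h1
  have b1' : (freeTree α).d _ _ + (freeTree α).d _ _ = (freeTree α).d _ _ := b1
  have b2' : (freeTree α).d _ _ + (freeTree α).d _ _ = (freeTree α).d _ _ := b2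
  simp only [freeTree] at b1' b2'
  rw [free_btw_iff] at b1' b2'
  have hinf : (p⁻¹ * s).toWord <:+: w.toWord := by
    rw [inv_one, one_mul, one_mul] at b1'
    rw [b1', b2']
    exact ⟨_, _, by rw [List.append_assoc]⟩
  have hd : (freeTree α).d p s = (j - i).natAbs := by
    rw [hp, hs, (freeTree α).inv, PerSeq.d_π]
  have hlen' : 9 * (A t).ℓ ≤ 12 * (freeTree α).d p s + 24 := hlen
  have hps : p⁻¹ * s = ((A t).π i)⁻¹ * (A t).π j := by
    rw [hp, hs]; simp [mul_assoc]
  rw [hps] at hinf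
  rcases le_total i j with h | h
  · obtain ⟨n, rfl⟩ := Int.le.dest h
    refine ⟨t, i, n, by omega, Or.inl ?_⟩
    rwa [PerSeq.toWord_π] at hinf
  · obtain ⟨n, rfl⟩ := Int.le.dest h
    refine ⟨t, j, n, by omega, Or.inr ?_⟩
    rwa [← (A t).toWord_π, ← FreeGroup.toWord_inv, mul_inv_rev, inv_inv]

namespace PerSeq
variable {α : Type*}

/-- The periodic word with a given list as period. -/
def ofList (w : List (α × Bool)) (hne : w ≠ []) (hr : FreeGroup.IsReduced (w ++ w)) :
    PerSeq α where
  σ i := w[(i % w.length).toNat]'(by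
    have := List.length_pos_of_ne_nil hne
    have h1 : 0 ≤ i % w.length := Int.emod_nonneg _ (by omega)
    have h2 : i % w.length < w.length := Int.emod_lt_of_pos _ (by omega)
    omega)
  ℓ := w.length
  pos := List.length_pos_of_ne_nil hne
  per i := by simp
  red i := by
    have := List.length_pos_of_ne_nil hne
    have h1 : 0 ≤ i % w.length := Int.emod_nonneg _ (by omega)
    have h2 : i % w.length < w.length := Int.emod_lt_of_pos _ (by omega)
    unfold FreeGroup.IsReduced at hr
    rw [List.isChain_iff_getElem] at hr
    have h3 := hr (i % w.length).toNat (by rw [List.length_append]; omega)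
    rw [List.getElem_append_left (by omega)] at h3
    by_cases h : i % w.length + 1 = w.length
    · have e : (i + 1) % w.length = 0 := by
        rw [Int.add_emod]
        by_cases hw : w.length = 1
        · rw [hw]; simp
        · rw [Int.emod_eq_of_lt (a := 1) (by omega) (by omega), h]; simp
      rw [List.getElem_append_right (by omega)] at h3
      simp only [e]
      convert h3 using 3 <;> congr 1 <;> omega
    · have e : (i + 1) % w.length = i % w.length + 1 := by
        rw [Int.add_emod, Int.emod_eq_of_lt (a := 1) (by omega) (by omega)]
        exact Int.emod_eq_of_lt (by omega) (by omega)
      rw [List.getElem_append_left (by omega)] at h3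
      simp only [e]
      convert h3 using 3 <;> congr 1 <;> omega

theorem ofList_seg (w : List (α × Bool)) (hne : w ≠ []) (hr : FreeGroup.IsReduced (w ++ w)) :
    (ofList w hne hr).seg 0 w.length = w := by
  apply List.ext_getElem
  · simp
  · intro k h1 h2
    rw [seg_getElem]
    simp only [ofList, zero_add]
    congr 1
    rw [Int.emod_eq_of_lt (by omega) (by omega)]; simp

theorem seg_per (A : PerSeq α) (i : ℤ) (n : ℕ) : A.seg (i + A.ℓ) n = A.seg i n := by
  unfold seg
  apply List.map_congr_left
  intro k _
  rw [← A.per (i + k)]; congr 1; ring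

theorem seg_congr_mod (A : PerSeq α) {i j : ℤ} (h : (A.ℓ : ℤ) ∣ i - j) (k : ℤ) :
    A.σ (i + k) = A.σ (j + k) := by
  obtain ⟨q, hq⟩ := h
  rw [← A.per_mul (j + k) q]; congr 1; linarith

end PerSeq

/-- Block data for a periodic word made of blocks `X k ++ y ^ (e k)`. -/
structure BD (α : Type*) where
  N : ℕ
  X : ℕ → List (α × Bool)
  e : ℕ → ℕ
  y : α
  N_pos : 0 < N
  hX : ∀ k, X k ≠ []
  hy : ∀ k, ∀ l ∈ X k, l.1 ≠ y
  he : ∀ k, 1 ≤ e k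
  hred : ∀ k, FreeGroup.IsReduced (X k)
  perX : ∀ k, X (k + N) = X k
  perE : ∀ k, e (k + N) = e k

namespace BD
variable {α : Type*} (D : BD α)

/-- The `k`-th block. -/
def blk (k : ℕ) : List (α × Bool) := D.X k ++ List.replicate (D.e k) (D.y, true)

/-- Block starting positions. -/
def S : ℕ → ℕ
  | 0 => 0
  | k + 1 => S k + ((D.X k).length + D.e k)

/-- The first `K` blocks. -/
def word (K : ℕ) : List (α × Bool) := (List.range K).flatMap D.blk

theorem S_succ (k : ℕ) : D.S (k + 1) = D.S k + ((D.X k).length + D.e k) := rfl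

theorem blk_len (k : ℕ) : (D.blk k).length = (D.X k).length + D.e k := by simp [blk]

theorem word_succ (K : ℕ) : D.word (K + 1) = D.word K ++ D.blk K := by
  simp [word, List.range_succ, List.flatMap_append]

theorem word_len (K : ℕ) : (D.word K).length = D.S K := by
  induction K with
  | zero => rfl
  | succ K ih => rw [word_succ, List.length_append, ih, blk_len, S_succ]

theorem blk_per (k : ℕ) : D.blk (D.N + k) = D.blk k := by
  unfold blk
  rw [add_comm, D.perX, D.perE]

theorem word_add (K : ℕ) : D.word (D.N + K) = D.word D.N ++ D.word K := by
  induction K with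
  | zero => simp [word]
  | succ K ih => rw [← add_assoc, word_succ, ih, word_succ, blk_per, List.append_assoc]

theorem S_add (K : ℕ) : D.S (D.N + K) = D.S D.N + D.S K := by
  rw [← word_len, word_add, List.length_append, word_len, word_len]

theorem S_add_mul (k q : ℕ) : D.S (k + q * D.N) = D.S k + q * D.S D.N := by
  induction q with
  | zero => simp
  | succ q ih =>
    rw [show k + (q + 1) * D.N = D.N + (k + q * D.N) by ring, S_add, ih]; ring

theorem X_len_pos (k : ℕ) : 0 < (D.X k).length := List.length_pos_of_ne_nil (D.hX k)

theorem S_lt (k : ℕ) : D.S k + 2 ≤ D.S (k + 1) := by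
  have := D.X_len_pos k
  have := D.he k
  rw [S_succ]; omega

theorem S_mono : StrictMono D.S := strictMono_nat_of_lt_succ fun k => by
  have := D.S_lt k; omega

theorem le_S (k : ℕ) : k ≤ D.S k := D.S_mono.id_le k

theorem blk_red (k : ℕ) : FreeGroup.IsReduced (D.blk k) := by
  unfold blk FreeGroup.IsReduced
  rw [List.isChain_append]
  refine ⟨D.hred k, List.isChain_replicate_of_rel _ (fun _ => rfl), ?_⟩
  intro x hx y hy h
  exfalso
  have h1 := D.hy k x (List.mem_of_mem_getLast? hx)
  have h2 := List.eq_of_mem_replicate (List.mem_of_mem_head? hy)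
  rw [h2] at h
  exact h1 h

theorem word_last (K : ℕ) : ∀ x ∈ (D.word K).getLast?, x.1 = D.y := by
  intro x hx
  cases K with
  | zero => simp [word] at hx
  | succ K =>
    rw [word_succ, blk, ← List.append_assoc] at hx
    have h1 := D.he K
    rw [List.getLast?_append_of_ne_nil _ (by simp; omega)] at hx
    rw [List.eq_of_mem_replicate (List.mem_of_mem_getLast? hx)]

theorem word_red (K : ℕ) : FreeGroup.IsReduced (D.word K) := by
  induction K with
  | zero => exact FreeGroup.IsReduced.nil
  | succ K ih =>
    rw [word_succ]
    unfold FreeGroup.IsReduced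
    rw [List.isChain_append]
    refine ⟨ih, D.blk_red K, ?_⟩
    intro x hx y hy h
    exfalso
    have h1 := D.word_last K x hx
    rw [blk, List.head?_append_of_ne_nil _ (D.hX K)] at hy
    exact D.hy K y (List.mem_of_mem_head? hy) (h ▸ h1)

/-- The periodic word. -/
def seq : PerSeq α := PerSeq.ofList (D.word D.N)
  (by
    intro h
    have h1 := D.word_len D.N
    have h2 := D.le_S D.N
    have h3 := D.N_pos
    rw [h] at h1
    simp at h1
    omega)
  (by rw [← word_add]; exact D.word_red _)

theorem seq_ℓ : D.seq.ℓ = D.S D.N := D.word_len D.N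

theorem seq_ρ : D.seq.ρ = FreeGroup.mk (D.word D.N) := by
  unfold PerSeq.ρ
  congr 1
  exact PerSeq.ofList_seg _ _ _

theorem seg_S (K : ℕ) : D.seq.seg 0 (D.S K) = D.word K := by
  induction K using Nat.strong_induction_on with
  | _ K ih =>
    have h0 : D.seq.seg 0 (D.S D.N) = D.word D.N := by
      rw [← word_len]; exact PerSeq.ofList_seg _ _ _
    by_cases hK : K < D.N
    · obtain ⟨c, hc⟩ := Nat.exists_eq_add_of_le (D.S_mono hK).le
      rw [hc, PerSeq.seg_add] at h0
      have hp : D.word K <+: D.word D.N := by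
        obtain ⟨j, hj⟩ : ∃ j, D.N = K + j := ⟨D.N - K, by omega⟩
        unfold word
        rw [hj, List.range_add, List.flatMap_append]
        exact List.prefix_append _ _
      have hq : D.seq.seg 0 (D.S K) <+: D.word D.N := by rw [← h0]; exact List.prefix_append _ _
      rcases List.prefix_or_prefix_of_prefix hp hq with h | h
      · exact (h.eq_of_length (by simp [word_len])).symm
      · exact h.eq_of_length (by simp [word_len])
    · obtain ⟨c, rfl⟩ := Nat.exists_eq_add_of_le (not_lt.1 hK)
      have hN := D.N_pos
      rw [S_add, PerSeq.seg_add, h0, word_add, ← ih c (by omega), ← D.seq_ℓ, D.seq.seg_per]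

theorem seg_blk (k : ℕ) : D.seq.seg (D.S k) ((D.X k).length + D.e k) = D.blk k := by
  have h1 := D.seg_S (k + 1)
  rw [S_succ, PerSeq.seg_add, seg_S, word_succ, zero_add] at h1
  exact List.append_cancel_left h1

theorem σ_X {k j : ℕ} (h : j < (D.X k).length) : D.seq.σ ((D.S k + j : ℕ) : ℤ) = (D.X k)[j] := by
  have h1 := D.seg_blk k
  have h2 := D.seq.seg_getElem (D.S k) ((D.X k).length + D.e k) j (by simp; omega)
  push_cast
  rw [← h2]
  simp only [h1, blk]
  rw [List.getElem_append_left h]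

theorem σ_y {k j : ℕ} (h1 : D.S k + (D.X k).length ≤ j) (h2 : j < D.S (k + 1)) :
    D.seq.σ (j : ℤ) = (D.y, true) := by
  rw [S_succ] at h2
  obtain ⟨c, rfl⟩ := Nat.exists_eq_add_of_le h1
  have h3 := D.seg_blk k
  have h4 := D.seq.seg_getElem (D.S k) ((D.X k).length + D.e k) ((D.X k).length + c)
    (by simp; omega)
  push_cast at h4 ⊢
  rw [add_assoc, ← h4]
  simp only [h3, blk]
  rw [List.getElem_append_right (by omega)]
  simp

theorem σ_ne {k j : ℕ} (h1 : D.S k ≤ j) (h2 : j < D.S k + (D.X k).length) :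
    (D.seq.σ (j : ℤ)).1 ≠ D.y := by
  obtain ⟨c, rfl⟩ := Nat.exists_eq_add_of_le h1
  have h3 : c < (D.X k).length := by omega
  rw [D.σ_X h3]
  exact D.hy k _ (List.getElem_mem _)

theorem locate (j : ℕ) : ∃ k, D.S k ≤ j ∧ j < D.S (k + 1) := by
  classical
  have hex : ∃ k, j < D.S k := ⟨j + 1, D.le_S (j + 1)⟩
  have h1 := Nat.find_spec hex
  have h2 : Nat.find hex ≠ 0 := by
    intro h
    rw [h] at h1
    exact absurd h1 (by simp [S])
  obtain ⟨k, hk⟩ := Nat.exists_eq_succ_of_ne_zero h2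
  refine ⟨k, ?_, by rw [hk] at h1; exact h1⟩
  by_contra h
  exact Nat.find_min hex (m := k) (by omega) (by omega)

/-- Decoding a maximal run of `y`. -/
theorem decode {a b : ℕ} (hab : a + 1 < b) (h1 : (D.seq.σ (a : ℤ)).1 ≠ D.y)
    (h2 : ∀ j : ℕ, a < j → j < b → (D.seq.σ (j : ℤ)).1 = D.y) (h3 : (D.seq.σ (b : ℤ)).1 ≠ D.y) :
    ∃ k, a + 1 = D.S k + (D.X k).length ∧ b = D.S (k + 1) := by
  obtain ⟨k, hk1, hk2⟩ := D.locate (a + 1)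
  have e1 : D.S k + (D.X k).length ≤ a + 1 := by
    by_contra h
    exact D.σ_ne hk1 (not_le.1 h) (h2 (a + 1) (by omega) hab)
  have e2 : a + 1 = D.S k + (D.X k).length := by
    by_contra h
    exact h1 (by rw [D.σ_y (k := k) (by omega) (by omega)])
  refine ⟨k, e2, ?_⟩
  rcases lt_trichotomy b (D.S (k + 1)) with h | h | h
  · exact absurd (by rw [D.σ_y (k := k) (by omega) h]) h3
  · exact h
  · have := D.X_len_pos (k + 1)
    exact absurd (h2 _ (by omega) h) (D.σ_ne (k := k + 1) le_rfl (by omega))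

/-- Decoding two consecutive runs. -/
theorem decode2 {a b c d : ℕ} (hab : a + 1 < b) (hbc : b < c) (hcd : c < d)
    (h1 : (D.seq.σ (a : ℤ)).1 ≠ D.y)
    (h2 : ∀ j : ℕ, a < j → j < b → (D.seq.σ (j : ℤ)).1 = D.y)
    (h3 : ∀ j : ℕ, b ≤ j → j < c → (D.seq.σ (j : ℤ)).1 ≠ D.y)
    (h4 : ∀ j : ℕ, c ≤ j → j < d → (D.seq.σ (j : ℤ)).1 = D.y)
    (h5 : (D.seq.σ (d : ℤ)).1 ≠ D.y) :
    ∃ k, a + 1 = D.S k + (D.X k).length ∧ b = D.S (k + 1) ∧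
      c = D.S (k + 1) + (D.X (k + 1)).length ∧ d = D.S (k + 2) := by
  obtain ⟨k, hk1, hk2⟩ := D.decode hab h1 h2 (h3 b le_rfl hbc)
  obtain ⟨k', hk3, hk4⟩ := D.decode (a := c - 1) (b := d) (by omega)
    (h3 (c - 1) (by omega) (by omega)) (fun j hj1 hj2 => h4 j (by omega) hj2) h5
  have e1 := D.σ_y (k := k + 1) (j := D.S (k + 1) + (D.X (k + 1)).length) le_rfl
    (by rw [D.S_succ (k + 1)]; have := D.he (k + 1); omega)
  have e2 : c ≤ D.S (k + 1) + (D.X (k + 1)).length := by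
    by_contra h
    exact h3 _ (by omega) (not_le.1 h) (by rw [e1])
  have e3 : D.S k' < D.S (k + 2) := by
    have : D.S (k + 1) + (D.X (k + 1)).length ≤ D.S (k + 2) := by
      rw [D.S_succ (k + 1)]; omega
    have := D.X_len_pos k'
    omega
  have e4 : D.S (k + 1) < D.S (k' + 1) := by omega
  have e5 : k' = k + 1 := by
    have := D.S_mono.lt_iff_lt.1 e3
    have := D.S_mono.lt_iff_lt.1 e4
    omega
  subst e5
  exact ⟨k, hk1, hk2, by omega, hk4⟩

end BD

namespace BD
variable {α : Type*}

/-- Short windows are at most a twelfth of the period. -/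
structure Wd (D : BD α) : Prop where
  hN : 3 ≤ D.N
  hS : ∀ k, 12 * D.S (k + 5) ≤ 12 * D.S k + D.S D.N

theorem mod_succ_of_zero {a N : ℕ} (hN : 3 ≤ N) (h : a % N = 0) :
    (a + 1) % N ≠ 0 ∧ (a + 2) % N ≠ 0 := by
  constructor
  · rw [Nat.add_mod, h, Nat.mod_eq_of_lt (a := 1) (by omega), zero_add,
      Nat.mod_eq_of_lt (by omega)]; omega
  · rw [Nat.add_mod, h, Nat.mod_eq_of_lt (a := 2) (by omega), zero_add,
      Nat.mod_eq_of_lt (by omega)]; omega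

theorem window {D : BD α} (hD : D.Wd) (i n : ℕ) (hn : D.seq.ℓ < 12 * n) :
    ∃ k, k % D.N ≠ 0 ∧ (k + 1) % D.N ≠ 0 ∧ i < D.S k ∧ D.S (k + 2) < i + n := by
  obtain ⟨k0, h1, h2⟩ := D.locate i
  rw [seq_ℓ] at hn
  have h3 := hD.hS k0
  have main : ∀ k, k0 + 1 ≤ k → k ≤ k0 + 3 → i < D.S k ∧ D.S (k + 2) < i + n := by
    intro k hk1 hk2
    have e1 := D.S_mono.monotone hk1
    have e2 := D.S_mono.monotone (show k + 2 ≤ k0 + 5 by omega)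
    omega
  by_cases c1 : (k0 + 1) % D.N = 0
  · obtain ⟨c2, c3⟩ := mod_succ_of_zero hD.hN c1
    exact ⟨k0 + 2, c2, c3, main _ (by omega) (by omega)⟩
  · by_cases c2 : (k0 + 2) % D.N = 0
    · obtain ⟨c3, c4⟩ := mod_succ_of_zero hD.hN c2
      exact ⟨k0 + 3, c3, c4, main _ (by omega) (by omega)⟩
    · exact ⟨k0 + 1, c1, c2, main _ (by omega) (by omega)⟩

theorem seg_eq_iff {A A' : PerSeq α} {i i' : ℤ} {n : ℕ} :
    A.seg i n = A'.seg i' n ↔ ∀ j : ℕ, j < n → A.σ (i + j) = A'.σ (i' + j) := by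
  unfold PerSeq.seg
  rw [List.map_inj_left]
  simp

theorem compare {D D' : BD α} (hD : D.Wd) (hy : D.y = D'.y) {i i' n : ℕ}
    (hn : D.seq.ℓ < 12 * n)
    (h : ∀ j : ℕ, j < n → D.seq.σ ((i + j : ℕ) : ℤ) = D'.seq.σ ((i' + j : ℕ) : ℤ)) :
    ∃ k k', k % D.N ≠ 0 ∧ (k + 1) % D.N ≠ 0 ∧ D.e k = D'.e k' ∧ D.e (k + 1) = D'.e (k' + 1) ∧
      D.X (k + 1) = D'.X (k' + 1) ∧ D.S (k + 1) + i' = D'.S (k' + 1) + i := by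
  obtain ⟨k, c1, c2, c3, c4⟩ := window hD i n hn
  have hX0 := D.X_len_pos k
  have hX1 := D.X_len_pos (k + 1)
  have hX2 := D.X_len_pos (k + 2)
  have he0 := D.he k
  have he1 := D.he (k + 1)
  have s1 := D.S_succ k
  have s2 := D.S_succ (k + 1)
  rw [show k + 1 + 1 = k + 2 by ring] at s2
  have tr : ∀ q : ℕ, i ≤ q → q < i + n →
      D'.seq.σ ((q - i + i' : ℕ) : ℤ) = D.seq.σ (q : ℤ) := by
    intro q h1 h2
    have := h (q - i) (by omega)
    rw [show i + (q - i) = q by omega, show i' + (q - i) = q - i + i' by omega] at this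
    exact this.symm
  have tr' : ∀ q : ℕ, i' ≤ q → q < i' + n →
      D'.seq.σ (q : ℤ) = D.seq.σ ((q - i' + i : ℕ) : ℤ) := by
    intro q h1 h2
    have := h (q - i') (by omega)
    rw [show i + (q - i') = q - i' + i by omega, show i' + (q - i') = q by omega] at this
    exact this.symm
  obtain ⟨k', d1, d2, d3, d4⟩ := D'.decode2 (a := D.S k + (D.X k).length - 1 - i + i')
    (b := D.S (k + 1) - i + i') (c := D.S (k + 1) + (D.X (k + 1)).length - i + i')
    (d := D.S (k + 2) - i + i') (by omega) (by omega) (by omega)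
    (by
      rw [tr _ (by omega) (by omega), ← hy]
      exact D.σ_ne (k := k) (by omega) (by omega))
    (by
      intro j h1 h2
      rw [tr' _ (by omega) (by omega), ← hy, D.σ_y (k := k) (by omega) (by omega)])
    (by
      intro j h1 h2
      rw [tr' _ (by omega) (by omega), ← hy]
      exact D.σ_ne (k := k + 1) (by omega) (by omega))
    (by
      intro j h1 h2
      rw [tr' _ (by omega) (by omega), ← hy, 
        D.σ_y (k := k + 1) (by omega) (by rw [show k + 1 + 1 = k + 2 by ring]; omega)])
    (by
      rw [tr _ (by omega) (by omega), ← hy]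
      exact D.σ_ne (k := k + 2) (by omega) (by omega))
  have t1 := D'.S_succ k'
  have t2 := D'.S_succ (k' + 1)
  rw [show k' + 1 + 1 = k' + 2 by ring] at t2
  refine ⟨k, k', c1, c2, by omega, by omega, ?_, by omega⟩
  apply List.ext_getElem
  · omega
  · intro j h1 h2
    rw [← D.σ_X h1, ← D'.σ_X h2, ← tr _ (by omega) (by omega)]
    congr 2
    omega

/-- Negative letters only occur at the beginning of a period. -/
def SG (D : BD α) : Prop :=
  ∀ k j (h : j < (D.X k).length), ((D.X k)[j]).2 = false → j = 0 ∧ k % D.N = 0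

end BD

/-- Negative letters of a periodic word only occur at the beginning of a period. -/
def PerSeq.Sg {α : Type*} (A : PerSeq α) : Prop := ∀ i : ℤ, (A.σ i).2 = false → (A.ℓ : ℤ) ∣ i

theorem BD.SG.sg {α : Type*} {D : BD α} (h : D.SG) : D.seq.Sg := by
  have key : ∀ i : ℕ, (D.seq.σ (i : ℤ)).2 = false → D.seq.ℓ ∣ i := by
    intro i hi
    obtain ⟨k, h1, h2⟩ := D.locate i
    by_cases hc : D.S k + (D.X k).length ≤ i
    · rw [D.σ_y hc h2] at hi
      exact absurd hi (by simp)
    · obtain ⟨j, rfl⟩ := Nat.exists_eq_add_of_le h1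
      rw [D.σ_X (by omega)] at hi
      obtain ⟨e1, e2⟩ := h k j _ hi
      subst e1
      obtain ⟨q, hq⟩ := Nat.dvd_of_mod_eq_zero e2
      have := D.S_add_mul 0 q
      rw [zero_add, mul_comm q D.N, ← hq] at this
      rw [this, D.seq_ℓ]
      simp [BD.S]
  intro i hi
  have hpos := D.seq.pos
  rw [← D.seq.per_mod] at hi
  have h1 : 0 ≤ i % D.seq.ℓ := Int.emod_nonneg _ (by omega)
  obtain ⟨n, hn⟩ := Int.eq_ofNat_of_zero_le h1
  rw [hn] at hi
  have h2 := key n hi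
  have : (D.seq.ℓ : ℤ) ∣ i % D.seq.ℓ := by rw [hn]; exact_mod_cast h2
  exact (Int.dvd_iff_emod_eq_zero).2 (by simpa using Int.emod_eq_zero_of_dvd this)

theorem PerSeq.opp_aux {α : Type*} {A A' : PerSeq α} (h : A.Sg) (h' : A'.Sg) (hb : 24 ≤ A.ℓ)
    (hb' : 24 ≤ A'.ℓ) {i i' : ℤ} {n : ℕ} (he : A.seg i n = FreeGroup.invRev (A'.seg i' n)) :
    12 * n ≤ A.ℓ := by
  by_contra hlt
  have hn : 3 ≤ n := by omega
  have key : ∀ j : ℕ, j < n → (A.σ (i + j)).2 = !(A'.σ (i' + (n - 1 - j : ℕ))).2 := by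
    intro j hj
    rw [← A.seg_getElem i n j (by simpa using hj),
      ← A'.seg_getElem i' n (n - 1 - j) (by simp; omega)]
    simp [he, FreeGroup.invRev]
  have k0 := key 0 (by omega)
  have k1 := key 1 (by omega)
  have k2 := key 2 (by omega)
  have f : ∀ (B : PerSeq α), B.Sg → 24 ≤ B.ℓ → ∀ a b : ℤ, a < b → b < a + 3 →
      (B.σ a).2 = true ∨ (B.σ b).2 = true := by
    intro B hB hl a b h1 h2
    by_contra hc
    rw [not_or, Bool.not_eq_true, Bool.not_eq_true] at hc
    have d := dvd_sub (hB _ hc.2) (hB _ hc.1)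
    have := Int.le_of_dvd (by omega) d
    omega
  have g1 := f A h hb (i + (0 : ℕ)) (i + (1 : ℕ)) (by simp) (by push_cast; omega)
  have g2 := f A h hb (i + (0 : ℕ)) (i + (2 : ℕ)) (by simp) (by push_cast; omega)
  have g3 := f A h hb (i + (1 : ℕ)) (i + (2 : ℕ)) (by simp) (by push_cast; omega)
  have g4 := f A' h' hb' (i' + (n - 1 - 1 : ℕ)) (i' + (n - 1 - 0 : ℕ)) (by omega) (by omega)
  have g5 := f A' h' hb' (i' + (n - 1 - 2 : ℕ)) (i' + (n - 1 - 0 : ℕ)) (by omega) (by omega)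
  have g6 := f A' h' hb' (i' + (n - 1 - 2 : ℕ)) (i' + (n - 1 - 1 : ℕ)) (by omega) (by omega)
  rw [k0, k1] at g1
  rw [k0, k2] at g2
  rw [k1, k2] at g3
  revert g1 g2 g3 g4 g5 g6
  generalize (A'.σ (i' + (n - 1 - 0 : ℕ))).2 = x
  generalize (A'.σ (i' + (n - 1 - 1 : ℕ))).2 = y
  generalize (A'.σ (i' + (n - 1 - 2 : ℕ))).2 = z
  revert x y z
  decide

namespace BD
variable {α : Type*}

/-- Block data of `chainProd`. -/
def chain (lo : ℕ) (x y : α) (h : x ≠ y) : BD α where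
  N := 1000
  X _ := [(x, true)]
  e k := (lo + k % 1000 + 1) ^ 2
  y := y
  N_pos := by norm_num
  hX _ := by simp
  hy _ := by simpa using h
  he _ := Nat.one_le_pow _ _ (by omega)
  hred _ := FreeGroup.IsReduced.singleton
  perX _ := rfl
  perE k := by simp

theorem chain_S_bound {lo : ℕ} {x y : α} (h : x ≠ y) (K : ℕ) (hK : K ≤ 1000) :
    K ^ 3 + 3 * lo ^ 2 * K + K ≤ 3 * (chain lo x y h).S K := by
  induction K with
  | zero => simp
  | succ K ih =>
    have := ih (by omega)
    rw [S_succ]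
    have e1 : ((chain lo x y h).X K).length = 1 := rfl
    have e2 : (chain lo x y h).e K = (lo + K + 1) ^ 2 := by
      show (lo + K % 1000 + 1) ^ 2 = _
      rw [Nat.mod_eq_of_lt (by omega)]
    rw [e1, e2]
    generalize (chain lo x y h).S K = s at *
    have h0 : 0 ≤ lo * K := Nat.zero_le _
    ring_nf at this ⊢
    nlinarith

theorem chain_e_le {lo : ℕ} {x y : α} (h : x ≠ y) (k : ℕ) :
    (chain lo x y h).e k ≤ (lo + 1000) ^ 2 := by
  simp only [chain]
  have := Nat.mod_lt k (show 0 < 1000 by norm_num)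
  exact Nat.pow_le_pow_left (by omega) 2

theorem chain_S_le {lo : ℕ} {x y : α} (h : x ≠ y) (k : ℕ) :
    (chain lo x y h).S (k + 1) ≤ (chain lo x y h).S k + ((lo + 1000) ^ 2 + 1) := by
  rw [S_succ]
  have := chain_e_le (lo := lo) h k
  have e : ((chain lo x y h).X k).length = 1 := rfl
  omega

theorem chain_ℓ {lo : ℕ} {x y : α} (h : x ≠ y) :
    1000 ^ 3 + 3000 * lo ^ 2 + 1000 ≤ 3 * (chain lo x y h).S 1000 := by
  have := chain_S_bound (lo := lo) h 1000 le_rfl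
  linarith

theorem chain_ℓ60 {lo : ℕ} {x y : α} (h : x ≠ y) :
    60 * ((lo + 1000) ^ 2 + 1) ≤ (chain lo x y h).S 1000 := by
  have h1 := chain_ℓ (lo := lo) h
  have : 3 * (60 * ((lo + 1000) ^ 2 + 1)) ≤ 1000 ^ 3 + 3000 * lo ^ 2 + 1000 := by
    zify
    nlinarith [sq_nonneg ((lo : ℤ) - 64)]
  omega

theorem chain_wd {lo : ℕ} {x y : α} (h : x ≠ y) : (chain lo x y h).Wd where
  hN := by simp [chain]
  hS k := by
    have h0 := chain_ℓ60 (lo := lo) h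
    have h1 := chain_S_le (lo := lo) h k
    have h2 := chain_S_le (lo := lo) h (k + 1)
    have h3 := chain_S_le (lo := lo) h (k + 2)
    have h4 := chain_S_le (lo := lo) h (k + 3)
    have h5 := chain_S_le (lo := lo) h (k + 4)
    have e : (chain lo x y h).N = 1000 := rfl
    rw [e]
    simp only [add_assoc] at *
    norm_num at *
    omega

theorem chain_sg {lo : ℕ} {x y : α} (h : x ≠ y) : (chain lo x y h).SG := by
  intro k j hj hf
  simp [chain] at hf

theorem chain_e2 {lo : ℕ} {x y : α} (h : x ≠ y) (k : ℕ) (hk : k % 1000 ≠ 0) :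
    2 ≤ (chain lo x y h).e k := by
  simp only [chain]
  have : 2 ≤ lo + k % 1000 + 1 := by omega
  nlinarith

theorem chain_letter {lo : ℕ} {x y : α} (h : x ≠ y) (j : ℕ) :
    (chain lo x y h).seq.σ (j : ℤ) = (y, true) ∨ (chain lo x y h).seq.σ (j : ℤ) = (x, true) ∧
      (chain lo x y h).seq.σ ((j + 1 : ℕ) : ℤ) = (y, true) := by
  obtain ⟨k, h1, h2⟩ := (chain lo x y h).locate j
  have e : ((chain lo x y h).X k).length = 1 := rfl
  by_cases hc : (chain lo x y h).S k + 1 ≤ j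
  · left; exact σ_y _ (k := k) (by rw [e]; exact hc) h2
  · right
    have hj : j = (chain lo x y h).S k + 0 := by omega
    constructor
    · rw [hj, σ_X _ (by rw [e]; omega)]; rfl
    · have := (chain lo x y h).S_lt k
      exact σ_y _ (k := k) (by rw [e]; omega) (by omega)

variable {A : Type}

/-- The shape of block data of the words `w_m`. -/
structure WT (D : BD (GenSym A)) (m : ℕ) (base : List (GenSym A × Bool)) : Prop where
  y : D.y = GenSym.b
  N : D.N = 100 ∨ D.N = 99
  X : ∀ k, k % D.N ≠ 0 → D.X k = base
  e : ∀ k, k % D.N ≠ 0 → D.e k = 100 * m + k % D.N + 1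
  e0 : ∀ k, k % D.N = 0 → D.N = 100 ∧ D.e k = 100 * m + 1 ∨ D.N = 99 ∧ D.e k = 200 * m + 101
  X0 : ∀ k, k % D.N = 0 → (D.X k).length ≤ base.length + 1
  elt : ∀ k, ∀ l ∈ D.X k, ∃ a, l.1 = GenSym.elt a
  sg : D.SG
  base_ne : base ≠ []
  m_pos : 1 ≤ m

theorem WT.S_bound {D : BD (GenSym A)} {m : ℕ} {base : List (GenSym A × Bool)} (h : D.WT m base)
    (K : ℕ) (hK : K < D.N) :
    2 * K * (base.length + 100 * m + 1) + K * (K + 1) ≤ 2 * D.S (K + 1) := by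
  induction K with
  | zero => simp
  | succ K ih =>
    have e1 := ih (by omega)
    have hk : (K + 1) % D.N = K + 1 := Nat.mod_eq_of_lt hK
    rw [S_succ, h.X _ (by omega), h.e _ (by omega), hk]
    nlinarith

theorem WT.wd {D : BD (GenSym A)} {m : ℕ} {base : List (GenSym A × Bool)} (h : D.WT m base) :
    D.Wd where
  hN := by have := h.N; omega
  hS k := by
    have hm := h.m_pos
    have hb := List.length_pos_of_ne_nil h.base_ne
    have c : ∀ k, D.S (k + 1) ≤ D.S k + (base.length + 100 * m + 100) ∨
        k % D.N = 0 ∧ D.S (k + 1) ≤ D.S k + (base.length + 200 * m + 202) := by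
      intro k
      have h1 := h.e0 k
      have h2 := h.X0 k
      by_cases hk : k % D.N = 0
      · right
        rw [S_succ]
        refine ⟨hk, ?_⟩
        have h1 := h1 hk
        have h2 := h2 hk
        omega
      · left
        rw [S_succ, h.X k hk, h.e k hk]
        have : k % D.N < D.N := Nat.mod_lt _ D.N_pos
        have := h.N
        omega
    have c0 := c k
    have c1 := c (k + 1)
    have c2 := c (k + 2)
    have c3 := c (k + 3)
    have c4 := c (k + 4)
    have hS : 98 * base.length + 9800 * m + 4949 ≤ D.S D.N := by
      have h1 := h.S_bound 98 (by have := h.N; omega)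
      have h2 := D.S_mono.monotone (show 99 ≤ D.N by have := h.N; omega)
      norm_num at h1
      omega
    simp only [add_assoc, Nat.reduceAdd] at *
    rcases h.N with hN | hN <;> rw [hN] at c0 c1 c2 c3 c4 hS ⊢ <;> omega

theorem WT.letter {D : BD (GenSym A)} {m : ℕ} {base : List (GenSym A × Bool)} (h : D.WT m base)
    (j : ℕ) : (D.seq.σ (j : ℤ)).1 = GenSym.b ∨ ∃ a, (D.seq.σ (j : ℤ)).1 = GenSym.elt a := by
  obtain ⟨k, h1, h2⟩ := D.locate j
  by_cases hc : D.S k + (D.X k).length ≤ j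
  · left; rw [D.σ_y hc h2]; exact h.y
  · right
    obtain ⟨c, rfl⟩ := Nat.exists_eq_add_of_le h1
    rw [D.σ_X (by omega)]
    exact h.elt k _ (List.getElem_mem _)

/-- Block data of `w_m`, generic case. -/
def wA (m : ℕ) (base X0 : List (GenSym A × Bool)) (h1 : base ≠ []) (h2 : X0 ≠ [])
    (h3 : ∀ l ∈ base, ∃ a, l.1 = GenSym.elt a) (h4 : ∀ l ∈ X0, ∃ a, l.1 = GenSym.elt a)
    (h5 : FreeGroup.IsReduced base) (h6 : FreeGroup.IsReduced X0) : BD (GenSym A) where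
  N := 100
  X k := if k % 100 = 0 then X0 else base
  e k := 100 * m + k % 100 + 1
  y := GenSym.b
  N_pos := by norm_num
  hX k := by split <;> assumption
  hy k l hl hb := by
    have : ∃ a, l.1 = GenSym.elt a := by
      split at hl
      · exact h4 l hl
      · exact h3 l hl
    obtain ⟨a, ha⟩ := this
    rw [ha] at hb
    cases hb
  he k := by omega
  hred k := by split <;> assumption
  perX k := by simp
  perE k := by simp

/-- Block data of `w_m`, special case with a cancellation. -/
def wB (m : ℕ) (base : List (GenSym A × Bool)) (h1 : base ≠ [])
    (h3 : ∀ l ∈ base, ∃ a, l.1 = GenSym.elt a)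
    (h5 : FreeGroup.IsReduced base) : BD (GenSym A) where
  N := 99
  X _ := base
  e k := if k % 99 = 0 then 200 * m + 101 else 100 * m + k % 99 + 1
  y := GenSym.b
  N_pos := by norm_num
  hX k := h1
  hy k l hl hb := by
    obtain ⟨a, ha⟩ := h3 l hl
    rw [ha] at hb
    cases hb
  he k := by split <;> omega
  hred k := h5
  perX k := by simp
  perE k := by simp

theorem wA_wt {m : ℕ} (hm : 1 ≤ m) {base X0 : List (GenSym A × Bool)} (h1 : base ≠ [])
    (h2 : X0 ≠ [])
    (h3 : ∀ l ∈ base, ∃ a, l.1 = GenSym.elt a) (h4 : ∀ l ∈ X0, ∃ a, l.1 = GenSym.elt a)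
    (h5 : FreeGroup.IsReduced base) (h6 : FreeGroup.IsReduced X0)
    (h7 : ∀ l ∈ base, l.2 = true) (h8 : ∀ l ∈ X0.tail, l.2 = true)
    (h9 : X0.length ≤ base.length + 1) : (wA m base X0 h1 h2 h3 h4 h5 h6).WT m base where
  y := rfl
  N := Or.inl rfl
  X k hk := by
    simp only [wA] at hk ⊢
    rw [if_neg hk]
  e k hk := rfl
  e0 k hk := by
    left
    simp only [wA] at hk ⊢
    rw [hk]; simp
  X0 k hk := by
    simp only [wA] at hk ⊢
    rw [if_pos hk]; exact h9
  elt k l hl := by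
    simp only [wA] at hl
    split at hl
    · exact h4 l hl
    · exact h3 l hl
  sg k j hj hf := by
    simp only [wA] at hj hf ⊢
    by_cases hk : k % 100 = 0
    · refine ⟨?_, hk⟩
      by_contra hj0
      simp only [hk, if_true] at hj hf
      obtain ⟨j', rfl⟩ := Nat.exists_eq_succ_of_ne_zero hj0
      have hmem : X0[j' + 1] ∈ X0.tail := by
        rw [← List.getElem_tail (h := by simp; omega)]
        exact List.getElem_mem _
      have := h8 _ hmem
      simp_all
    · simp only [hk, if_false] at hj hf
      have := h7 _ (List.getElem_mem hj)
      simp_all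
  base_ne := h1
  m_pos := hm

theorem wB_wt {m : ℕ} (hm : 1 ≤ m) {base : List (GenSym A × Bool)} (h1 : base ≠ [])
    (h3 : ∀ l ∈ base, ∃ a, l.1 = GenSym.elt a)
    (h5 : FreeGroup.IsReduced base)
    (h7 : ∀ l ∈ base, l.2 = true) : (wB m base h1 h3 h5).WT m base where
  y := rfl
  N := Or.inr rfl
  X k hk := rfl
  e k hk := by
    simp only [wB] at hk ⊢
    rw [if_neg hk]
  e0 k hk := by
    right
    simp only [wB] at hk ⊢
    rw [if_pos hk]; simp
  X0 k hk := by simp [wB]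
  elt k l hl := h3 l hl
  sg k j hj hf := by
    have : _ = true := h7 _ (List.getElem_mem hj)
    exact absurd (hf.symm.trans this) (by simp)
  base_ne := h1
  m_pos := hm

end BD

namespace BD
variable {α : Type*}

theorem align_fin {D : BD α} {i i' k k' : ℕ} (h : k % D.N = k' % D.N)
    (hS : D.S k + i' = D.S k' + i) (t : ℤ) : D.seq.σ (i + t) = D.seq.σ (i' + t) := by
  apply PerSeq.seg_congr_mod
  rw [seq_ℓ]
  have h1 := D.S_add_mul (k % D.N) (k / D.N)
  have h2 := D.S_add_mul (k' % D.N) (k' / D.N)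
  rw [mul_comm, Nat.mod_add_div] at h1 h2
  rw [← h] at h2
  refine ⟨(k / D.N : ℕ) - (k' / D.N : ℕ), ?_⟩
  have e : (i : ℤ) - i' = (D.S k : ℤ) - D.S k' := by omega
  rw [e, h1, h2]
  push_cast
  ring

end BD

/-- Alignment property for natural indices. -/
def Al {α : Type*} (A A' : PerSeq α) : Prop :=
  ∀ i i' n : ℕ, (∀ j : ℕ, j < n → A.σ ((i + j : ℕ) : ℤ) = A'.σ ((i' + j : ℕ) : ℤ)) → A.ℓ < 12 * n →
    A.ℓ = A'.ℓ ∧ ∀ k : ℤ, A.σ (i + k) = A'.σ (i' + k)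

theorem PerSeq.σ_toNat {α : Type*} (A : PerSeq α) (i k : ℤ) :
    A.σ (((i % A.ℓ).toNat : ℕ) + k) = A.σ (i + k) := by
  apply PerSeq.seg_congr_mod
  have := A.pos
  rw [Int.toNat_of_nonneg (Int.emod_nonneg _ (by omega))]
  exact ⟨-(i / A.ℓ), by have := Int.emod_add_mul_ediv i A.ℓ; linarith⟩

theorem Al.align {α : Type*} {A A' : PerSeq α} (h : Al A A') {i i' : ℤ} {n : ℕ}
    (hs : A.seg i n = A'.seg i' n) (hn : A.ℓ < 12 * n) :
    A.ℓ = A'.ℓ ∧ ∀ k : ℤ, A.σ (i + k) = A'.σ (i' + k) := by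
  rw [BD.seg_eq_iff] at hs
  have := h (i % A.ℓ).toNat (i' % A'.ℓ).toNat n (by
    intro j hj
    push_cast
    rw [A.σ_toNat, A'.σ_toNat]
    exact hs j hj) hn
  refine ⟨this.1, fun k => ?_⟩
  have h2 := this.2 k
  rwa [A.σ_toNat, A'.σ_toNat] at h2

/-- The periodic word of a power of a letter. -/
def powSeq {α : Type*} (f : α) (p : ℕ) (hp : 0 < p) : PerSeq α where
  σ _ := (f, true)
  ℓ := p
  pos := hp
  per _ := rfl
  red _ := by simp

theorem al_pow_chain {α : Type*} {f : α} {p : ℕ} (hp : 0 < p) {lo : ℕ} {x y : α} (h : x ≠ y)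
    (hb : 10 ^ 10 < p) (hlo : lo ≤ 4000) : Al (powSeq f p hp) (BD.chain lo x y h).seq := by
  intro i i' n hj hn
  exfalso
  change p < 12 * n at hn
  obtain ⟨k, h1, h2⟩ := (BD.chain lo x y h).locate i'
  have h3 := BD.chain_S_le (lo := lo) h k
  have h4 : (lo + 1000) ^ 2 ≤ 5000 ^ 2 := Nat.pow_le_pow_left (by omega) 2
  have e1 := hj ((BD.chain lo x y h).S (k + 1) - i') (by omega)
  have e2 := hj ((BD.chain lo x y h).S (k + 1) + 1 - i') (by omega)
  rw [show i' + ((BD.chain lo x y h).S (k + 1) - i') = (BD.chain lo x y h).S (k + 1) + 0 by omega,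
    BD.σ_X _ ((BD.chain lo x y h).X_len_pos _)] at e1
  have := (BD.chain lo x y h).S_lt (k + 1)
  rw [show i' + ((BD.chain lo x y h).S (k + 1) + 1 - i') = (BD.chain lo x y h).S (k + 1) + 1 by
    omega, BD.σ_y _ (k := k + 1) (by simp [BD.chain]) (by omega)] at e2
  simp only [powSeq, BD.chain, List.getElem_cons_zero, Prod.mk.injEq, and_true] at e1 e2
  exact h (e1.symm.trans e2)

theorem chain_window {α : Type*} {lo : ℕ} {x y : α} (h : x ≠ y) (i n : ℕ)
    (hn : (BD.chain lo x y h).seq.ℓ < 12 * n) :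
    ∃ j, j + 2 < n ∧ (BD.chain lo x y h).seq.σ ((i + j : ℕ) : ℤ) = (x, true) ∧
      (BD.chain lo x y h).seq.σ ((i + (j + 1) : ℕ) : ℤ) = (y, true) ∧
      (BD.chain lo x y h).seq.σ ((i + (j + 2) : ℕ) : ℤ) = (y, true) := by
  obtain ⟨k, h1, h2, h3, h4⟩ := BD.window (BD.chain_wd (lo := lo) h) i n hn
  have h5 := BD.chain_e2 (lo := lo) h k h1
  have h6 := (BD.chain lo x y h).S_succ k
  have h7 := (BD.chain lo x y h).S_mono (show k + 1 < k + 2 by omega)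
  have h8 : ((BD.chain lo x y h).X k).length = 1 := rfl
  have h9 := (BD.chain lo x y h).S_lt (k + 1)
  refine ⟨(BD.chain lo x y h).S k - i, by omega, ?_, ?_, ?_⟩
  · rw [show i + ((BD.chain lo x y h).S k - i) = (BD.chain lo x y h).S k + 0 by omega,
      BD.σ_X _ ((BD.chain lo x y h).X_len_pos _)]
    rfl
  · exact BD.σ_y _ (k := k) (by omega) (by omega)
  · exact BD.σ_y _ (k := k) (by omega) (by omega)

theorem al_chain_pow {α : Type*} {f : α} {p : ℕ} (hp : 0 < p) {lo : ℕ} {x y : α} (h : x ≠ y) :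
    Al (BD.chain lo x y h).seq (powSeq f p hp) := by
  intro i i' n hj hn
  exfalso
  obtain ⟨j, j1, j2, j3, j4⟩ := chain_window h i n hn
  have e1 := (hj j (by omega)).symm.trans j2
  have e2 := (hj (j + 1) (by omega)).symm.trans j3
  exact h (congrArg Prod.fst (e1.symm.trans e2))

theorem al_chain_chain_ne {α : Type*} {lo : ℕ} {x y : α} (h : x ≠ y)
    {lo' : ℕ} {x' y' : α} (h' : x' ≠ y') (hy : y ≠ y') :
    Al (BD.chain lo x y h).seq (BD.chain lo' x' y' h').seq := by
  intro i i' n hj hn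
  exfalso
  obtain ⟨j, j1, j2, j3, j4⟩ := chain_window h i n hn
  have e1 := (hj (j + 1) (by omega)).symm.trans j3
  have e2 := (hj (j + 2) (by omega)).symm.trans j4
  rcases BD.chain_letter (lo := lo') h' (i' + (j + 1)) with e3 | ⟨e3, e4⟩
  · exact hy (congrArg Prod.fst (e1.symm.trans e3))
  · exact hy (congrArg Prod.fst (e2.symm.trans e4))

theorem al_chain_chain_eq {α : Type*} {lo : ℕ} {x y : α} (h : x ≠ y)
    {lo' : ℕ} {x' : α} (h' : x' ≠ y) (hx : x = x' → lo = lo') :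
    Al (BD.chain lo x y h).seq (BD.chain lo' x' y h').seq := by
  intro i i' n hj hn
  obtain ⟨k, k', h1, h2, h3, h4, h5, h6⟩ :=
    BD.compare (D' := BD.chain lo' x' y h') (BD.chain_wd (lo := lo) h) rfl hn hj
  simp only [BD.chain, List.cons.injEq, Prod.mk.injEq, and_true] at h5
  subst h5
  obtain rfl := hx rfl
  refine ⟨rfl, fun t => BD.align_fin ?_ h6 t⟩
  have h3' : (lo + (k + 1) % 1000 + 1) ^ 2 = (lo + (k' + 1) % 1000 + 1) ^ 2 := h4
  have := Nat.pow_left_injective (n := 2) (by norm_num) h3'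
  show (k + 1) % 1000 = (k' + 1) % 1000
  omega

variable {A : Type}

theorem al_chain_w {lo : ℕ} {x y : GenSym A} (h : x ≠ y) {D : BD (GenSym A)} {m : ℕ}
    {base : List (GenSym A × Bool)} (hD : D.WT m base) (hb : y ≠ GenSym.b)
    (ha : ∀ a, y ≠ GenSym.elt a) :
    Al (BD.chain lo x y h).seq D.seq := by
  intro i i' n hj hn
  exfalso
  obtain ⟨j, j1, j2, j3, j4⟩ := chain_window h i n hn
  have e1 := (hj (j + 1) (by omega)).symm.trans j3
  rcases hD.letter (i' + (j + 1)) with e2 | ⟨a, e2⟩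
  · rw [e1] at e2; exact hb e2
  · rw [e1] at e2; exact ha a e2

theorem al_pow_w {f : GenSym A} {p : ℕ} (hp : 0 < p) {D : BD (GenSym A)} {m : ℕ}
    {base : List (GenSym A × Bool)} (hD : D.WT m base) (hb : f ≠ GenSym.b)
    (ha : ∀ a, f ≠ GenSym.elt a) : Al (powSeq f p hp) D.seq := by
  intro i i' n hj hn
  exfalso
  have e1 := hj 0 (by omega)
  rcases hD.letter (i' + 0) with e2 | ⟨a, e2⟩ <;> rw [← e1] at e2
  · exact hb e2
  · exact ha a e2

theorem al_w_pow {f : GenSym A} {p : ℕ} (hp : 0 < p) {D : BD (GenSym A)} {m : ℕ}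
    {base : List (GenSym A × Bool)} (hD : D.WT m base) (hb : f ≠ GenSym.b)
    (ha : ∀ a, f ≠ GenSym.elt a) : Al D.seq (powSeq f p hp) := by
  intro i i' n hj hn
  exfalso
  have e1 := hj 0 (by omega)
  rcases hD.letter (i + 0) with e2 | ⟨a, e2⟩ <;> rw [e1] at e2
  · exact hb e2
  · exact ha a e2

theorem al_w_chain {lo : ℕ} {x y : GenSym A} (h : x ≠ y) {D : BD (GenSym A)} {m : ℕ}
    {base : List (GenSym A × Bool)} (hD : D.WT m base) (hb : y ≠ GenSym.b) :
    Al D.seq (BD.chain lo x y h).seq := by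
  intro i i' n hj hn
  exfalso
  obtain ⟨k, h1, h2, h3, h4⟩ := BD.window hD.wd i n hn
  have h5 := hD.e k h1
  have hm := hD.m_pos
  have h6 := D.S_succ k
  have h7 := D.S_mono (show k + 1 < k + 2 by omega)
  have e1 := hj (D.S k + (D.X k).length - i) (by omega)
  have e2 := hj (D.S k + (D.X k).length - i + 1) (by omega)
  rw [D.σ_y (k := k) (by omega) (by omega)] at e1 e2
  rcases BD.chain_letter (lo := lo) h (i' + (D.S k + (D.X k).length - i)) with e3 | ⟨e3, e4⟩
  · rw [← e1, hD.y] at e3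
    exact hb (congrArg Prod.fst e3).symm
  · rw [add_assoc, ← e2, hD.y] at e4
    exact hb (congrArg Prod.fst e4).symm

theorem al_w_w {D : BD (GenSym A)} {m : ℕ}
    {base : List (GenSym A × Bool)} (hD : D.WT m base)
    {D' : BD (GenSym A)} {m' : ℕ}
    {base' : List (GenSym A × Bool)} (hD' : D'.WT m' base')
    (hE : m = m' → base = base' → D = D') :
    Al D.seq D'.seq := by
  intro i i' n hj hn
  obtain ⟨k, k', h1, h2, h3, h4, h5, h6⟩ :=
    BD.compare (D' := D') hD.wd (by rw [hD.y, hD'.y]) hn hj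
  have key : ∀ k k', k % D.N ≠ 0 → D.e k = D'.e k' →
      k' % D'.N ≠ 0 ∧ m = m' ∧ k % D.N = k' % D'.N := by
    intro k k' h1 h3
    rw [hD.e k h1] at h3
    have q1 : k % D.N < D.N := Nat.mod_lt _ D.N_pos
    have q2 : k' % D'.N < D'.N := Nat.mod_lt _ D'.N_pos
    have q3 := hD.N
    have q4 := hD'.N
    by_cases h0 : k' % D'.N = 0
    · exfalso
      have := hD'.e0 k' h0
      omega
    · rw [hD'.e k' h0] at h3
      omega
  obtain ⟨c1, c2, c3⟩ := key (k + 1) (k' + 1) h2 h4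
  rw [hD.X _ h2, hD'.X _ c1] at h5
  obtain rfl := hE c2 h5
  exact ⟨rfl, fun t => BD.align_fin c3 h6 t⟩

/-- The letter word of the arguments. -/
def baseW (S : IndexedStructure) (m : ℕ) (as : Fin (S.arity m) → S.A) :
    List (GenSym S.A × Bool) := List.ofFn fun i => (GenSym.elt (as i), true)

open Classical in
/-- The modified first block. -/
noncomputable def X0W (S : IndexedStructure) (m : ℕ) (as : Fin (S.arity m) → S.A) :
    List (GenSym S.A × Bool) :=
  if S.isFunc m then
    if (baseW S m as).head? = some (GenSym.elt (S.funcInterp m as), true) then (baseW S m as).tail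
    else (GenSym.elt (S.funcInterp m as), false) :: baseW S m as
  else baseW S m as

theorem baseW_ne {S : IndexedStructure} {m : ℕ} (hm : 1 ≤ m) (as : Fin (S.arity m) → S.A) :
    baseW S m as ≠ [] := by
  have := S.arity_pos m hm
  unfold baseW
  intro h
  have := congrArg List.length h
  simp at this
  omega

theorem baseW_mem {S : IndexedStructure} {m : ℕ} {as : Fin (S.arity m) → S.A}
    {l : GenSym S.A × Bool} (hl : l ∈ baseW S m as) : ∃ a, l = (GenSym.elt a, true) := by
  unfold baseW at hl
  rw [List.mem_ofFn] at hl
  obtain ⟨i, rfl⟩ := hl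
  exact ⟨_, rfl⟩

theorem isReduced_of_pos {α : Type*} {w : List (α × Bool)} (h : ∀ l ∈ w, l.2 = true) :
    FreeGroup.IsReduced w := by
  unfold FreeGroup.IsReduced
  rw [List.isChain_iff_getElem]
  intro i hi _
  rw [h _ (List.getElem_mem _), h _ (List.getElem_mem _)]

theorem baseW_pos {S : IndexedStructure} {m : ℕ} {as : Fin (S.arity m) → S.A} :
    ∀ l ∈ baseW S m as, l.2 = true := by
  intro l hl
  obtain ⟨a, rfl⟩ := baseW_mem hl
  rfl

theorem baseW_elt {S : IndexedStructure} {m : ℕ} {as : Fin (S.arity m) → S.A} :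
    ∀ l ∈ baseW S m as, ∃ a, l.1 = GenSym.elt a := by
  intro l hl
  obtain ⟨a, rfl⟩ := baseW_mem hl
  exact ⟨a, rfl⟩

theorem X0W_tail {S : IndexedStructure} {m : ℕ} {as : Fin (S.arity m) → S.A} :
    ∀ l ∈ (X0W S m as).tail, l.2 = true := by
  intro l hl
  unfold X0W at hl
  split at hl
  · split at hl
    · exact baseW_pos l (List.mem_of_mem_tail (List.mem_of_mem_tail hl))
    · exact baseW_pos l hl
  · exact baseW_pos l (List.mem_of_mem_tail hl)

theorem X0W_elt {S : IndexedStructure} {m : ℕ} {as : Fin (S.arity m) → S.A} :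
    ∀ l ∈ X0W S m as, ∃ a, l.1 = GenSym.elt a := by
  intro l hl
  unfold X0W at hl
  split at hl
  · split at hl
    · exact baseW_elt l (List.mem_of_mem_tail hl)
    · rcases List.mem_cons.1 hl with rfl | hl
      · exact ⟨_, rfl⟩
      · exact baseW_elt l hl
  · exact baseW_elt l hl

theorem X0W_len {S : IndexedStructure} {m : ℕ} {as : Fin (S.arity m) → S.A} :
    (X0W S m as).length ≤ (baseW S m as).length + 1 := by
  unfold X0W
  split
  · split
    · simp; omega
    · simp
  · omega

theorem X0W_red {S : IndexedStructure} {m : ℕ} {as : Fin (S.arity m) → S.A} :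
    FreeGroup.IsReduced (X0W S m as) := by
  unfold X0W
  split
  · split
    · exact isReduced_of_pos fun l hl => baseW_pos l (List.mem_of_mem_tail hl)
    · rename_i h
      have hr := isReduced_of_pos (baseW_pos (as := as))
      rcases hb : baseW S m as with _ | ⟨q, w⟩
      · exact FreeGroup.IsReduced.singleton
      · rw [hb] at hr h
        obtain ⟨a, rfl⟩ := baseW_mem (as := as) (l := q) (by rw [hb]; simp)
        unfold FreeGroup.IsReduced at hr ⊢
        rw [List.isChain_cons_cons]
        refine ⟨fun e => ?_, hr⟩
        exfalso
        apply h
        simp only at e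
        simp [e]
  · exact isReduced_of_pos baseW_pos

open Classical in
/-- Block data of the relator of a tuple. -/
noncomputable def wD (S : IndexedStructure) (m : ℕ) (hm : 1 ≤ m) (as : Fin (S.arity m) → S.A) :
    BD (GenSym S.A) :=
  if h : X0W S m as = [] then
    BD.wB m (baseW S m as) (baseW_ne hm as) baseW_elt (isReduced_of_pos baseW_pos)
  else BD.wA m (baseW S m as) (X0W S m as) (baseW_ne hm as) h baseW_elt X0W_elt
    (isReduced_of_pos baseW_pos) X0W_red

theorem wD_wt (S : IndexedStructure) (m : ℕ) (hm : 1 ≤ m) (as : Fin (S.arity m) → S.A) :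
    (wD S m hm as).WT m (baseW S m as) := by
  unfold wD
  split
  · exact BD.wB_wt hm _ _ _ baseW_pos
  · exact BD.wA_wt hm _ _ _ _ _ _ baseW_pos X0W_tail X0W_len

/-- The valid triples for `chainProd` relators. -/
inductive OK {A : Type} : ℕ → GenSym A → GenSym A → Prop
  | v12 : OK 4000 .f1 .f2
  | v21 : OK 4000 .f2 .f1
  | b1 : OK 1000 .b .f1
  | b2 : OK 1000 .b .f2
  | c1 : OK 2000 .c .f1
  | c2 : OK 2000 .c .f2
  | d1 : OK 3000 .d .f1
  | d2 : OK 3000 .d .f2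
  | ac (a) : OK 0 (.elt a) .c
  | ad (a) : OK 0 (.elt a) .d

theorem OK.ne {lo : ℕ} {x y : GenSym A} (h : OK lo x y) : x ≠ y := by
  cases h <;> simp

theorem OK.lo_le {lo : ℕ} {x y : GenSym A} (h : OK lo x y) : lo ≤ 4000 := by
  cases h <;> simp

theorem OK.y_b {lo : ℕ} {x y : GenSym A} (h : OK lo x y) : y ≠ .b := by
  cases h <;> simp

theorem OK.y_elt {lo : ℕ} {x y : GenSym A} (h : OK lo x y) (a : A) : y ≠ .elt a := by
  cases h <;> simp

theorem OK.lo_eq {lo lo' : ℕ} {x y y' : GenSym A} (h : OK lo x y) (h' : OK lo' x y') :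
    lo = lo' := by
  cases h <;> cases h' <;> rfl

/-- The periodic words attached to the relators. -/
inductive IsRel (S : IndexedStructure) (p₁ p₂ : ℕ) : PerSeq (GenSym S.A) → Prop
  | p1 (h : 0 < p₁) : IsRel S p₁ p₂ (powSeq .f1 p₁ h)
  | p2 (h : 0 < p₂) : IsRel S p₁ p₂ (powSeq .f2 p₂ h)
  | ch (lo : ℕ) (x y : GenSym S.A) (h : OK lo x y) : IsRel S p₁ p₂ (BD.chain lo x y h.ne).seq
  | w (m : ℕ) (hm : 1 ≤ m) (as : Fin (S.arity m) → S.A) (h : S.isFunc m ∨ S.relInterp m as) :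
      IsRel S p₁ p₂ (wD S m hm as).seq

theorem chain_ℓ_ge {α : Type*} {lo : ℕ} {x y : α} (h : x ≠ y) :
    60 * ((lo + 1000) ^ 2 + 1) ≤ (BD.chain lo x y h).seq.ℓ := by
  rw [BD.seq_ℓ]; exact BD.chain_ℓ60 h

theorem IsRel.big {S : IndexedStructure} {p₁ p₂ : ℕ} (hb₁ : 10 ^ 10 < p₁) (hb₂ : 10 ^ 10 < p₂)
    {P : PerSeq (GenSym S.A)} (h : IsRel S p₁ p₂ P) : 24 ≤ P.ℓ := by
  cases h with
  | p1 h => change 24 ≤ p₁; omega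
  | p2 h => change 24 ≤ p₂; omega
  | ch lo x y h =>
    have := chain_ℓ_ge (lo := lo) h.ne
    nlinarith
  | w m hm as h =>
    have h1 := (wD S m hm as).le_S (wD S m hm as).N
    have h2 := (wD_wt S m hm as).N
    rw [BD.seq_ℓ]
    omega

theorem IsRel.sg {S : IndexedStructure} {p₁ p₂ : ℕ}
    {P : PerSeq (GenSym S.A)} (h : IsRel S p₁ p₂ P) : P.Sg := by
  cases h with
  | p1 h => intro i hi; simp [powSeq] at hi
  | p2 h => intro i hi; simp [powSeq] at hi
  | ch lo x y h => exact (BD.chain_sg h.ne).sg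
  | w m hm as h => exact (wD_wt S m hm as).sg.sg

theorem al_pow_pow {α : Type*} {f f' : α} {p p' : ℕ} {hp : 0 < p} {hp' : 0 < p'}
    (h : f = f' → p = p') : Al (powSeq f p hp) (powSeq f' p' hp') := by
  intro i i' n hj hn
  have e := congrArg Prod.fst (hj 0 (by omega))
  exact ⟨h e, fun k => congrArg (fun a => (a, true)) e⟩

theorem IsRel.al {S : IndexedStructure} {p₁ p₂ : ℕ} (hb₁ : 10 ^ 10 < p₁) (hb₂ : 10 ^ 10 < p₂)
    {P P' : PerSeq (GenSym S.A)} (h : IsRel S p₁ p₂ P) (h' : IsRel S p₁ p₂ P') : Al P P' := by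
  cases h with
  | p1 h =>
    cases h' with
    | p1 h' => exact al_pow_pow (fun _ => rfl)
    | p2 h' => exact al_pow_pow (fun e => by cases e)
    | ch lo x y h' => exact al_pow_chain _ _ hb₁ h'.lo_le
    | w m hm as h' => exact al_pow_w _ (wD_wt S m hm as) (by simp) (by simp)
  | p2 h =>
    cases h' with
    | p1 h' => exact al_pow_pow (fun e => by cases e)
    | p2 h' => exact al_pow_pow (fun _ => rfl)
    | ch lo x y h' => exact al_pow_chain _ _ hb₂ h'.lo_le
    | w m hm as h' => exact al_pow_w _ (wD_wt S m hm as) (by simp) (by simp)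
  | ch lo x y h =>
    cases h' with
    | p1 h' => exact al_chain_pow _ _
    | p2 h' => exact al_chain_pow _ _
    | ch lo' x' y' h' =>
      by_cases hy : y = y'
      · subst hy
        refine al_chain_chain_eq _ _ ?_
        rintro rfl
        exact h.lo_eq h'
      · exact al_chain_chain_ne _ _ hy
    | w m hm as h' => exact al_chain_w _ (wD_wt S m hm as) h.y_b h.y_elt
  | w m hm as h =>
    cases h' with
    | p1 h' => exact al_w_pow _ (wD_wt S m hm as) (by simp) (by simp)
    | p2 h' => exact al_w_pow _ (wD_wt S m hm as) (by simp) (by simp)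
    | ch lo x y h' => exact al_w_chain _ (wD_wt S m hm as) h'.y_b
    | w m' hm' as' h' =>
      refine al_w_w (wD_wt S m hm as) (wD_wt S m' hm' as') ?_
      rintro rfl e
      have : as = as' := by
        have := List.ofFn_injective e
        funext i
        have := congrFun this i
        simpa using this
      rw [this]

theorem smallCanc {S : IndexedStructure} {p₁ p₂ : ℕ} (hb₁ : 10 ^ 10 < p₁) (hb₂ : 10 ^ 10 < p₂) :
    SmallCanc (fun t : {P // IsRel S p₁ p₂ P} => t.1) where
  align t t' i i' n hs hn := (t.2.al hb₁ hb₂ t'.2).align hs hn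
  opp t t' i i' n he := PerSeq.opp_aux t.2.sg t'.2.sg (t.2.big hb₁ hb₂) (t'.2.big hb₁ hb₂) he
  big t := by have := t.2.big hb₁ hb₂; omega

theorem mk_flatMap {α β : Type*} (l : List β) (f : β → List (α × Bool)) :
    FreeGroup.mk (l.flatMap f) = (l.map fun k => FreeGroup.mk (f k)).prod := by
  induction l with
  | nil => simp [FreeGroup.one_eq_mk]
  | cons a l ih => rw [List.flatMap_cons, ← FreeGroup.mul_mk, ih]; simp

theorem mk_replicate {α : Type*} (n : ℕ) (y : α) :
    FreeGroup.mk (List.replicate n (y, true)) = FreeGroup.of y ^ n := by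
  induction n with
  | zero => simp [FreeGroup.one_eq_mk]
  | succ n ih =>
    rw [List.replicate_succ', ← FreeGroup.mul_mk, ih, pow_succ]; rfl

theorem BD.seq_ρ' {α : Type*} (D : BD α) : D.seq.ρ =
    ((List.range D.N).map fun k => FreeGroup.mk (D.X k) * FreeGroup.of D.y ^ D.e k).prod := by
  rw [D.seq_ρ]
  unfold BD.word
  rw [mk_flatMap]
  congr 1
  apply List.map_congr_left
  intro k _
  unfold BD.blk
  rw [← FreeGroup.mul_mk, mk_replicate]

theorem powSeq_ρ {α : Type*} (f : α) (p : ℕ) (hp : 0 < p) :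
    (powSeq f p hp).ρ = FreeGroup.of f ^ p := by
  rw [← mk_replicate]
  unfold PerSeq.ρ PerSeq.seg powSeq
  congr 1
  simp

theorem chain_ρ {α : Type*} (lo : ℕ) (x y : α) (h : x ≠ y) :
    (BD.chain lo x y h).seq.ρ = chainProd lo (FreeGroup.of x) (FreeGroup.of y) := by
  have hN : (BD.chain lo x y h).N = 1000 := rfl
  rw [BD.seq_ρ', hN]
  unfold chainProd
  refine congrArg List.prod (List.map_congr_left ?_)
  intro k hk
  have : k < 1000 := List.mem_range.1 hk
  show FreeGroup.of x * FreeGroup.of y ^ ((lo + k % 1000 + 1) ^ 2) = _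
  rw [Nat.mod_eq_of_lt this]

theorem mk_ofFn {α : Type*} {n : ℕ} (f : Fin n → α) :
    FreeGroup.mk (List.ofFn fun i => (f i, true)) = (List.ofFn fun i => FreeGroup.of (f i)).prod := by
  induction n with
  | zero => simp [FreeGroup.one_eq_mk]
  | succ n ih =>
    rw [List.ofFn_succ, List.ofFn_succ, List.prod_cons, ← ih]
    rfl

open Classical in
/-- The relator of a tuple. -/
noncomputable def wRel (S : IndexedStructure) (m : ℕ) (as : Fin (S.arity m) → S.A) :
    FreeGroup (GenSym S.A) :=
  wProd m (fun i => FreeGroup.of (GenSym.elt (as i))) (FreeGroup.of GenSym.b) *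
    if S.isFunc m then (FreeGroup.of (GenSym.elt (S.funcInterp m as)))⁻¹ else 1

open Classical in
theorem mk_X0W (S : IndexedStructure) (m : ℕ) (as : Fin (S.arity m) → S.A) :
    FreeGroup.mk (X0W S m as) =
      (if S.isFunc m then (FreeGroup.of (GenSym.elt (S.funcInterp m as)))⁻¹ else 1) *
      FreeGroup.mk (baseW S m as) := by
  unfold X0W
  by_cases h : S.isFunc m
  · rw [if_pos h, if_pos h]
    split
    · rename_i h1
      rcases hb : baseW S m as with _ | ⟨q, w⟩
      · simp [hb] at h1
      · rw [hb] at h1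
        simp only [List.head?_cons, Option.some.injEq] at h1
        subst h1
        rw [eq_inv_mul_iff_mul_eq]
        rfl
    · rfl
  · rw [if_neg h, if_neg h, one_mul]

theorem wD_conj (S : IndexedStructure) (m : ℕ) (hm : 1 ≤ m) (as : Fin (S.arity m) → S.A) :
    ∃ g, (wD S m hm as).seq.ρ = g * wRel S m as * g⁻¹ := by
  classical
  have hX := mk_X0W S m as
  have hbase := mk_ofFn (fun i => (GenSym.elt (as i)))
  change FreeGroup.mk (baseW S m as) = _ at hbase
  unfold wRel wProd
  rw [← hbase]
  generalize (if S.isFunc m then (FreeGroup.of (GenSym.elt (S.funcInterp m as)))⁻¹ else 1) = q at *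
  rw [BD.seq_ρ']
  unfold wD
  split
  · rename_i h
    rw [h, ← FreeGroup.one_eq_mk] at hX
    have hq : q = (FreeGroup.mk (baseW S m as))⁻¹ := (inv_eq_of_mul_eq_one_left hX.symm).symm
    rw [hq]
    simp only [BD.wB]
    rw [List.prod_range_succ' _ 98, List.prod_range_succ' _ 99, List.prod_range_succ _ 98]
    have e : (List.range 98).map (fun i => FreeGroup.mk (baseW S m as) *
        FreeGroup.of GenSym.b ^ (if i.succ % 99 = 0 then 200 * m + 101 else 100 * m + i.succ % 99 + 1))
        = (List.range 98).map (fun i => FreeGroup.mk (baseW S m as) *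
          FreeGroup.of GenSym.b ^ (100 * m + i.succ + 1)) := by
      apply List.map_congr_left
      intro k hk
      have : k < 98 := List.mem_range.1 hk
      rw [Nat.mod_eq_of_lt (show k.succ < 99 by omega), if_neg (by omega)]
    rw [e]
    generalize ((List.range 98).map (fun i => FreeGroup.mk (baseW S m as) *
          FreeGroup.of GenSym.b ^ (100 * m + i.succ + 1))).prod = Q
    generalize FreeGroup.mk (baseW S m as) = B
    refine ⟨(B * FreeGroup.of GenSym.b ^ (100 * m + 100)) * B⁻¹, ?_⟩
    rw [show (if 0 % 99 = 0 then 200 * m + 101 else 100 * m + 0 % 99 + 1) =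
      (100 * m + 100) + (100 * m + 0 + 1) by rw [if_pos (by norm_num)]; ring, pow_add,
      show 100 * m + Nat.succ 98 + 1 = 100 * m + 100 by rfl]
    group
  · simp only [BD.wA]
    rw [List.prod_range_succ' _ 99, List.prod_range_succ' _ 99]
    have e : (List.range 99).map (fun i => FreeGroup.mk (if i.succ % 100 = 0 then X0W S m as
        else baseW S m as) * FreeGroup.of GenSym.b ^ (100 * m + i.succ % 100 + 1))
        = (List.range 99).map (fun i => FreeGroup.mk (baseW S m as) *
          FreeGroup.of GenSym.b ^ (100 * m + i.succ + 1)) := by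
      apply List.map_congr_left
      intro k hk
      have : k < 99 := List.mem_range.1 hk
      rw [Nat.mod_eq_of_lt (show k.succ < 100 by omega), if_neg (by omega)]
    rw [e, if_pos (by norm_num), hX]
    refine ⟨q, ?_⟩
    rw [show 100 * m + 0 % 100 + 1 = 100 * m + 0 + 1 by norm_num]
    group

theorem grpRels_sub (S : IndexedStructure) {p₁ p₂ : ℕ} (h1 : 0 < p₁) (h2 : 0 < p₂) :
    grpRels S p₁ p₂ ⊆
      (Subgroup.normalClosure (Set.range fun t : {P // IsRel S p₁ p₂ P} => t.1.ρ) :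
        Set (FreeGroup (GenSym S.A))) := by
  have key : ∀ P, IsRel S p₁ p₂ P →
      P.ρ ∈ Subgroup.normalClosure (Set.range fun t : {P // IsRel S p₁ p₂ P} => t.1.ρ) :=
    fun P hP => Subgroup.subset_normalClosure ⟨⟨P, hP⟩, rfl⟩
  have hc : ∀ lo x y, OK lo x y → chainProd lo (FreeGroup.of x) (FreeGroup.of y) ∈
      Subgroup.normalClosure (Set.range fun t : {P // IsRel S p₁ p₂ P} => t.1.ρ) := by
    intro lo x y h
    rw [← chain_ρ lo x y h.ne]
    exact key _ (IsRel.ch lo x y h)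
  have hw : ∀ m, 1 ≤ m → ∀ as, S.isFunc m ∨ S.relInterp m as → wRel S m as ∈
      Subgroup.normalClosure (Set.range fun t : {P // IsRel S p₁ p₂ P} => t.1.ρ) := by
    intro m hm as h
    obtain ⟨g, hg⟩ := wD_conj S m hm as
    have h3 := key _ (IsRel.w m hm as h)
    rw [hg] at h3
    have := Subgroup.Normal.conj_mem Subgroup.normalClosure_normal _ h3 g⁻¹
    simpa [mul_assoc] using this
  rintro r (((h | ⟨a, h | h⟩) | ⟨m, hm, hf, as, h⟩) | ⟨m, hm, hf, as, hr, h⟩)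
  · simp only [Set.mem_insert_iff, Set.mem_singleton_iff] at h
    rcases h with h | h | h | h | h | h | h | h | h | h <;> rw [h]
    · rw [← powSeq_ρ _ _ h1]; exact key _ (.p1 h1)
    · rw [← powSeq_ρ _ _ h2]; exact key _ (.p2 h2)
    · exact hc _ _ _ .v12
    · exact hc _ _ _ .v21
    · exact hc _ _ _ .b1
    · exact hc _ _ _ .b2
    · exact hc _ _ _ .c1
    · exact hc _ _ _ .c2
    · exact hc _ _ _ .d1
    · exact hc _ _ _ .d2
  · rw [h]; exact hc _ _ _ (.ac a)
  · rw [h]; exact hc _ _ _ (.ad a)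
  · have := hw m hm as (.inl hf)
    unfold wRel at this
    rw [if_pos hf] at this
    rw [h]; exact this
  · have := hw m hm as (.inr hr)
    unfold wRel at this
    rw [if_neg hf, mul_one] at this
    rw [h]; exact this

theorem IsRel.mem (S : IndexedStructure) {p₁ p₂ : ℕ} {P : PerSeq (GenSym S.A)}
    (h : IsRel S p₁ p₂ P) :
    P.ρ ∈ Subgroup.normalClosure (grpRels S p₁ p₂) := by
  cases h with
  | p1 h => rw [powSeq_ρ]; exact Subgroup.subset_normalClosure (by simp [grpRels])
  | p2 h => rw [powSeq_ρ]; exact Subgroup.subset_normalClosure (by simp [grpRels])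
  | ch lo x y h =>
    rw [chain_ρ]
    apply Subgroup.subset_normalClosure
    left; left
    cases h
    case ac a => right; exact ⟨a, .inl rfl⟩
    case ad a => right; exact ⟨a, .inr rfl⟩
    all_goals left; simp only [Set.mem_insert_iff, Set.mem_singleton_iff, true_or, or_true]
  | w m hm as h =>
    obtain ⟨g, hg⟩ := wD_conj S m hm as
    rw [hg]
    apply Subgroup.Normal.conj_mem Subgroup.normalClosure_normal
    apply Subgroup.subset_normalClosure
    unfold wRel
    by_cases hf : S.isFunc m
    · rw [if_pos hf]; left; right; exact ⟨m, hm, hf, as, rfl⟩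
    · rw [if_neg hf, mul_one]; right
      exact ⟨m, hm, hf, as, h.resolve_left hf, rfl⟩

section ListLemmas
variable {β : Type*}

theorem infix_append_split {U A B : List β} (h : U <:+: A ++ B) :
    ∃ U1 U2, U = U1 ++ U2 ∧ U1 <:+: A ∧ U2 <:+: B ∧ (U1 = [] ∨ U2 <+: B) ∧ (U2 = [] ∨ U1 <:+ A) := by
  obtain ⟨s, t, h⟩ := h
  rw [List.append_assoc, List.append_eq_append_iff] at h
  rcases h with ⟨a, h1, h2⟩ | ⟨a, h1, h2⟩
  · rw [List.append_eq_append_iff] at h2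
    rcases h2 with ⟨b, h3, h4⟩ | ⟨b, h3, h4⟩
    · refine ⟨U, [], by simp, ⟨s, b, ?_⟩, List.nil_infix, Or.inr List.nil_prefix, Or.inl rfl⟩
      rw [h1, h3]; simp
    · refine ⟨a, b, h3, ⟨s, [], by simp [h1]⟩, ⟨[], t, by simp [h4]⟩, Or.inr ⟨t, h4.symm⟩,
        Or.inr ⟨s, h1.symm⟩⟩
  · refine ⟨[], U, by simp, List.nil_infix, ⟨a, t, by simp [h2]⟩, Or.inl rfl,
      Or.inr List.nil_suffix⟩

theorem prefix_append_split {U A B : List β} (h : U <+: A ++ B) :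
    ∃ U1 U2, U = U1 ++ U2 ∧ U1 <+: A ∧ U2 <+: B ∧ (U2 = [] ∨ U1 <:+ A) := by
  obtain ⟨t, h⟩ := h
  rw [List.append_eq_append_iff] at h
  rcases h with ⟨a, h1, h2⟩ | ⟨a, h1, h2⟩
  · exact ⟨U, [], by simp, ⟨a, h1.symm⟩, List.nil_prefix, Or.inl rfl⟩
  · exact ⟨A, a, h1, List.prefix_rfl, ⟨t, h2.symm⟩, Or.inr List.suffix_rfl⟩

theorem infix_append3 {U A B C : List β} (h : U <:+: A ++ B ++ C) :
    ∃ U1 U' U2, U = U1 ++ U' ++ U2 ∧ U1 <:+: A ∧ U' <:+: B ∧ U2 <:+: C ∧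
      (U1 = [] ∨ U' <+: B) ∧ (U2 = [] ∨ U' <:+ B) := by
  rw [List.append_assoc] at h
  obtain ⟨U1, V, rfl, h1, h2, h3, -⟩ := infix_append_split h
  rcases h3 with rfl | h3
  · obtain ⟨U', U2, rfl, h4, h5, h6, h7⟩ := infix_append_split h2
    exact ⟨[], U', U2, by simp, h1, h4, h5, Or.inl rfl, h7⟩
  · obtain ⟨U', U2, rfl, h4, h5, h6⟩ := prefix_append_split h3
    exact ⟨U1, U', U2, by simp, h1, h4.isInfix, h5.isInfix, Or.inr h4, h6⟩

theorem infix_cut {U P M S : List β} {c d : β} (h : U <:+: P ++ c :: M ++ d :: S)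
    (hn : ¬ (c :: M ++ [d]) <:+: U) : U <:+: P ++ c :: M ∨ U <:+: M ++ d :: S := by
  obtain ⟨s, t, h⟩ := h
  rw [List.append_assoc, List.append_assoc, List.append_eq_append_iff] at h
  rcases h with ⟨a, h1, h2⟩ | ⟨a, h1, h2⟩
  · -- `P = s ++ a`, `U ++ t = a ++ c :: M ++ d :: S`
    rw [← List.append_assoc, List.append_eq_append_iff] at h2
    rcases h2 with ⟨b, h3, h4⟩ | ⟨b, h3, h4⟩
    · left
      refine ⟨s, b, ?_⟩
      rw [h1]
      simp only [List.append_assoc, h3]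
    · rcases b with _ | ⟨d', b⟩
      · left
        refine ⟨s, [], ?_⟩
        rw [h1, h3]; simp
      · exfalso
        simp only [List.cons_append, List.cons.injEq] at h4
        apply hn
        refine ⟨a, b, ?_⟩
        rw [h3, ← h4.1]; simp
  · -- `s = P ++ a`
    rcases a with _ | ⟨c', a⟩
    · simp only [List.nil_append] at h2
      rw [List.append_nil] at h1
      -- `c :: M ++ d :: S = U ++ t`
      rw [List.append_eq_append_iff] at h2
      rcases h2 with ⟨b, h3, h4⟩ | ⟨b, h3, h4⟩
      · rcases b with _ | ⟨d', b⟩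
        · left
          refine ⟨P, [], ?_⟩
          rw [h3]; simp
        · exfalso
          simp only [List.cons_append, List.cons.injEq] at h4
          apply hn
          refine ⟨[], b, ?_⟩
          rw [h3, ← h4.1]; simp
      · left
        refine ⟨P, b, ?_⟩
        rw [h3]; simp
    · simp only [List.cons_append, List.cons.injEq] at h2
      right
      refine ⟨a, t, ?_⟩
      rw [h2.2]; simp

/-- Comparing maximal runs. -/
theorem run_eq {p : β → Prop} {X Y R T : List β} (hX : ∀ x ∈ X, p x) (hY : ∀ x ∈ Y, p x)
    (hR : ∀ x ∈ R.head?, ¬ p x) (hT : ∀ x ∈ T.head?, ¬ p x) (h : X ++ R = Y ++ T) :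
    X = Y ∧ R = T := by
  rw [List.append_eq_append_iff] at h
  rcases h with ⟨a, h1, h2⟩ | ⟨a, h1, h2⟩
  · rcases a with _ | ⟨c, a⟩
    · simp_all
    · exact absurd (hY c (by simp [h1])) (hR c (by simp [h2]))
  · rcases a with _ | ⟨c, a⟩
    · simp_all
    · exact absurd (hX c (by simp [h1])) (hT c (by simp [h2]))

theorem run_len {p : β → Prop} {X Y R T : List β} (hX : ∀ x ∈ X, p x)
    (hT : ∀ x ∈ T.head?, ¬ p x) (h : X ++ R = Y ++ T) : X.length ≤ Y.length := by
  rw [List.append_eq_append_iff] at h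
  rcases h with ⟨a, h1, h2⟩ | ⟨a, h1, h2⟩
  · rw [h1]; simp
  · rcases a with _ | ⟨c, a⟩
    · simp_all
    · exact absurd (hX c (by simp [h1])) (hT c (by simp [h2]))

variable {γ : Type*}

/-- Moving a `p`-letter past a block. -/
theorem block_cases {p : β → Prop} {A B V Z R : List β} {c : β} (hc : p c)
    (hB : ∀ x ∈ B, ¬ p x) (hB0 : B ≠ []) (h : Z ++ c :: R = A ++ B ++ V) :
    (∃ A1, A = Z ++ c :: A1 ∧ R = A1 ++ B ++ V) ∨ ∃ Z2, Z = A ++ B ++ Z2 ∧ Z2 ++ c :: R = V := by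
  rw [List.append_assoc, List.append_eq_append_iff] at h
  rcases h with ⟨a, h1, h2⟩ | ⟨a, h1, h2⟩
  · rcases a with _ | ⟨c', a⟩
    · exfalso
      rcases B with _ | ⟨b, B⟩
      · exact hB0 rfl
      · simp only [List.nil_append, List.cons_append, List.cons.injEq] at h2
        exact hB b (by simp) (h2.1 ▸ hc)
    · simp only [List.cons_append, List.cons.injEq] at h2
      left
      exact ⟨a, by rw [h1, h2.1], by rw [h2.2]; simp⟩
  · right
    rw [List.append_eq_append_iff] at h2
    rcases h2 with ⟨b, h3, h4⟩ | ⟨b, h3, h4⟩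
    · exact ⟨b, by rw [h1, h3]; simp, h4.symm⟩
    · rcases b with _ | ⟨c', b⟩
      · exact ⟨[], by rw [h1, h3]; simp, by simpa using h4⟩
      · simp only [List.cons_append, List.cons.injEq] at h4
        exact absurd (h4.1 ▸ hc) (hB c' (by simp [h3]))

/-- Alternating words: every run is bounded by a block. -/
theorem alt_run {p : β → Prop} {A B : γ → List β} (hB : ∀ N, ∀ x ∈ B N, ¬ p x)
    (hB0 : ∀ N, B N ≠ []) {U : List β} (hU : ∀ x ∈ U, p x) (hU0 : U ≠ []) :
    ∀ (L : List γ), U <:+: L.flatMap (fun N => A N ++ B N) → ∃ N ∈ L, U.length ≤ (A N).length := by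
  intro L
  rcases U with _ | ⟨c, U⟩
  · exact absurd rfl hU0
  rintro ⟨s, t, h⟩
  induction L generalizing s with
  | nil => simp at h
  | cons N L ih =>
    rw [List.append_assoc, List.cons_append, List.flatMap_cons] at h
    rcases block_cases (hU c (by simp)) (hB N) (hB0 N) h with ⟨A1, h1, h2⟩ | ⟨Z2, h1, h2⟩
    · refine ⟨N, by simp, ?_⟩
      rw [List.append_assoc] at h2
      have := run_len (p := p) (fun x hx => hU x (by simp [hx])) (by
        intro x hx
        rcases hb : B N with _ | ⟨b, B'⟩
        · exact absurd hb (hB0 N)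
        · rw [hb] at hx
          simp at hx
          exact hx ▸ hB N b (by simp [hb])) h2
      rw [h1]; simp; omega
    · obtain ⟨N', h3, h4⟩ := ih Z2 (by simpa using h2)
      exact ⟨N', by simp [h3], h4⟩

/-- Alternating words: decoding two consecutive runs. -/
theorem alt_decode {p : β → Prop} {A B : γ → List β} (hA : ∀ N, ∀ x ∈ A N, p x)
    (hA0 : ∀ N, A N ≠ []) (hB : ∀ N, ∀ x ∈ B N, ¬ p x)
    (hB0 : ∀ N, B N ≠ []) {X Y : List β} {c d e : β} (hc : p c) (hd : p d) (he : p e)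
    (hX : ∀ x ∈ X, ¬ p x) (hX0 : X ≠ []) (hY : ∀ x ∈ Y, ¬ p x) (hY0 : Y ≠ []) :
    ∀ (L : List γ), (c :: X ++ d :: Y ++ [e]) <:+: L.flatMap (fun N => A N ++ B N) →
      ∃ L1 N N' L2, L = L1 ++ N :: N' :: L2 ∧ X = B N ∧ A N' = [d] ∧ Y = B N' := by
  have hV : ∀ L : List γ, ∀ x ∈ (L.flatMap (fun N => A N ++ B N)).head?, ¬¬ p x := by
    intro L x hx
    rcases L with _ | ⟨N, L⟩
    · simp at hx
    · rw [List.flatMap_cons] at hx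
      rcases ha : A N with _ | ⟨a, A'⟩
      · exact absurd ha (hA0 N)
      · rw [ha] at hx
        simp at hx
        exact not_not.2 (hx ▸ hA N a (by simp [ha]))
  have hBh : ∀ N V, ∀ x ∈ (B N ++ V).head?, ¬ p x := by
    intro N V x hx
    rcases hb : B N with _ | ⟨b, B'⟩
    · exact absurd hb (hB0 N)
    · rw [hb] at hx
      simp at hx
      exact hx ▸ hB N b (by simp [hb])
  intro L
  rintro ⟨s, t, h⟩
  have h' : s ++ c :: (X ++ d :: (Y ++ e :: t)) = L.flatMap (fun N => A N ++ B N) := by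
    rw [← h]; simp
  clear h
  induction L generalizing s with
  | nil => simp at h'
  | cons N L ih =>
    rw [List.flatMap_cons] at h'
    rcases block_cases hc (hB N) (hB0 N) h' with ⟨A1, h1, h2⟩ | ⟨Z2, h1, h2⟩
    · have hA1 : A1 = [] := by
        rcases A1 with _ | ⟨a, A1⟩
        · rfl
        · exfalso
          rcases X with _ | ⟨x, X⟩
          · exact hX0 rfl
          · simp only [List.cons_append, List.cons.injEq] at h2
            exact hX x (by simp) (h2.1 ▸ hA N a (by simp [h1]))
      subst hA1
      rw [List.nil_append] at h2
      obtain ⟨r1, r2⟩ := run_eq (p := fun x => ¬ p x) hX (hB N) (by simp [hd]) (hV L) h2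
      rcases L with _ | ⟨N', L⟩
      · simp at r2
      · rw [List.flatMap_cons, List.append_assoc] at r2
        have r2' : [d] ++ (Y ++ e :: t) = A N' ++ (B N' ++ L.flatMap (fun N => A N ++ B N)) := by
          rw [← r2]; simp
        obtain ⟨r3, r4⟩ := run_eq (p := p) (by simp [hd]) (hA N') (by
          intro x hx
          rcases Y with _ | ⟨y, Y⟩
          · exact absurd rfl hY0
          · simp at hx
            exact hx ▸ hY y (by simp)) (hBh N' _) r2'
        obtain ⟨r5, -⟩ := run_eq (p := fun x => ¬ p x) hY (hB N') (by simp [he]) (hV L) r4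
        exact ⟨[], N, N', L, rfl, r1, r3.symm, r5⟩
    · obtain ⟨L1, N1, N2, L2, h3, h4⟩ := ih Z2 h2
      exact ⟨N :: L1, N1, N2, L2, by rw [h3]; simp, h4⟩

/-- Two-sided alternation with forbidden turning patterns. -/
theorem turn_cut {U A H H' : List β} {B : γ → List β} {c z c' z' : β}
    {H0 H1 H0' H1' : List β}
    (e1 : H = H0 ++ [z]) (e2 : H = c :: H1) (e3 : H' = z' :: H0') (e4 : H' = H1' ++ [c'])
    (f1 : ¬ (c' :: A ++ [c]) <:+: U) (f2 : ∀ N, ¬ (z :: B N ++ [z']) <:+: U) :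
    ∀ L : List γ, U <:+: A ++ L.flatMap (fun N => H ++ B N ++ H' ++ A) →
      U <:+: A ∨ ∃ N ∈ L, U <:+: A ++ H ++ B N ∨ U <:+: B N ++ H' ++ A := by
  intro L
  induction L with
  | nil => intro h; left; simpa using h
  | cons N L ih =>
    intro h
    have h1 : U <:+: (A ++ H0) ++ z :: B N ++ z' :: (H0' ++ A ++
        L.flatMap (fun N => H ++ B N ++ H' ++ A)) := by
      rw [List.flatMap_cons] at h
      convert h using 1
      nth_rw 2 [e1]
      nth_rw 2 [e3]
      simp
    rcases infix_cut h1 (f2 N) with h2 | h2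
    · right
      refine ⟨N, by simp, Or.inl ?_⟩
      rw [e1]; simpa using h2
    · have h3 : U <:+: B N ++ H' ++ (A ++ L.flatMap (fun N => H ++ B N ++ H' ++ A)) := by
        convert h2 using 1
        nth_rw 1 [e3]
        simp
      rcases L with _ | ⟨N', L⟩
      · right
        refine ⟨N, by simp, Or.inr ?_⟩
        simpa using h3
      · have h4 : U <:+: (B N ++ H1') ++ c' :: A ++ c :: (H1 ++ B N' ++ H' ++ A ++
            L.flatMap (fun N => H ++ B N ++ H' ++ A)) := by
          rw [List.flatMap_cons] at h3
          convert h3 using 1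
          nth_rw 3 [e4]
          nth_rw 2 [e2]
          simp
        rcases infix_cut h4 f1 with h5 | h5
        · right
          refine ⟨N, by simp, Or.inr ?_⟩
          rw [e4]; simpa using h5
        · have h6 : U <:+: A ++ (N' :: L).flatMap (fun N => H ++ B N ++ H' ++ A) := by
            rw [List.flatMap_cons]
            convert h5 using 1
            nth_rw 1 [e2]
            simp
          rcases ih h6 with h7 | ⟨N1, h7, h8⟩
          · exact Or.inl h7
          · exact Or.inr ⟨N1, by simp only [List.mem_cons] at h7 ⊢; tauto, h8⟩

end ListLemmas

section Fp
variable {α : Type*}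

/-- The word of an integer power of a letter. -/
def fp (f : α) (M : ℤ) : List (α × Bool) := List.replicate M.natAbs (f, decide (0 ≤ M))

theorem fp_length (f : α) (M : ℤ) : (fp f M).length = M.natAbs := by simp [fp]

theorem fp_mem {f : α} {M : ℤ} {l : α × Bool} (h : l ∈ fp f M) : l.1 = f := by
  rw [List.eq_of_mem_replicate h]

theorem fp_ne {f : α} {M : ℤ} (h : M ≠ 0) : fp f M ≠ [] := by
  intro h1
  have := congrArg List.length h1
  rw [fp_length] at this
  simp at this
  exact h this

theorem fp_inj {f : α} {M M' : ℤ} (h : fp f M = fp f M') : M = M' := by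
  have h1 := congrArg List.length h
  rw [fp_length, fp_length] at h1
  by_cases h0 : M = 0
  · subst h0; simp at h1; omega
  · unfold fp at h
    rw [← h1, List.replicate_right_inj (by omega)] at h
    have h2 := (Prod.mk.inj h).2
    simp only [decide_eq_decide] at h2
    omega

theorem fp_nat (f : α) (n : ℕ) : fp f n = List.replicate n (f, true) := by
  simp [fp]

theorem fp_red (f : α) (M : ℤ) : FreeGroup.IsReduced (fp f M) := by
  unfold FreeGroup.IsReduced
  rw [List.isChain_iff_getElem]
  intro i hi _
  simp [fp]

theorem mk_fp (f : α) (M : ℤ) : FreeGroup.mk (fp f M) = FreeGroup.of f ^ M := by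
  rcases Int.eq_nat_or_neg M with ⟨n, rfl | rfl⟩
  · rw [fp_nat, mk_replicate]; simp
  · by_cases h : n = 0
    · subst h; simp [fp, FreeGroup.one_eq_mk]
    · have : fp f (-(n : ℤ)) = FreeGroup.invRev (List.replicate n (f, true)) := by
        simp [fp, FreeGroup.invRev]
        omega
      rw [this, ← FreeGroup.inv_mk, mk_replicate]
      simp

theorem invRev_fp {f : α} {M : ℤ} (h : M ≠ 0) : FreeGroup.invRev (fp f M) = fp f (-M) := by
  simp only [fp, FreeGroup.invRev, List.map_replicate, List.reverse_replicate, Int.natAbs_neg]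
  congr 2
  by_cases h1 : 0 ≤ M
  · have : ¬ M ≤ 0 := by omega
    simp [h1, this]
  · have : M ≤ 0 := by omega
    simp [h1, this]

theorem invRev_append' (a b : List (α × Bool)) :
    FreeGroup.invRev (a ++ b) = FreeGroup.invRev b ++ FreeGroup.invRev a := by
  simp [FreeGroup.invRev]

theorem invRev_subword {a b : List (α × Bool)} (h : a <:+: b) :
    FreeGroup.invRev a <:+: FreeGroup.invRev b := by
  obtain ⟨s, t, rfl⟩ := h
  exact ⟨FreeGroup.invRev t, FreeGroup.invRev s, by simp only [invRev_append', List.append_assoc]⟩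

theorem mem_invRev {a : List (α × Bool)} {l : α × Bool} (h : l ∈ FreeGroup.invRev a) :
    (l.1, !l.2) ∈ a := by
  simp only [FreeGroup.invRev, List.mem_reverse, List.mem_map] at h
  obtain ⟨q, hq, rfl⟩ := h
  simpa using hq

theorem PerSeq.seg_subword {P : PerSeq α} {i : ℤ} {n : ℕ} {U : List (α × Bool)}
    (h : U <:+: P.seg i n) : ∃ i', U = P.seg i' U.length := by
  obtain ⟨s, t, h⟩ := h
  have hl := congrArg List.length h
  simp only [List.length_append, PerSeq.seg_length] at hl
  refine ⟨i + s.length, ?_⟩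
  rw [← hl, P.seg_add, P.seg_add] at h
  have h1 := List.append_inj h (by simp)
  exact (List.append_inj h1.1 (by simp)).2

/-- `U` is a subword of the bi-infinite power of the relator or of its inverse. -/
def SegW (P : PerSeq α) (U : List (α × Bool)) : Prop :=
  ∃ i, U = P.seg i U.length ∨ U = FreeGroup.invRev (P.seg i U.length)

theorem SegW.subword {P : PerSeq α} {U U' : List (α × Bool)} (h : SegW P U) (h' : U' <:+: U) :
    SegW P U' := by
  obtain ⟨i, h | h⟩ := h
  · rw [h] at h'
    obtain ⟨i', h'⟩ := PerSeq.seg_subword h'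
    exact ⟨i', .inl h'⟩
  · rw [h] at h'
    have := invRev_subword h'
    rw [FreeGroup.invRev_invRev] at this
    obtain ⟨i', h'⟩ := PerSeq.seg_subword this
    refine ⟨i', .inr ?_⟩
    rw [FreeGroup.invRev_length] at h'
    rw [← h', FreeGroup.invRev_invRev]

theorem SegW.invRev {P : PerSeq α} {U : List (α × Bool)} (h : SegW P U) :
    SegW P (FreeGroup.invRev U) := by
  obtain ⟨i, h | h⟩ := h
  · refine ⟨i, .inr ?_⟩
    rw [FreeGroup.invRev_length, ← h]
  · refine ⟨i, .inl ?_⟩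
    rw [FreeGroup.invRev_length]
    conv_lhs => rw [h]
    rw [FreeGroup.invRev_invRev]

theorem SegW.letter {P : PerSeq α} {U : List (α × Bool)} (h : SegW P U) :
    ∃ s : Bool, ∀ l ∈ U, ∃ i, (l.1, l.2 != s) = P.σ i := by
  obtain ⟨i, h | h⟩ := h
  · refine ⟨false, fun l hl => ?_⟩
    rw [h] at hl
    simp only [PerSeq.seg, List.mem_map] at hl
    obtain ⟨k, -, rfl⟩ := hl
    exact ⟨_, by simp; rfl⟩
  · refine ⟨true, fun l hl => ?_⟩
    rw [h] at hl
    have := mem_invRev hl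
    simp only [PerSeq.seg, List.mem_map] at this
    obtain ⟨k, -, e⟩ := this
    exact ⟨_, by rw [e]; simp⟩

theorem PerSeq.mk_seg_ℓ (P : PerSeq α) (i : ℤ) :
    FreeGroup.mk (P.seg i P.ℓ) = (P.π i)⁻¹ * P.ρ * P.π i := by
  have h1 := P.π_add i P.ℓ
  rw [P.π_add_ℓ] at h1
  rw [mul_assoc, h1]; group

theorem PerSeq.seg_shorten {G : Type*} [Group G] (φ : FreeGroup α →* G) (P : PerSeq α)
    (hP : φ P.ρ = 1) (i : ℤ) (n : ℕ) (hn : P.ℓ < 2 * n) :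
    ∃ V : List (α × Bool), V.length < n ∧ φ (FreeGroup.mk V) = φ (FreeGroup.mk (P.seg i n)) := by
  have hl : ∀ i, φ (FreeGroup.mk (P.seg i P.ℓ)) = 1 := by
    intro i
    rw [P.mk_seg_ℓ]; simp [hP]
  have hpos := P.pos
  by_cases h : n ≤ P.ℓ
  · refine ⟨FreeGroup.invRev (P.seg (i + n) (P.ℓ - n)), by simp; omega, ?_⟩
    have h1 := hl i
    rw [show P.ℓ = n + (P.ℓ - n) by omega, P.seg_add, ← FreeGroup.mul_mk, map_mul] at h1
    rw [← FreeGroup.inv_mk, map_inv]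
    exact (eq_inv_of_mul_eq_one_left h1).symm
  · refine ⟨P.seg (i + P.ℓ) (n - P.ℓ), by simp; omega, ?_⟩
    have h1 := P.seg_add i P.ℓ (n - P.ℓ)
    rw [show P.ℓ + (n - P.ℓ) = n by omega] at h1
    rw [h1, ← FreeGroup.mul_mk, map_mul, hl, one_mul]

theorem SegW.shorten {G : Type*} [Group G] (φ : FreeGroup α →* G) {P : PerSeq α}
    (hP : φ P.ρ = 1) {U : List (α × Bool)} (h : SegW P U) (hn : P.ℓ < 2 * U.length) :
    ∃ V : List (α × Bool), V.length < U.length ∧ φ (FreeGroup.mk V) = φ (FreeGroup.mk U) := by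
  obtain ⟨i, h | h⟩ := h
  · obtain ⟨V, h1, h2⟩ := P.seg_shorten φ hP i _ hn
    exact ⟨V, h1, by rw [h2, ← h]⟩
  · obtain ⟨V, h1, h2⟩ := P.seg_shorten φ hP i _ hn
    refine ⟨FreeGroup.invRev V, by simpa using h1, ?_⟩
    rw [← FreeGroup.inv_mk, map_inv, h2, ← map_inv, FreeGroup.inv_mk, ← h]

theorem chain_run {lo : ℕ} {x y f : α} (h : x ≠ y) (i : ℤ) (n : ℕ)
    (hf : ∀ l ∈ (BD.chain lo x y h).seq.seg i n, l.1 = f) :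
    60 * n ≤ (BD.chain lo x y h).seq.ℓ := by
  refine le_trans ?_ (chain_ℓ_ge (lo := lo) h)
  by_contra hn
  have hf' : ∀ j < n, ((BD.chain lo x y h).seq.σ (i + (j : ℕ))).1 = f := by
    intro j hj
    apply hf
    simp only [PerSeq.seg, List.mem_map, List.mem_range]
    exact ⟨j, hj, rfl⟩
  have hf2 : ∀ j < n, ((BD.chain lo x y h).seq.σ
      (((i % (BD.chain lo x y h).seq.ℓ).toNat + j : ℕ) : ℤ)).1 = f := by
    intro j hj
    push_cast
    rw [PerSeq.σ_toNat]
    exact hf' j hj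
  generalize (i % (BD.chain lo x y h).seq.ℓ).toNat = i0 at hf2
  obtain ⟨k, h1, h2⟩ := (BD.chain lo x y h).locate i0
  have h3 := BD.chain_S_le (lo := lo) h k
  have h4 := hf2 ((BD.chain lo x y h).S (k + 1) - i0) (by omega)
  have h5 := hf2 ((BD.chain lo x y h).S (k + 1) - 1 - i0) (by omega)
  have h6 := (BD.chain lo x y h).S_lt k
  rw [show i0 + ((BD.chain lo x y h).S (k + 1) - i0) = (BD.chain lo x y h).S (k + 1) + 0 by omega,
    BD.σ_X _ ((BD.chain lo x y h).X_len_pos _)] at h4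
  have h7 : ((BD.chain lo x y h).X k).length = 1 := rfl
  rw [BD.σ_y _ (k := k) (by omega) (by omega)] at h5
  exact h (h4.trans h5.symm)

end Fp

section Rel
variable {S : IndexedStructure} {p₁ p₂ : ℕ}

theorem IsRel.dich {P : PerSeq (GenSym S.A)} (h : IsRel S p₁ p₂ P) :
    (∀ i, (P.σ i).2 = true) ∨ ∀ i, (P.σ i).1 ≠ .f1 ∧ (P.σ i).1 ≠ .f2 := by
  cases h with
  | p1 h => left; intro i; rfl
  | p2 h => left; intro i; rfl
  | ch lo x y h =>
    left
    intro i
    have e := (BD.chain lo x y h.ne).seq.σ_toNat i 0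
    simp only [add_zero] at e
    rw [← e]
    rcases BD.chain_letter (lo := lo) h.ne (i % (BD.chain lo x y h.ne).seq.ℓ).toNat with e | ⟨e, -⟩ <;>
      rw [e]
  | w m hm as h =>
    right
    intro i
    have e := (wD S m hm as).seq.σ_toNat i 0
    simp only [add_zero] at e
    rw [← e]
    rcases (wD_wt S m hm as).letter (i % (wD S m hm as).seq.ℓ).toNat with e | ⟨a, e⟩ <;>
      rw [e] <;> simp

theorem IsRel.dichU {P : PerSeq (GenSym S.A)} (h : IsRel S p₁ p₂ P)
    {U : List (GenSym S.A × Bool)} (hU : SegW P U) :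
    (∃ s : Bool, ∀ l ∈ U, l.2 = s) ∨ ∀ l ∈ U, l.1 ≠ .f1 ∧ l.1 ≠ .f2 := by
  obtain ⟨s, hs⟩ := hU.letter
  rcases h.dich with h | h
  · left
    refine ⟨!s, fun l hl => ?_⟩
    obtain ⟨i, hi⟩ := hs l hl
    have h1 := h i
    rw [← hi] at h1
    revert h1
    cases s <;> cases l.2 <;> simp
  · right
    intro l hl
    obtain ⟨i, hi⟩ := hs l hl
    have h1 := h i
    rw [← hi] at h1
    exact h1

theorem IsRel.run {P : PerSeq (GenSym S.A)} (h : IsRel S p₁ p₂ P)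
    {U : List (GenSym S.A × Bool)} (hU : SegW P U) {f : GenSym S.A} (hf : f = .f1 ∨ f = .f2)
    (hf' : ∀ l ∈ U, l.1 = f) : 60 * U.length ≤ P.ℓ ∨ (∃ hp, P = powSeq .f1 p₁ hp) ∨
      ∃ hp, P = powSeq .f2 p₂ hp := by
  cases h with
  | p1 h => right; left; exact ⟨h, rfl⟩
  | p2 h => right; right; exact ⟨h, rfl⟩
  | ch lo x y h =>
    left
    obtain ⟨i, hi | hi⟩ := hU
    · exact chain_run h.ne i U.length (by rw [← hi]; exact hf')
    · refine chain_run (f := f) h.ne i U.length ?_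
      intro l hl
      have := FreeGroup.invRev_invRev (L₁ := (BD.chain lo x y h.ne).seq.seg i U.length)
      rw [← this, ← hi] at hl
      have h9 := hf' _ (mem_invRev hl)
      exact h9
  | w m hm as h =>
    left
    rcases IsRel.dichU (IsRel.w (p₁ := p₁) (p₂ := p₂) m hm as h) hU with h1 | h1
    · obtain ⟨s, hs⟩ := hU.letter
      rcases U with _ | ⟨l, U⟩
      · simp
      · exfalso
        obtain ⟨i, hi⟩ := hs l (by simp)
        have e := (wD S m hm as).seq.σ_toNat i 0
        simp only [add_zero] at e
        rw [← e] at hi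
        have hi := congrArg Prod.fst hi
        have hl := hf' l (by simp)
        simp only [hl] at hi
        rcases (wD_wt S m hm as).letter (i % (wD S m hm as).seq.ℓ).toNat with e | ⟨a, e⟩ <;>
          rw [← hi] at e <;> rcases hf with rfl | rfl <;> cases e
    · rcases U with _ | ⟨l, U⟩
      · simp
      · exfalso
        have h2 := h1 l (by simp)
        have h3 := hf' l (by simp)
        rcases hf with rfl | rfl
        · exact h2.1 h3
        · exact h2.2 h3

theorem powSeq_letter {α : Type*} {f : α} {p : ℕ} {hp : 0 < p} {U : List (α × Bool)}
    (h : SegW (powSeq f p hp) U) : ∀ l ∈ U, l.1 = f := by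
  intro l hl
  obtain ⟨s, hs⟩ := h.letter
  obtain ⟨i, hi⟩ := hs l hl
  exact congrArg Prod.fst hi

theorem core (hb₁ : 10 ^ 10 < p₁) (hb₂ : 10 ^ 10 < p₂) {P : PerSeq (GenSym S.A)}
    (h : IsRel S p₁ p₂ P)
    {U : List (GenSym S.A × Bool)} (hU : SegW P U) (hl : 9 * P.ℓ ≤ 12 * U.length + 24)
    {M N : ℤ} {H : List (GenSym S.A × Bool)} (hi : U <:+: fp .f1 M ++ H ++ fp .f2 N)
    (hM : 2 * M.natAbs ≤ p₁) (hN : 2 * N.natAbs ≤ p₂) (hh : ∀ l ∈ H.head?, l.1 ≠ .f1)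
    (ht : ∀ l ∈ H.getLast?, l.1 ≠ .f2) : ∃ U', U' <:+: H ∧ SegW P U' ∧ P.ℓ < 2 * U'.length := by
  have hbig := h.big hb₁ hb₂
  obtain ⟨U1, U', U2, rfl, h1, h2, h3, h4, h5⟩ := infix_append3 hi
  have s1 : SegW P U1 := hU.subword ⟨[], U' ++ U2, by simp⟩
  have s2 : SegW P U' := hU.subword ⟨U1, U2, by simp⟩
  have s3 : SegW P U2 := hU.subword ⟨U1 ++ U', [], by simp⟩
  have m1 : ∀ l ∈ U1, l.1 = .f1 := fun l hl => fp_mem (h1.subset hl)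
  have m3 : ∀ l ∈ U2, l.1 = .f2 := fun l hl => fp_mem (h3.subset hl)
  have l1 := h1.length_le
  have l3 := h3.length_le
  rw [fp_length] at l1 l3
  refine ⟨U', h2, s2, ?_⟩
  simp only [List.length_append] at hl
  have hpow : ((∃ hp, P = powSeq .f1 p₁ hp) ∨ ∃ hp, P = powSeq .f2 p₂ hp) →
      P.ℓ < 2 * U'.length := by
    rintro (⟨hp, rfl⟩ | ⟨hp, rfl⟩)
    · have hU2 : U2 = [] := by
        rcases U2 with _ | ⟨l, U2⟩
        · rfl
        · have e1 := m3 l (by simp)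
          have e2 := powSeq_letter s3 l (by simp)
          rw [e1] at e2; cases e2
      subst hU2
      change 9 * p₁ ≤ _ at hl
      change p₁ < _
      rcases h4 with rfl | ⟨t, ht4⟩
      · simp at hl; omega
      · rcases U' with _ | ⟨l, U'⟩
        · simp at hl; omega
        · exact absurd (powSeq_letter s2 l (by simp)) (hh l (by rw [← ht4]; simp))
    · have hU1 : U1 = [] := by
        rcases U1 with _ | ⟨l, U1⟩
        · rfl
        · have e1 := m1 l (by simp)
          have e2 := powSeq_letter s1 l (by simp)
          rw [e1] at e2; cases e2
      subst hU1
      change 9 * p₂ ≤ _ at hl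
      change p₂ < _
      rcases h5 with rfl | ⟨t, ht4⟩
      · simp at hl; omega
      · rcases List.eq_nil_or_concat U' with rfl | ⟨U'', l, rfl⟩
        · simp at hl; omega
        · exact absurd (powSeq_letter s2 l (by simp)) (ht l (by rw [← ht4]; simp))
  rcases h.run s1 (.inl rfl) m1 with r1 | r1
  · rcases h.run s3 (.inr rfl) m3 with r3 | r3
    · omega
    · exact hpow r3
  · exact hpow r1

end Rel

section Fin
variable {A : Type}

/-- The word under consideration. -/
def bigW (M : ℤ) (H : List (GenSym A × Bool)) (L : List ℤ) : List (GenSym A × Bool) :=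
  L.flatMap fun N => fp .f1 M ++ H ++ fp .f2 N ++ FreeGroup.invRev H

theorem invRev_cons_head {α : Type*} (H : List (α × Bool)) (l : α × Bool)
    (h : l ∈ (FreeGroup.invRev H).head?) : (l.1, !l.2) ∈ H.getLast? := by
  rcases List.eq_nil_or_concat H with rfl | ⟨H', z, rfl⟩
  · simp [FreeGroup.invRev] at h
  · simp [FreeGroup.invRev] at h
    simp [← h]

theorem invRev_last {α : Type*} (H : List (α × Bool)) (l : α × Bool)
    (h : l ∈ (FreeGroup.invRev H).getLast?) : (l.1, !l.2) ∈ H.head? := by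
  rcases H with _ | ⟨z, H⟩
  · simp [FreeGroup.invRev] at h
  · simp [FreeGroup.invRev] at h
    simp [← h]

theorem chain_app {α : Type*} {a b : List (α × Bool)} (ha : FreeGroup.IsReduced a)
    (hb : FreeGroup.IsReduced b) (h : ∀ x ∈ a.getLast?, ∀ y ∈ b.head?, x.1 ≠ y.1) :
    FreeGroup.IsReduced (a ++ b) := by
  unfold FreeGroup.IsReduced at *
  rw [List.isChain_append]
  exact ⟨ha, hb, fun x hx y hy e => absurd e (h x hx y hy)⟩

theorem bigW_head {M : ℤ} (hM : M ≠ 0) {H : List (GenSym A × Bool)} (L : List ℤ) :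
    ∀ l ∈ (bigW M H L).head?, l.1 = .f1 := by
  intro l hl
  rcases L with _ | ⟨N, L⟩
  · simp [bigW] at hl
  · simp only [bigW, List.flatMap_cons, List.append_assoc] at hl
    rcases hf : fp (GenSym.f1 : GenSym A) M with _ | ⟨q, r⟩
    · exact absurd hf (fp_ne hM)
    · rw [hf] at hl
      simp at hl
      subst hl
      exact fp_mem (M := M) (by rw [hf]; simp)

theorem bigW_red {M : ℤ} (hM : M ≠ 0) {H : List (GenSym A × Bool)} (hH : FreeGroup.IsReduced H)
    (hh : ∀ l ∈ H.head?, l.1 ≠ .f1) (ht : ∀ l ∈ H.getLast?, l.1 ≠ .f2) (L : List ℤ)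
    (hL : ∀ N ∈ L, N ≠ 0) : FreeGroup.IsReduced (bigW M H L) := by
  classical
  induction L with
  | nil => exact FreeGroup.IsReduced.nil
  | cons N L ih =>
    have hN : N ≠ 0 := hL N (by simp)
    have ih := ih (fun N hN => hL N (by simp [hN]))
    have e : bigW M H (N :: L) = fp .f1 M ++ H ++ fp .f2 N ++ FreeGroup.invRev H ++ bigW M H L := by
      simp [bigW]
    rw [e]
    have i1 : FreeGroup.IsReduced (fp .f1 M ++ H) := by
      refine chain_app (fp_red _ _) hH ?_
      intro x hx y hy
      rw [fp_mem (List.mem_of_mem_getLast? hx)]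
      exact (hh y hy).symm
    have hlast : ∀ x ∈ (fp GenSym.f1 M ++ H).getLast?, x.1 ≠ .f2 := by
      intro x hx
      rcases List.eq_nil_or_concat H with hH0 | ⟨H', z, hH0⟩
      · rw [hH0, List.append_nil] at hx
        rw [fp_mem (List.mem_of_mem_getLast? hx)]; simp
      · apply ht
        rw [hH0] at hx ⊢
        simpa using hx
    have i2 : FreeGroup.IsReduced (fp .f1 M ++ H ++ fp .f2 N) := by
      refine chain_app i1 (fp_red _ _) ?_
      intro x hx y hy
      rw [fp_mem (List.mem_of_mem_head? hy)]
      exact hlast x hx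
    have hlast2 : ∀ x ∈ (fp GenSym.f1 M ++ H ++ fp GenSym.f2 N).getLast?, x.1 = .f2 := by
      intro x hx
      rcases List.eq_nil_or_concat (fp (GenSym.f2 : GenSym A) N) with hH0 | ⟨H', z, hH0⟩
      · exact absurd hH0 (fp_ne hN)
      · apply fp_mem (M := N)
        rw [hH0] at hx ⊢
        simp at hx
        simp [hx]
    have i3 : FreeGroup.IsReduced (fp .f1 M ++ H ++ fp .f2 N ++ FreeGroup.invRev H) := by
      refine chain_app i2 (isReduced_invRev hH) ?_
      intro x hx y hy
      rw [hlast2 x hx]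
      exact (ht _ (invRev_cons_head H y hy)).symm
    refine chain_app i3 ih ?_
    intro x hx y hy
    rw [bigW_head hM L y hy]
    rcases List.eq_nil_or_concat (FreeGroup.invRev H) with hH0 | ⟨H', z, hH0⟩
    · rw [hH0, List.append_nil] at hx
      rw [hlast2 x hx]; simp
    · have h9 := hh _ (invRev_last H x (by
        rw [hH0] at hx ⊢
        simpa using hx))
      exact h9

variable {S : IndexedStructure} {p₁ p₂ : ℕ}

theorem exists_rel (hb₁ : 10 ^ 10 < p₁) (hb₂ : 10 ^ 10 < p₂) {W : List (GenSym S.A × Bool)}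
    (hW : FreeGroup.IsReduced W) (h0 : W ≠ [])
    (h1 : PresentedGroup.mk (grpRels S p₁ p₂) (FreeGroup.mk W) = 1) :
    ∃ P U, IsRel S p₁ p₂ P ∧ SegW P U ∧ 9 * P.ℓ ≤ 12 * U.length + 24 ∧ U <:+: W := by
  classical
  have hw : FreeGroup.mk W ∈ Subgroup.normalClosure
      (Set.range fun t : {P // IsRel S p₁ p₂ P} => t.1.ρ) := by
    have h2 : FreeGroup.mk W ∈ Subgroup.normalClosure (grpRels S p₁ p₂) :=
      (QuotientGroup.eq_one_iff _).1 h1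
    exact Subgroup.normalClosure_le_normal
      (grpRels_sub S (by omega : 0 < p₁) (by omega : 0 < p₂)) h2
  have hne : FreeGroup.mk W ≠ 1 := by
    intro h
    have := mk_toWord_of_isReduced hW
    rw [h, FreeGroup.toWord_one] at this
    exact h0 this.symm
  obtain ⟨t, i, n, h3, h4⟩ := greendlinger_words (smallCanc hb₁ hb₂) hw hne
  rw [mk_toWord_of_isReduced hW] at h4
  rcases h4 with h4 | h4
  · exact ⟨t.1, t.1.seg i n, t.2, ⟨i, .inl (by simp)⟩, by simpa using h3, h4⟩
  · exact ⟨t.1, _, t.2, ⟨i, .inr (by simp)⟩, by simpa using h3, h4⟩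

theorem mk_rel_eq_one {P : PerSeq (GenSym S.A)} (h : IsRel S p₁ p₂ P) :
    PresentedGroup.mk (grpRels S p₁ p₂) P.ρ = 1 :=
  (QuotientGroup.eq_one_iff _).2 (h.mem S)

/-- The nontrivial double coset case gives a shortening. -/
theorem case_ne (hb₁ : 10 ^ 10 < p₁) (hb₂ : 10 ^ 10 < p₂) {P : PerSeq (GenSym S.A)}
    (h : IsRel S p₁ p₂ P) {U : List (GenSym S.A × Bool)} (hU : SegW P U)
    (hl : 9 * P.ℓ ≤ 12 * U.length + 24) {M : ℤ} {L : List ℤ} {H : List (GenSym S.A × Bool)}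
    (hM0 : M ≠ 0) (hL0 : ∀ N ∈ L, N ≠ 0)
    (hM : 2 * M.natAbs ≤ p₁) (hN : ∀ N ∈ L, 2 * N.natAbs ≤ p₂) (hh : ∀ l ∈ H.head?, l.1 ≠ .f1)
    (ht : ∀ l ∈ H.getLast?, l.1 ≠ .f2) (hne : H ≠ []) (hi : U <:+: bigW M H L) :
    ∃ U', U' <:+: H ∧ SegW P U' ∧ P.ℓ < 2 * U'.length := by
  -- restrict to nonzero exponents
  let B : {N : ℤ // N ≠ 0} → List (GenSym S.A × Bool) := fun N => fp .f2 N.1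
  have hi2 : U <:+: fp .f1 M ++ (L.attach.map fun N => (⟨N.1, hL0 N.1 N.2⟩ : {N : ℤ // N ≠ 0})).flatMap
      (fun N => H ++ B N ++ FreeGroup.invRev H ++ fp .f1 M) := by
    have e : ∀ L' : List ℤ, bigW M H L' ++ fp .f1 M = fp .f1 M ++ L'.flatMap
        (fun N => H ++ fp .f2 N ++ FreeGroup.invRev H ++ fp .f1 M) := by
      intro L'
      induction L' with
      | nil => simp [bigW]
      | cons N L' ih =>
        have e : bigW M H (N :: L') =
            fp .f1 M ++ H ++ fp .f2 N ++ FreeGroup.invRev H ++ bigW M H L' := by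
          simp [bigW]
        rw [e, List.append_assoc _ (bigW M H L'), ih, List.flatMap_cons]
        simp
    have e2 : (L.attach.map fun N => (⟨N.1, hL0 N.1 N.2⟩ : {N : ℤ // N ≠ 0})).flatMap
      (fun N => H ++ B N ++ FreeGroup.invRev H ++ fp .f1 M) =
      L.flatMap (fun N => H ++ fp .f2 N ++ FreeGroup.invRev H ++ fp .f1 M) := by
      conv_rhs => rw [← List.attach_map_subtype_val L]
      rw [List.flatMap_map, List.flatMap_map]
    rw [e2, ← e]
    exact hi.trans ⟨[], fp .f1 M, by simp⟩
  obtain ⟨c, H1, hc⟩ := List.exists_cons_of_ne_nil hne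
  obtain ⟨H0, z, hz⟩ : ∃ H0 z, H = H0 ++ [z] :=
    ⟨_, _, (List.dropLast_append_getLast hne).symm⟩
  have dich := h.dichU hU
  have pat : ∀ (l l' : GenSym S.A × Bool) (f : GenSym S.A) (M : ℤ), (f = .f1 ∨ f = .f2) → M ≠ 0 →
      l'.2 = !l.2 → ¬ (l :: fp f M ++ [l']) <:+: U := by
    intro l l' f M hf hM hll hin
    rcases dich with ⟨s, hs⟩ | hs
    · have h1 := hs l (hin.subset (by simp))
      have h2 := hs l' (hin.subset (by simp))
      rw [hll, h1] at h2
      cases s <;> simp at h2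
    · obtain ⟨q, r, hq⟩ := List.exists_cons_of_ne_nil (fp_ne (f := f) hM)
      have h1 := hs q (hin.subset (by simp [hq]))
      have h2 : q.1 = f := fp_mem (M := M) (by rw [hq]; simp)
      rcases hf with rfl | rfl
      · exact h1.1 h2
      · exact h1.2 h2
  have e3 : FreeGroup.invRev H = (z.1, !z.2) :: FreeGroup.invRev H0 := by
    rw [hz]; simp [FreeGroup.invRev]
  have e4 : FreeGroup.invRev H = FreeGroup.invRev H1 ++ [(c.1, !c.2)] := by
    rw [hc]; simp [FreeGroup.invRev]
  have hcut := turn_cut (B := B) hz hc e3 e4 (pat _ _ _ M (.inl rfl) hM0 (by simp))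
    (fun N => pat _ _ _ N.1 (.inr rfl) N.2 rfl) _ hi2
  rcases hcut with h1 | ⟨N, hNm, h1 | h1⟩
  · refine core hb₁ hb₂ h hU hl (M := M) (N := 0) (H := H) ?_ hM (by simp) hh ht
    exact h1.trans ⟨[], H ++ fp .f2 0, by simp⟩
  · have : N.1 ∈ L := by
      simp only [List.mem_map, List.mem_attach, true_and, Subtype.exists] at hNm
      obtain ⟨a, ha, rfl⟩ := hNm
      exact ha
    exact core hb₁ hb₂ h hU hl h1 hM (hN _ this) hh ht
  · have : N.1 ∈ L := by
      simp only [List.mem_map, List.mem_attach, true_and, Subtype.exists] at hNm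
      obtain ⟨a, ha, rfl⟩ := hNm
      exact ha
    have h2 := invRev_subword h1
    rw [invRev_append', invRev_append', FreeGroup.invRev_invRev, invRev_fp hM0,
      invRev_fp (hL0 _ this), ← List.append_assoc] at h2
    exact core hb₁ hb₂ h hU.invRev (by simpa using hl) h2 (by simpa using hM)
      (by simpa using hN _ this) hh ht

end Fin

theorem chain_pattern {α : Type*} {lo : ℕ} {x y : α} (h : x ≠ y) {U : List (α × Bool)}
    (hU : SegW (BD.chain lo x y h).seq U) (hn : (BD.chain lo x y h).seq.ℓ < 12 * U.length) :
    ∃ q : ℕ, lo + 1 ≤ q ∧ q + 1 ≤ lo + 1000 ∧ ((((x, true) :: fp y ((q : ℤ) ^ 2) ++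
      (x, true) :: fp y (((q : ℤ) + 1) ^ 2) ++ [(x, true)]) <:+: U) ∨
      (((x, false) :: fp y (-((q : ℤ) + 1) ^ 2) ++
      (x, false) :: fp y (-(q : ℤ) ^ 2) ++ [(x, false)]) <:+: U)) := by
  have main : ∀ i n, (BD.chain lo x y h).seq.ℓ < 12 * n →
      ∃ q : ℕ, lo + 1 ≤ q ∧ q + 1 ≤ lo + 1000 ∧ (((x, true) :: fp y ((q : ℤ) ^ 2) ++
      (x, true) :: fp y (((q : ℤ) + 1) ^ 2) ++ [(x, true)]) <:+: (BD.chain lo x y h).seq.seg i n) := by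
    intro i n hn
    have hi : (BD.chain lo x y h).seq.seg i n =
        (BD.chain lo x y h).seq.seg (((i % (BD.chain lo x y h).seq.ℓ).toNat : ℕ) : ℤ) n := by
      rw [BD.seg_eq_iff]
      intro j _
      rw [PerSeq.σ_toNat]
    rw [hi]
    generalize (i % (BD.chain lo x y h).seq.ℓ).toNat = i0
    obtain ⟨k, h1, h2, h3, h4⟩ := BD.window (BD.chain_wd (lo := lo) h) i0 n hn
    have e1 := (BD.chain lo x y h).S_succ k
    have e2 : (BD.chain lo x y h).S (k + 2) = _ := (BD.chain lo x y h).S_succ (k + 1)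
    have hk : (k + 1) % 1000 = k % 1000 + 1 := by
      change (k + 1) % 1000 ≠ 0 at h2
      omega
    have b1 := (BD.chain lo x y h).seg_blk k
    have b2 := (BD.chain lo x y h).seg_blk (k + 1)
    have b3 : (BD.chain lo x y h).seq.σ (((BD.chain lo x y h).S (k + 2) + 0 : ℕ) : ℤ) = (x, true) :=
      (BD.chain lo x y h).σ_X ((BD.chain lo x y h).X_len_pos _)
    have f1 : (BD.chain lo x y h).blk k =
        (x, true) :: fp y (((lo + k % 1000 + 1 : ℕ) : ℤ) ^ 2) := by
      rw [← Nat.cast_pow, fp_nat]; rfl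
    have f2 : (BD.chain lo x y h).blk (k + 1) =
        (x, true) :: fp y ((((lo + k % 1000 + 1 : ℕ) : ℤ) + 1) ^ 2) := by
      rw [← Nat.cast_succ, ← Nat.cast_pow, fp_nat,
        show Nat.succ (lo + k % 1000 + 1) = lo + (k + 1) % 1000 + 1 by omega]; rfl
    rw [f1] at b1
    rw [f2] at b2
    have hlt : k % 1000 + 1 < 1000 := by rw [← hk]; exact Nat.mod_lt _ (by norm_num)
    refine ⟨lo + k % 1000 + 1, by omega, by omega, ?_⟩
    generalize hS0 : (BD.chain lo x y h).S k = s0 at *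
    generalize hS1 : (BD.chain lo x y h).S (k + 1) = s1 at *
    generalize hS2 : (BD.chain lo x y h).S (k + 2) = s2 at *
    generalize hA1 : ((BD.chain lo x y h).X k).length + (BD.chain lo x y h).e k = a1 at *
    generalize hA2 : ((BD.chain lo x y h).X (k + 1)).length + (BD.chain lo x y h).e (k + 1) = a2 at *
    generalize (BD.chain lo x y h).seq = Q at *
    have hn' : n = (s0 - i0) + (a1 + (a2 + (1 + (i0 + n - s2 - 1)))) := by omega
    rw [hn', Q.seg_add, Q.seg_add, Q.seg_add, Q.seg_add]
    have t0 : (i0 : ℤ) + (s0 - i0 : ℕ) = s0 := by omega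
    have t1 : (s0 : ℤ) + a1 = s1 := by omega
    have t2 : (s1 : ℤ) + a2 = s2 := by omega
    rw [t0, t1, t2, b1, b2, Q.seg_one]
    rw [add_zero] at b3
    rw [b3]
    refine ⟨Q.seg i0 (s0 - i0), Q.seg (s2 + (1 : ℕ)) (i0 + n - s2 - 1), ?_⟩
    simp only [List.append_assoc]
  obtain ⟨i, hU | hU⟩ := hU
  · obtain ⟨q, h1, h2, h3⟩ := main i _ hn
    exact ⟨q, h1, h2, .inl (by rw [hU]; exact h3)⟩
  · obtain ⟨q, h1, h2, h3⟩ := main i _ hn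
    refine ⟨q, h1, h2, .inr ?_⟩
    have h4 := invRev_subword h3
    rw [← hU] at h4
    convert h4 using 1
    have c1 : ((q : ℤ) + 1) ^ 2 ≠ 0 := by positivity
    have c2 : (q : ℤ) ^ 2 ≠ 0 := by
      have : (q : ℤ) ≠ 0 := by omega
      positivity
    have c0 : ∀ w : List (α × Bool), (x, true) :: w = [(x, true)] ++ w := fun _ => rfl
    have c3 : FreeGroup.invRev [(x, true)] = [(x, false)] := rfl
    rw [c0 (fp y ((q : ℤ) ^ 2)), c0 (fp y (((q : ℤ) + 1) ^ 2))]
    simp only [invRev_append', invRev_fp c1, invRev_fp c2, c3]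
    simp

section
variable {S : IndexedStructure} {p₁ p₂ : ℕ}

theorem case_nil (hb₁ : 10 ^ 10 < p₁) (hb₂ : 10 ^ 10 < p₂) {P : PerSeq (GenSym S.A)}
    (h : IsRel S p₁ p₂ P) {U : List (GenSym S.A × Bool)} (hU : SegW P U)
    (hl : 9 * P.ℓ ≤ 12 * U.length + 24) {M : ℤ} {L : List {N : ℤ // N ≠ 0}}
    (hM0 : M ≠ 0) (hM : 2 * M.natAbs ≤ p₁) (hN : ∀ N ∈ L, 2 * N.1.natAbs ≤ p₂)
    (hi : U <:+: bigW M [] (L.map (·.1))) :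
    ∃ q : ℕ, 4001 ≤ q ∧ q + 1 ≤ 5000 ∧ ∃ L1 N N' L2, L = L1 ++ N :: N' :: L2 ∧
      ((M = 1 ∧ N.1 = (q : ℤ) ^ 2 ∧ N'.1 = ((q : ℤ) + 1) ^ 2) ∨
        (M = -1 ∧ N.1 = -((q : ℤ) + 1) ^ 2 ∧ N'.1 = -(q : ℤ) ^ 2)) := by
  have hbig := h.big hb₁ hb₂
  have hU0 : U ≠ [] := by
    rintro rfl
    simp at hl; omega
  have hi1 : U <:+: L.flatMap (fun N => fp .f1 M ++ fp .f2 N.1) := by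
    convert hi using 1
    unfold bigW
    rw [List.flatMap_map]
    simp [FreeGroup.invRev]
  have hL0 : ∃ N0, N0 ∈ L := by
    rcases L with _ | ⟨N0, L⟩
    · simp at hi1; exact absurd hi1 hU0
    · exact ⟨N0, by simp⟩
  obtain ⟨N0, hN0⟩ := hL0
  have hi2 : U <:+: (N0 :: L).flatMap (fun N => fp .f2 N.1 ++ fp .f1 M) := by
    have e : ∀ L : List {N : ℤ // N ≠ 0}, fp .f1 M ++ L.flatMap (fun N => fp .f2 N.1 ++ fp .f1 M) =
        L.flatMap (fun N => fp .f1 M ++ fp .f2 N.1) ++ fp (.f1 : GenSym S.A) M := by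
      intro L
      induction L with
      | nil => simp
      | cons N L ih =>
        rw [List.flatMap_cons, List.flatMap_cons]
        simp only [List.append_assoc] at ih ⊢
        rw [ih]
    rw [List.flatMap_cons, List.append_assoc, e]
    exact hi1.trans ⟨fp .f2 N0.1, fp .f1 M, by simp⟩
  have hlet : ∀ l ∈ U, l.1 = .f1 ∨ l.1 = .f2 := by
    intro l hl
    have := hi1.subset hl
    rw [List.mem_flatMap] at this
    obtain ⟨N, -, hN⟩ := this
    rcases List.mem_append.1 hN with h | h
    · exact .inl (fp_mem h)
    · exact .inr (fp_mem h)
  have ne1 : ∀ l ∈ fp (.f1 : GenSym S.A) M, ¬ l.1 = .f2 := by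
    intro l hl; rw [fp_mem hl]; simp
  have ne2 : ∀ N : ℤ, ∀ l ∈ fp (.f2 : GenSym S.A) N, ¬ l.1 = .f1 := by
    intro N l hl; rw [fp_mem hl]; simp
  have hlt : P.ℓ < 12 * U.length := by omega
  cases h with
  | p1 hp =>
    exfalso
    obtain ⟨N, h1, h2⟩ := alt_run (p := fun l : GenSym S.A × Bool => l.1 = .f1)
      (A := fun N : {N : ℤ // N ≠ 0} => fp .f1 M) (B := fun N => fp .f2 N.1)
      (fun N => ne2 N.1) (fun N => fp_ne N.2) (powSeq_letter hU) hU0 L hi1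
    rw [fp_length] at h2
    change 9 * p₁ ≤ _ at hl
    omega
  | p2 hp =>
    exfalso
    obtain ⟨N, h1, h2⟩ := alt_run (p := fun l : GenSym S.A × Bool => l.1 = .f2)
      (A := fun N : {N : ℤ // N ≠ 0} => fp .f2 N.1) (B := fun N => fp .f1 M)
      (fun N => ne1) (fun N => fp_ne hM0) (powSeq_letter hU) hU0 _ hi2
    rw [fp_length] at h2
    change 9 * p₂ ≤ _ at hl
    have : N ∈ L := by
      rcases List.mem_cons.1 h1 with rfl | h1
      · exact hN0
      · exact h1
    have := hN N this
    omega
  | w m hm as hw =>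
    exfalso
    obtain ⟨l, U', rfl⟩ := List.exists_cons_of_ne_nil hU0
    have h1 := hlet l (by simp)
    obtain ⟨s, hs⟩ := hU.letter
    obtain ⟨i, hi⟩ := hs l (by simp)
    have hi := congrArg Prod.fst hi
    have e := (wD S m hm as).seq.σ_toNat i 0
    simp only [add_zero] at e
    rw [← e] at hi
    simp only at hi
    rcases (wD_wt S m hm as).letter (i % (wD S m hm as).seq.ℓ).toNat with e | ⟨a, e⟩ <;>
      rw [← hi] at e <;> rw [e] at h1 <;> simp at h1
  | ch lo x y hok =>
    obtain ⟨q, q1, q2, hq⟩ := chain_pattern hok.ne hU hlt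
    clear hbig hl hlt
    have c1 : ((q : ℤ) + 1) ^ 2 ≠ 0 := by positivity
    have q0 : 0 < q := Nat.lt_of_lt_of_le (Nat.succ_pos lo) q1
    have c2 : (q : ℤ) ^ 2 ≠ 0 := by positivity
    have hx : x = .f1 ∨ x = .f2 := by
      rcases hq with hq | hq
      · exact hlet (x, true) (hq.subset (by simp))
      · exact hlet (x, false) (hq.subset (by simp))
    have d12 := fun (s : Bool) (a b : ℤ) (ha : a ≠ 0) (hb : b ≠ 0) => alt_decode
      (p := fun l : GenSym S.A × Bool => l.1 = .f1)
      (A := fun N : {N : ℤ // N ≠ 0} => fp .f1 M) (B := fun N => fp .f2 N.1)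
      (fun N l hl => fp_mem hl) (fun N => fp_ne hM0)
      (fun N => ne2 N.1) (fun N => fp_ne N.2) (c := (.f1, s)) (d := (.f1, s)) (e := (.f1, s))
      rfl rfl rfl (ne2 a) (fp_ne ha) (ne2 b) (fp_ne hb) L
    have d21 := fun (s : Bool) (a b : ℤ) (ha : a ≠ 0) (hb : b ≠ 0) => alt_decode
      (p := fun l : GenSym S.A × Bool => l.1 = .f2)
      (A := fun N : {N : ℤ // N ≠ 0} => fp .f2 N.1) (B := fun N => fp .f1 M)
      (fun N l hl => fp_mem hl) (fun N => fp_ne N.2)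
      (fun N => ne1) (fun N => fp_ne hM0) (c := (.f2, s)) (d := (.f2, s)) (e := (.f2, s))
      (X := fp .f1 a) (Y := fp .f1 b)
      rfl rfl rfl (by intro l hl; rw [fp_mem hl]; simp) (fp_ne ha)
      (by intro l hl; rw [fp_mem hl]; simp) (fp_ne hb) (N0 :: L)
    cases hok with
    | v12 =>
      refine ⟨q, q1, q2, ?_⟩
      rcases hq with hq | hq
      · obtain ⟨L1, N, N', L2, e1, e2, e3, e4⟩ := d12 _ _ _ c2 c1 (hq.trans hi1)
        refine ⟨L1, N, N', L2, e1, .inl ⟨?_, (fp_inj e2).symm, (fp_inj e4).symm⟩⟩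
        exact fp_inj (M' := 1) e3
      · obtain ⟨L1, N, N', L2, e1, e2, e3, e4⟩ :=
          d12 _ _ _ (neg_ne_zero.2 c1) (neg_ne_zero.2 c2) (hq.trans hi1)
        refine ⟨L1, N, N', L2, e1, .inr ⟨?_, (fp_inj e2).symm, (fp_inj e4).symm⟩⟩
        exact fp_inj (M' := -1) e3
    | v21 =>
      exfalso
      rcases hq with hq | hq
      · obtain ⟨L1, N, N', L2, e1, e2, e3, e4⟩ := d21 _ _ _ c2 c1 (hq.trans hi2)
        have := fp_inj (e2.trans e4.symm)
        nlinarith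
      · obtain ⟨L1, N, N', L2, e1, e2, e3, e4⟩ :=
          d21 _ _ _ (neg_ne_zero.2 c1) (neg_ne_zero.2 c2) (hq.trans hi2)
        have := fp_inj (e2.trans e4.symm)
        nlinarith
    | _ => simp at hx
end

theorem exists_bal (p : ℕ) (hp : 0 < p) (x : ℤ) : ∃ r : ℤ, (p : ℤ) ∣ x - r ∧ 2 * r.natAbs ≤ p := by
  have h0 := Int.emod_nonneg x (b := (p : ℤ)) (by omega)
  have h1 := Int.emod_lt_of_pos x (b := (p : ℤ)) (by omega)
  have h2 : (p : ℤ) ∣ x - x % p := Int.dvd_self_sub_emod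
  by_cases h : 2 * (x % p) ≤ p
  · exact ⟨x % p, h2, by omega⟩
  · refine ⟨x % p - p, ?_, by omega⟩
    have : x - (x % p - p) = (x - x % p) + p := by ring
    rw [this]
    exact dvd_add h2 (dvd_refl _)

theorem zpow_congr {G : Type*} [Group G] {x : G} {p : ℕ} (h : x ^ p = 1) {a b : ℤ}
    (hab : (p : ℤ) ∣ a - b) : x ^ a = x ^ b := by
  obtain ⟨c, hc⟩ := hab
  have : a = b + p * c := by omega
  rw [this, zpow_add, zpow_mul, zpow_natCast, h, one_zpow, mul_one]

theorem zpow_conj' {G : Type*} [Group G] (x : G) (a b : ℤ) :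
    x ^ a * x ^ b * (x ^ a)⁻¹ = x ^ b := by
  rw [← zpow_neg, ← zpow_add, ← zpow_add, add_neg_cancel_comm]

theorem chainProd_map {G G' : Type*} [Group G] [Group G'] (f : G →* G') (lo : ℕ) (x y : G) :
    f (chainProd lo x y) = chainProd lo (f x) (f y) := by
  unfold chainProd
  rw [map_list_prod, List.map_map]
  refine congrArg List.prod (List.map_congr_left ?_)
  intro k _
  rw [Function.comp, map_mul, map_pow]

theorem num_pos {p : ℕ} (hp : p.Prime) (hb : 10 ^ 10 < p) {n : ℤ} {q j : ℕ}
    (hq : 4001 ≤ q) (hq' : q + 1 ≤ 5000) (hj : 4001 ≤ j) (hj' : j + 1 ≤ 5000)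
    (h1 : (p : ℤ) ∣ n * (j : ℤ) ^ 2 - (q : ℤ) ^ 2)
    (h2 : (p : ℤ) ∣ n * ((j : ℤ) + 1) ^ 2 - ((q : ℤ) + 1) ^ 2) : (p : ℤ) ∣ n - 1 := by
  have hp' : Prime (p : ℤ) := Nat.prime_iff_prime_int.1 hp
  have h3 : (p : ℤ) ∣ ((q : ℤ) - j) * (2 * q * j + q + j) := by
    have : ((q : ℤ) - j) * (2 * q * j + q + j) =
      (n * ((j : ℤ) + 1) ^ 2 - ((q : ℤ) + 1) ^ 2) * (j : ℤ) ^ 2 -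
      (n * (j : ℤ) ^ 2 - (q : ℤ) ^ 2) * ((j : ℤ) + 1) ^ 2 := by ring
    rw [this]
    exact dvd_sub (h2.mul_right _) (h1.mul_right _)
  have hqj : (q : ℤ) = j := by
    rcases hp'.dvd_or_dvd h3 with h | h
    · have := Int.eq_zero_of_abs_lt_dvd h (by rw [abs_lt]; constructor <;> omega)
      omega
    · exfalso
      have a1 : (q : ℤ) * j ≤ 5000 * 5000 := by
        apply mul_le_mul <;> omega
      have a0 : (0 : ℤ) ≤ q * j := by positivity
      have e : 2 * (q : ℤ) * j = 2 * (q * j) := by ring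
      have := Int.le_of_dvd (by rw [e]; omega) h
      rw [e] at this
      omega
  rw [hqj] at h1
  have h4 : (p : ℤ) ∣ (n - 1) * (j : ℤ) ^ 2 := by
    have : (n - 1) * (j : ℤ) ^ 2 = n * (j : ℤ) ^ 2 - (j : ℤ) ^ 2 := by ring
    rwa [this]
  rcases hp'.dvd_or_dvd h4 with h | h
  · exact h
  · have := Int.le_of_dvd (by omega) (hp'.dvd_of_dvd_pow h)
    omega

theorem num_neg {p : ℕ} (hp : p.Prime) (hb : 10 ^ 10 < p) {n : ℤ} {q j : ℕ}
    (hq : 4001 ≤ q) (hq' : q + 1 ≤ 5000) (hj : 4001 ≤ j) (hj' : j + 1 ≤ 5000)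
    (h1 : (p : ℤ) ∣ n * (j : ℤ) ^ 2 - -((q : ℤ) + 1) ^ 2)
    (h2 : (p : ℤ) ∣ n * ((j : ℤ) + 1) ^ 2 - -(q : ℤ) ^ 2) : False := by
  have hp' : Prime (p : ℤ) := Nat.prime_iff_prime_int.1 hp
  have h3 : (p : ℤ) ∣ (q + j + 1) * (2 * (q * j) + q + j + 1) := by
    have : ((q : ℤ) + j + 1) * (2 * (q * j) + q + j + 1) =
      (n * (j : ℤ) ^ 2 - -((q : ℤ) + 1) ^ 2) * ((j : ℤ) + 1) ^ 2 -
      (n * ((j : ℤ) + 1) ^ 2 - -(q : ℤ) ^ 2) * (j : ℤ) ^ 2 := by ring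
    rw [this]
    exact dvd_sub (h1.mul_right _) (h2.mul_right _)
  have a1 : (q : ℤ) * j ≤ 5000 * 5000 := by
    apply mul_le_mul <;> omega
  have a0 : (0 : ℤ) ≤ q * j := by positivity
  rcases hp'.dvd_or_dvd h3 with h | h
  · have := Int.le_of_dvd (by omega) h
    omega
  · have := Int.le_of_dvd (by omega) h
    omega

theorem exists_lift (l : List ℤ) (h : ∀ N ∈ l, N ≠ 0) :
    ∃ L : List {N : ℤ // N ≠ 0}, L.map (·.1) = l := by
  induction l with
  | nil => exact ⟨[], rfl⟩
  | cons a l ih =>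
    obtain ⟨L, hL⟩ := ih fun N hN => h N (List.mem_cons_of_mem _ hN)
    exact ⟨⟨a, h a List.mem_cons_self⟩ :: L, by rw [List.map_cons, hL]⟩

theorem list_idx {L : List {N : ℤ // N ≠ 0}} {n : ℕ} {f : ℕ → ℤ}
    (h : L.map (·.1) = (List.range n).map f) {L1 L2 : List {N : ℤ // N ≠ 0}}
    {N N' : {N : ℤ // N ≠ 0}} (hL : L = L1 ++ N :: N' :: L2) :
    L1.length + 1 < n ∧ N.1 = f L1.length ∧ N'.1 = f (L1.length + 1) := by
  have hlen : L1.length + 1 < n := by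
    have := congrArg List.length h
    rw [hL] at this
    simp at this
    omega
  refine ⟨hlen, ?_, ?_⟩
  · have := congrArg (fun l => l[L1.length]?) h
    rw [hL] at this
    simpa [List.getElem?_range (show L1.length < n by omega)] using this
  · have := congrArg (fun l => l[L1.length + 1]?) h
    rw [hL] at this
    simpa [List.getElem?_range hlen] using this

section
variable {S : IndexedStructure} {p₁ p₂ : ℕ}

theorem mk_bigW {G : Type*} [Group G] (φ : FreeGroup (GenSym S.A) →* G) (M : ℤ)
    (H : List (GenSym S.A × Bool)) (L : List ℤ) :
    φ (FreeGroup.mk (bigW M H L)) = (L.map fun N => φ (FreeGroup.of .f1) ^ M *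
      (φ (FreeGroup.mk H) * φ (FreeGroup.of .f2) ^ N * (φ (FreeGroup.mk H))⁻¹)).prod := by
  induction L with
  | nil => simp [bigW, ← FreeGroup.one_eq_mk]
  | cons N L ih =>
    have : bigW M H (N :: L) = fp .f1 M ++ H ++ fp .f2 N ++ FreeGroup.invRev H ++ bigW M H L := rfl
    rw [this, ← FreeGroup.mul_mk, ← FreeGroup.mul_mk, ← FreeGroup.mul_mk, ← FreeGroup.mul_mk,
      show FreeGroup.mk (FreeGroup.invRev H) = (FreeGroup.mk H)⁻¹ from FreeGroup.inv_mk.symm,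
      map_mul, ih, mk_fp, mk_fp]
    simp only [map_mul, map_inv, map_zpow, List.map_cons, List.prod_cons, mul_assoc]

theorem gen_p1 : gen S p₁ p₂ .f1 ^ p₁ = 1 := by
  have : PresentedGroup.mk (grpRels S p₁ p₂) (FreeGroup.of .f1 ^ p₁) = 1 :=
    (QuotientGroup.eq_one_iff _).2 (Subgroup.subset_normalClosure (by simp [grpRels]))
  rw [map_pow] at this
  exact this

theorem gen_p2 : gen S p₁ p₂ .f2 ^ p₂ = 1 := by
  have : PresentedGroup.mk (grpRels S p₁ p₂) (FreeGroup.of .f2 ^ p₂) = 1 :=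
    (QuotientGroup.eq_one_iff _).2 (Subgroup.subset_normalClosure (by simp [grpRels]))
  rw [map_pow] at this
  exact this

/-- A shortest representative of the double coset of `k`. -/
theorem exists_min (k : GA S p₁ p₂) : ∃ H : List (GenSym S.A × Bool), FreeGroup.IsReduced H ∧
    (∀ l ∈ H.head?, l.1 ≠ .f1) ∧ (∀ l ∈ H.getLast?, l.1 ≠ .f2) ∧
    (∃ s t : ℤ, PresentedGroup.mk (grpRels S p₁ p₂) (FreeGroup.mk H) =
      gen S p₁ p₂ .f1 ^ s * k * gen S p₁ p₂ .f2 ^ t) ∧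
    ∀ V : List (GenSym S.A × Bool), V.length < H.length →
      PresentedGroup.mk (grpRels S p₁ p₂) (FreeGroup.mk V) ≠
      PresentedGroup.mk (grpRels S p₁ p₂) (FreeGroup.mk H) := by
  classical
  have hex : ∃ N, ∃ H : List (GenSym S.A × Bool), H.length = N ∧
      ∃ s t : ℤ, PresentedGroup.mk (grpRels S p₁ p₂) (FreeGroup.mk H) =
        gen S p₁ p₂ .f1 ^ s * k * gen S p₁ p₂ .f2 ^ t := by
    obtain ⟨w, hw⟩ := PresentedGroup.mk_surjective (grpRels S p₁ p₂) k
    refine ⟨_, w.toWord, rfl, 0, 0, ?_⟩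
    rw [FreeGroup.mk_toWord, hw]
    simp
  obtain ⟨H0, hl, s, t, hst⟩ := Nat.find_spec hex
  have hmin : ∀ V : List (GenSym S.A × Bool), V.length < H0.length → ∀ s t : ℤ,
      PresentedGroup.mk (grpRels S p₁ p₂) (FreeGroup.mk V) ≠
        gen S p₁ p₂ .f1 ^ s * k * gen S p₁ p₂ .f2 ^ t := by
    intro V hV s t h
    rw [hl] at hV
    exact Nat.find_min hex hV ⟨V, rfl, s, t, h⟩
  clear hl
  have hlen : (FreeGroup.reduce H0).length ≤ H0.length := by
    have := FreeGroup.norm_mk_le (L₁ := H0)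
    rwa [FreeGroup.norm, FreeGroup.toWord_mk] at this
  have hHe : FreeGroup.mk (FreeGroup.reduce H0) = FreeGroup.mk H0 := FreeGroup.reduce.self
  have hred : FreeGroup.IsReduced (FreeGroup.reduce H0) := FreeGroup.isReduced_iff_reduce_eq.2 FreeGroup.reduce.idem
  generalize FreeGroup.reduce H0 = H at *
  rw [← hHe] at hst
  refine ⟨H, hred, ?_, ?_, ⟨s, t, hst⟩, ?_⟩
  · intro l hl e
    obtain ⟨r, rfl⟩ : ∃ r, H = l :: r := by
      rcases H with _ | ⟨a, r⟩
      · simp at hl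
      · simp at hl; exact ⟨r, by rw [hl]⟩
    obtain ⟨u, hu⟩ : ∃ u : ℤ, FreeGroup.mk [l] = FreeGroup.of GenSym.f1 ^ u := by
      obtain ⟨x, b⟩ := l
      simp only at e
      subst e
      cases b
      · exact ⟨-1, by rw [zpow_neg_one]; rfl⟩
      · exact ⟨1, by rw [zpow_one]; rfl⟩
    have : FreeGroup.mk (l :: r) = FreeGroup.mk [l] * FreeGroup.mk r := rfl
    rw [this, hu, map_mul, map_zpow] at hst
    change gen S p₁ p₂ .f1 ^ u * _ = _ at hst
    refine hmin r (by simp at hlen; omega) (-u + s) t ?_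
    rw [zpow_add, mul_assoc, mul_assoc, ← mul_assoc (gen S p₁ p₂ .f1 ^ s), ← hst]
    simp
  · intro l hl e
    obtain ⟨r, rfl⟩ : ∃ r, H = r ++ [l] := by
      rcases List.eq_nil_or_concat H with rfl | ⟨r, a, rfl⟩
      · simp at hl
      · simp at hl; exact ⟨r, by simp [hl]⟩
    obtain ⟨u, hu⟩ : ∃ u : ℤ, FreeGroup.mk [l] = FreeGroup.of GenSym.f2 ^ u := by
      obtain ⟨x, b⟩ := l
      simp only at e
      subst e
      cases b
      · exact ⟨-1, by rw [zpow_neg_one]; rfl⟩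
      · exact ⟨1, by rw [zpow_one]; rfl⟩
    rw [← FreeGroup.mul_mk, hu, map_mul, map_zpow] at hst
    change _ * gen S p₁ p₂ .f2 ^ u = _ at hst
    refine hmin r (by simp at hlen; omega) s (t - u) ?_
    rw [zpow_sub, ← mul_assoc, ← hst]
    simp
  · intro V hV e
    exact hmin V (by omega) s t (e.trans hst)

theorem final_aux (hp₁ : p₁.Prime) (hp₂ : p₂.Prime) (hb₁ : 10 ^ 10 < p₁) (hb₂ : 10 ^ 10 < p₂)
    (g h : GA S p₁ p₂) (m n : ℤ) (hm : ¬ (p₁ : ℤ) ∣ m) (hn : ¬ (p₂ : ℤ) ∣ n)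
    (hv : chainProd 4000 (g * gen S p₁ p₂ .f1 ^ m * g⁻¹) (h * gen S p₁ p₂ .f2 ^ n * h⁻¹) = 1) :
    ∃ z : GA S p₁ p₂, g * gen S p₁ p₂ .f1 ^ m * g⁻¹ = z * gen S p₁ p₂ .f1 * z⁻¹ ∧
      h * gen S p₁ p₂ .f2 ^ n * h⁻¹ = z * gen S p₁ p₂ .f2 * z⁻¹ := by
  obtain ⟨H, hred, hh, ht, ⟨s, t, hst⟩, hmin⟩ := exists_min (g⁻¹ * h)
  set φ := PresentedGroup.mk (grpRels S p₁ p₂) with hφ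
  set F1 := gen S p₁ p₂ .f1 with hF1
  set F2 := gen S p₁ p₂ .f2 with hF2
  have e1 : F1 ^ p₁ = 1 := gen_p1
  have e2 : F2 ^ p₂ = 1 := gen_p2
  have φ1 : φ (FreeGroup.of .f1) = F1 := rfl
  have φ2 : φ (FreeGroup.of .f2) = F2 := rfl
  set k := φ (FreeGroup.mk H) with hk
  have hx : g * F1 ^ m * g⁻¹ = MulAut.conj (g * F1 ^ (-s)) (F1 ^ m) := by
    have : F1 ^ (-s) * F1 ^ m * (F1 ^ (-s))⁻¹ = F1 ^ m := zpow_conj' _ _ _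
    rw [MulAut.conj_apply]
    calc g * F1 ^ m * g⁻¹ = g * (F1 ^ (-s) * F1 ^ m * (F1 ^ (-s))⁻¹) * g⁻¹ := by rw [this]
      _ = _ := by simp only [mul_inv_rev, mul_assoc]
  have hh' : h = g * F1 ^ (-s) * k * F2 ^ (-t) := by
    rw [hst, zpow_neg, zpow_neg]
    simp only [mul_assoc, inv_mul_cancel_left, mul_inv_cancel, mul_inv_cancel_left, mul_one]
  have hy : h * F2 ^ n * h⁻¹ = MulAut.conj (g * F1 ^ (-s)) (k * F2 ^ n * k⁻¹) := by
    have : F2 ^ (-t) * F2 ^ n * (F2 ^ (-t))⁻¹ = F2 ^ n := zpow_conj' _ _ _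
    rw [MulAut.conj_apply]
    calc h * F2 ^ n * h⁻¹ = g * F1 ^ (-s) * k * (F2 ^ (-t) * F2 ^ n * (F2 ^ (-t))⁻¹) *
          (g * F1 ^ (-s) * k)⁻¹ := by rw [hh']; simp only [mul_inv_rev, mul_assoc]
      _ = _ := by rw [this]; simp only [mul_inv_rev, mul_assoc]
  have hv' : chainProd 4000 (F1 ^ m) (k * F2 ^ n * k⁻¹) = 1 := by
    rw [hx, hy] at hv
    have := chainProd_map (MulAut.conj (g * F1 ^ (-s))).toMonoidHom 4000 (F1 ^ m) (k * F2 ^ n * k⁻¹)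
    have h2 := this.trans hv
    exact (MulEquiv.map_eq_one_iff (MulAut.conj (g * F1 ^ (-s)))).1 h2
  obtain ⟨M, hM, hM2⟩ := exists_bal p₁ hp₁.pos m
  choose Nf hNf hNf2 using fun i : ℕ => exists_bal p₂ hp₂.pos (n * ((4000 + i + 1 : ℕ) : ℤ) ^ 2)
  have hM0 : M ≠ 0 := by
    rintro rfl; exact hm (by simpa using hM)
  have hp₂' : Prime (p₂ : ℤ) := Nat.prime_iff_prime_int.1 hp₂
  have hN0 : ∀ i : Fin 1000, Nf i ≠ 0 := by
    intro i e
    have h1 := hNf i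
    rw [e, sub_zero] at h1
    rcases hp₂'.dvd_or_dvd h1 with h | h
    · exact hn h
    · have := Int.le_of_dvd (by omega) (hp₂'.dvd_of_dvd_pow h)
      omega
  obtain ⟨L, hLm⟩ := exists_lift ((List.range 1000).map Nf) (by
    intro N hN
    obtain ⟨a, ha, rfl⟩ := List.mem_map.1 hN
    exact hN0 ⟨a, List.mem_range.1 ha⟩)
  have hL0 : ∀ N ∈ L.map (·.1), N ≠ 0 := by
    intro N hN
    obtain ⟨a, -, rfl⟩ := List.mem_map.1 hN
    exact a.2
  have hL2' : ∀ N ∈ L.map (·.1), 2 * N.natAbs ≤ p₂ := by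
    intro N hN
    rw [hLm] at hN
    obtain ⟨a, -, rfl⟩ := List.mem_map.1 hN
    exact hNf2 a
  have hL2 : ∀ N ∈ L, 2 * N.1.natAbs ≤ p₂ := fun N hN => hL2' _ (List.mem_map_of_mem hN)
  have hW1 : φ (FreeGroup.mk (bigW M H (L.map (·.1)))) = 1 := by
    rw [mk_bigW, ← hv', hLm, List.map_map]
    unfold chainProd
    refine congrArg List.prod (List.map_congr_left ?_)
    intro i _
    rw [φ1, φ2, conj_pow, ← zpow_natCast, ← zpow_mul, Function.comp, zpow_congr e1 hM,
      ← zpow_congr e2 (hNf i), Nat.cast_pow]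
  have hWr := bigW_red hM0 hred hh ht _ hL0
  have hW0 : bigW M H (L.map (·.1)) ≠ [] := by
    rw [hLm]
    clear hLm
    generalize hr : (List.range 1000).map Nf = r
    rcases r with _ | ⟨a, r⟩
    · have := congrArg List.length hr
      rw [List.length_map, List.length_range] at this
      cases this
    intro e
    simp only [bigW, List.flatMap_cons, List.append_eq_nil_iff] at e
    exact fp_ne hM0 e.1.1.1.1
  obtain ⟨P, U, hP, hU, hPU, hi⟩ := exists_rel hb₁ hb₂ hWr hW0 hW1
  by_cases hne : H = []
  · subst hne
    obtain ⟨q, q1, q2, L1, N, N', L2, hL, hc⟩ := case_nil hb₁ hb₂ hP hU hPU hM0 hM2 hL2 hi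
    have hk1 : k = 1 := by rw [hk, ← FreeGroup.one_eq_mk, map_one]
    obtain ⟨hlen, hNi, hNi'⟩ := list_idx hLm hL
    have d1 := hNf L1.length
    have d2 := hNf (L1.length + 1)
    rw [← hNi] at d1
    rw [← hNi', show ((4000 + (L1.length + 1) + 1 : ℕ) : ℤ) = ((4000 + L1.length + 1 : ℕ) : ℤ) + 1 by
      push_cast; ring] at d2
    rcases hc with ⟨c1, c2, c3⟩ | ⟨c1, c2, c3⟩
    · rw [c2] at d1
      rw [c3] at d2
      have hn1 := num_pos hp₂ hb₂ q1 q2 (by omega) (by omega) d1 d2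
      rw [c1] at hM
      refine ⟨g * F1 ^ (-s), ?_, ?_⟩
      · rw [hx, MulAut.conj_apply, zpow_congr e1 hM, zpow_one]
      · rw [hy, MulAut.conj_apply, zpow_congr e2 hn1, zpow_one, hk1]
        simp
    · rw [c2] at d1
      rw [c3] at d2
      exact (num_neg hp₂ hb₂ q1 q2 (by omega) (by omega) d1 d2).elim
  · obtain ⟨U', ⟨A, B, hAB⟩, hU', hlt⟩ := case_ne hb₁ hb₂ hP hU hPU hM0 hL0 hM2 hL2' hh ht hne hi
    obtain ⟨V, hV, hVe⟩ := hU'.shorten φ (mk_rel_eq_one hP) hlt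
    refine (hmin (A ++ V ++ B) ?_ ?_).elim
    · rw [← hAB]; simp; omega
    · rw [hk, ← hAB, ← FreeGroup.mul_mk, ← FreeGroup.mul_mk, ← FreeGroup.mul_mk,
        ← FreeGroup.mul_mk, map_mul, map_mul, map_mul, map_mul, hVe]
end

/-- Lemma `lem:vv`: in `G(𝒜)`, if `x = g f₁^m g⁻¹` and `y = h f₂^n h⁻¹`
with `p₁ ∤ m`, `p₂ ∤ n`, and `v(x,y) = v(y,x) = e`, then `x` and `y` are conjugates of `f₁`
and `f₂` by the same element. -/
theorem stmt_6 (S : IndexedStructure) (p₁ p₂ : ℕ)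
    (hp₁ : p₁.Prime) (hp₂ : p₂.Prime) (hne : p₁ ≠ p₂)
    (hbig₁ : 10 ^ 10 < p₁) (hbig₂ : 10 ^ 10 < p₂)
    (x y g h : GA S p₁ p₂) (m n : ℤ)
    (hm : ¬ (p₁ : ℤ) ∣ m) (hn : ¬ (p₂ : ℤ) ∣ n)
    (hx : x = g * gen S p₁ p₂ GenSym.f1 ^ m * g⁻¹)
    (hy : y = h * gen S p₁ p₂ GenSym.f2 ^ n * h⁻¹)
    (hv₁ : chainProd 4000 x y = 1) (hv₂ : chainProd 4000 y x = 1) :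
    ∃ z : GA S p₁ p₂,
      x = z * gen S p₁ p₂ GenSym.f1 * z⁻¹ ∧ y = z * gen S p₁ p₂ GenSym.f2 * z⁻¹ := by
  subst hx
  subst hy
  exact final_aux hp₁ hp₂ hbig₁ hbig₂ g h m n hm hn hv₁
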